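/- arXiv:1708.06411 — 3 statements merged into one kernel-verified Lean document; each statement's English description precedes it below -/
import Mathlib

section
/- In every forest G with an even number of vertices and diam*(G) > 1/4, there is a bisection (B,W) with e_G(B,W) ≤ 8·Δ(G), where Δ(G) is the maximum degree of G. -/
open scoped Classical

namespace MinBisection

noncomputable section

variable {V ι : Type*}

/-- The number of edges of `G` with one endpoint in `B` and the other outside of `B`,
i.e., the width `e_G(B, W)` of the cut `(B, W)` where `W` is the complement of `B`. -/
def cutWidth (G : SimpleGraph V) (B : Finset V) : ℕ :=
  Nat.card {e : Sym2 V // ∃ x y, G.Adj x y ∧ x ∈ B ∧ y ∉ B ∧ e = s(x, y)}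

/-- The number of edges of `G` whose endpoints lie in two different parts of the
partition `(B, W, Z)` of the vertex set. -/
def cutWidth3 (G : SimpleGraph V) (B W Z : Finset V) : ℕ :=
  Nat.card {e : Sym2 V // ∃ x y, G.Adj x y ∧ e = s(x, y) ∧
    ¬ ((x ∈ B ∧ y ∈ B) ∨ (x ∈ W ∧ y ∈ W) ∨ (x ∈ Z ∧ y ∈ Z))}

/-- `(B, Bᶜ)` is a bisection: the sizes of the two parts differ by at most one. -/
def IsBisection [Fintype V] (B : Finset V) : Prop :=
  B.card ≤ Bᶜ.card + 1 ∧ Bᶜ.card ≤ B.card + 1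

/-- The minimum bisection width `MinBis(G)`. -/
def minBis (G : SimpleGraph V) [Fintype V] : ℕ :=
  sInf {k | ∃ B : Finset V, IsBisection B ∧ cutWidth G B = k}

/-- The maximum degree `Δ(G)`. -/
def maxDeg (G : SimpleGraph V) [Fintype V] : ℕ :=
  Finset.univ.sup fun v => Nat.card {u // G.Adj v u}

/-- The number of vertices on a longest path in `G`. -/
def longestPathCard (G : SimpleGraph V) : ℕ :=
  sSup {k | ∃ (u v : V) (p : G.Walk u v), p.IsPath ∧ k = p.support.length}

/-- The relative diameter `diam*` of a connected graph: the number of vertices on a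
longest path divided by the number of vertices. -/
def diamStar (G : SimpleGraph V) [Fintype V] : ℝ :=
  (longestPathCard G : ℝ) / (Fintype.card V : ℝ)

/-- The number of vertices on a longest path contained in the connected component `c`. -/
def compLongestPathCard (G : SimpleGraph V) (c : G.ConnectedComponent) : ℕ :=
  sSup {k | ∃ (u v : V) (p : G.Walk u v), p.IsPath ∧ G.connectedComponentMk u = c ∧
    k = p.support.length}

/-- The relative diameter `diam*` of a forest: the sum over all connected components of the
number of vertices on a longest path in the component, divided by the number of vertices. -/
def forestDiamStar (G : SimpleGraph V) [Fintype V] : ℝ :=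
  letI : Fintype G.ConnectedComponent := Fintype.ofFinite _
  (∑ c : G.ConnectedComponent, (compLongestPathCard G c : ℝ)) / (Fintype.card V : ℝ)

/-- `(T, X)` is a tree decomposition of `G`. -/
structure IsTreeDecomp (G : SimpleGraph V) (T : SimpleGraph ι) (X : ι → Finset V) : Prop where
  isTree : T.IsTree
  mem_cluster : ∀ v : V, ∃ i, v ∈ X i
  edge_cluster : ∀ ⦃u v : V⦄, G.Adj u v → ∃ i, u ∈ X i ∧ v ∈ X i
  inter_subset : ∀ ⦃i j : ι⦄ (p : T.Walk i j), p.IsPath → ∀ h ∈ p.support, X i ∩ X j ⊆ X h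

/-- The weight `w(P, X)` of a path `p` of the tree `T` with respect to the clusters `X`:
the cardinality of the union of the clusters along the path. -/
def walkWeight (X : ι → Finset V) {T : SimpleGraph ι} {i j : ι} (p : T.Walk i j) : ℕ :=
  (p.support.toFinset.biUnion X).card

/-- The relative weight `r(T, X)` of a heaviest path in the tree decomposition `(T, X)`. -/
def rTD [Fintype V] (T : SimpleGraph ι) (X : ι → Finset V) : ℝ :=
  (↑(sSup {w : ℕ | ∃ (i j : ι) (p : T.Walk i j), p.IsPath ∧ w = walkWeight X p}) : ℝ) /
    (Fintype.card V : ℝ)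

/-- The path `p` is nonredundant: one of its two ends `i` is a nonredundant end, i.e.,
`X i ≠ ∅` and no cluster along the path contains the previous one when traversed from `i`. -/
def NonredundantPath (X : ι → Finset V) {T : SimpleGraph ι} {i j : ι} (p : T.Walk i j) : Prop :=
  (X i ≠ ∅ ∧ List.Chain' (fun a b => ¬ X b ⊆ X a) p.support) ∨
  (X j ≠ ∅ ∧ List.Chain' (fun a b => ¬ X b ⊆ X a) p.reverse.support)

/-- `R_i`: the set of vertices whose path node (first node along `p`, traversed from the
end `i₀`, whose cluster contains the vertex) is `i`. -/
def Rset (X : ι → Finset V) {T : SimpleGraph ι} {i₀ j₀ : ι} (p : T.Walk i₀ j₀) (i : ι) :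
    Set V :=
  {x | ∃ (k : ℕ) (hk : k < p.support.length), p.support.get ⟨k, hk⟩ = i ∧ x ∈ X i ∧
    ∀ (l : ℕ) (hl : l < k), x ∉ X (p.support.get ⟨l, hl.trans hk⟩)}

/-- `S_i`: the union of the clusters over the component `T_i` of `T - E(P)` containing `i`,
minus `R = ⋃_{h ∈ V(P)} X^h`. -/
def Sset (X : ι → Finset V) {T : SimpleGraph ι} {i₀ j₀ : ι} (p : T.Walk i₀ j₀) (i : ι) :
    Set V :=
  {x | (∃ j, (∃ q : T.Walk i j, ∀ e ∈ q.edges, e ∉ p.edges) ∧ x ∈ X j) ∧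
    ∀ h ∈ p.support, x ∉ X h}

end

end MinBisection

/-!
Let `n = 2m` be the number of vertices. For a path of a forest, cutting one path edge after the
other produces an increasing chain of vertex sets, as many as the path has vertices, each of which
cuts at most one edge. Concatenating these chains over longest paths of all components gives a
chain `𝒟` of more than `n / 4` nonempty sets, each cutting at most one edge (`exists_chain`).
Differences of members of the chain are cheap to cut as well, so the chain may be read cyclically:
for a member `D₀`, the sets `D \ D₀` for `D ⊇ D₀` and `D₀ᶜ ∪ D` for `D ⊆ D₀` again form a chain
(`exists_rotated_chain`). Let `κ` be the set of residues modulo `n` of the sizes of the members.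

If `κ` contains two residues at distance `m`, the corresponding difference is a bisection of width
at most `2`. Otherwise the images of `κ` modulo `m` are distinct, so they occupy more than half of
all residues modulo `m`. A cycle lemma gives a starting point `x` such that more than half of every
window `x, x + 1, …, x + e - 1` is occupied modulo `m`; by symmetry `x ∈ κ`. Choosing `e > 0`
minimal with `x + m + e ∈ κ`, everything occupied in the window lies in `κ` itself
(`exists_rotation`).

After rotating the chain to start at `x`, it has a member `Uh` of size `m + e`, and more than half
of the numbers `0, …, e - 1` are sizes of members; let `Uy` be the largest of these, of size `y`.
Removing a suitable set `A ⊆ Uh \ Uy` of size between `e / 2` and `e` costs only the edges at one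
vertex, because `G` is a forest (`exists_split`), and leaves an excess of `e - |A| ≤ y` vertices
over `m`. By the pigeonhole principle, a set made of differences of members inside `Uy` has size
`e - |A|` or `e - |A| - 1` (`exists_pair_sub`). Removing it, and if necessary one more vertex, gives
a bisection. Altogether the width is at most `2Δ + 5`, hence at most `8Δ` once there is an edge.
-/

namespace MinBisection

/-! ### Periodic sets of integers -/

/-- A cycle lemma: if an `m`-periodic set contains more than half of the integers of a period, then
from some starting point `x` it contains more than half of every window. The point `x` is the last
minimum within a period of the function `F t = 2 · |μ ∩ [0, t)| - t`, which increases by a positive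
amount over each period. -/
theorem exists_forall_lt_count (μ : ℕ → Prop) (m : ℕ) (hm : 0 < m)
    (hper : ∀ t, μ (t + m) ↔ μ t) (hc : m < 2 * Nat.count μ m) :
    ∃ x, ∀ e, 0 < e → e < 2 * Nat.count (fun t => μ (x + t)) e := by
  set F : ℕ → ℤ := fun t => 2 * (Nat.count μ t : ℤ) - t with hF
  have hcper : ∀ t, Nat.count μ (t + m) = Nat.count μ m + Nat.count μ t := by
    intro t
    rw [add_comm t m, Nat.count_add]
    congr 2
    ext s
    rw [add_comm m s, hper]
  have hFper : ∀ t, F t < F (t + m) := by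
    intro t
    simp only [hF, hcper]
    push_cast
    omega
  obtain ⟨x₀, hx₀, hmin⟩ := Finset.exists_min_image (Finset.range m) F ⟨0, by simpa using hm⟩
  obtain ⟨x, hx, hmax⟩ := Finset.exists_max_image
    ((Finset.range m).filter (fun t => F t = F x₀)) id ⟨x₀, by simpa using hx₀⟩
  simp only [Finset.mem_filter, Finset.mem_range, id] at hx hmax hx₀ hmin
  have hall : ∀ t, F x₀ ≤ F t := by
    intro t
    induction t using Nat.strong_induction_on with
    | _ t ih =>
      by_cases h : t < m
      · exact hmin t h
      · obtain ⟨s, rfl⟩ := Nat.exists_eq_add_of_le' (not_lt.mp h)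
        exact (ih s (by omega)).trans (hFper s).le
  have hlt : ∀ t, x < t → F x < F t := by
    intro t ht
    rw [hx.2]
    by_cases h : t < m
    · refine lt_of_le_of_ne (hall t) fun h' => ?_
      have := hmax t ⟨h, h'.symm⟩
      omega
    · obtain ⟨s, rfl⟩ := Nat.exists_eq_add_of_le' (not_lt.mp h)
      exact (hall s).trans_lt (hFper s)
  refine ⟨x, fun e he => ?_⟩
  have := hlt (x + e) (by omega)
  simp only [hF, Nat.count_add] at this
  push_cast at this
  omega

/-- For a `2m`-periodic set `κ` without two elements at distance `m`, containing more than `m / 2`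
elements per period, there are `x ∈ κ` and `e` such that `x + m + e ∈ κ` and more than half of the
integers in `[x, x + e)` belong to `κ`. -/
theorem exists_rotation (κ : ℕ → Prop) (m : ℕ) (hm : 0 < m)
    (hper : ∀ t, κ (t + 2 * m) ↔ κ t) (hex : ∀ t, κ t → ¬ κ (t + m))
    (hc : m < 2 * Nat.count κ (2 * m)) :
    ∃ x e, κ x ∧ 0 < e ∧ e ≤ m ∧ κ (x + (m + e)) ∧
      e < 2 * Nat.count (fun t => κ (x + t)) e := by
  have hmul : ∀ t, κ (t + m + m) ↔ κ t := fun t => by rw [← hper t]; congr! 1; omega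
  obtain ⟨μ, hμ⟩ : ∃ μ : ℕ → Prop, ∀ t, μ t ↔ κ t ∨ κ (t + m) := ⟨_, fun _ => Iff.rfl⟩
  have hcount : Nat.count μ m = Nat.count κ (2 * m) := by
    rw [two_mul, Nat.count_add]
    have : ∀ k, Nat.count μ k = Nat.count κ k + Nat.count (fun t => κ (m + t)) k := by
      intro k
      induction k with
      | zero => simp
      | succ k ih =>
        rw [Nat.count_succ, Nat.count_succ, Nat.count_succ, ih]
        have h1 := hex k
        have h2 : μ k ↔ κ k ∨ κ (m + k) := by rw [add_comm m k, hμ]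
        rw [add_comm k m] at h1
        by_cases h3 : κ k <;> by_cases h4 : κ (m + k) <;> simp [h2, h3, h4] <;>
          first | omega | exact absurd h4 (h1 h3)
    rw [this]
  have hμper : ∀ t, μ (t + m) ↔ μ t := by
    intro t
    simp only [hμ, hmul]
    exact or_comm
  obtain ⟨x₀, hx₀⟩ := exists_forall_lt_count μ m hm hμper (by rwa [hcount])
  -- Replacing `x₀` by `x₀ + m` if necessary, the point itself lies in `κ`.
  obtain ⟨x, hx, hκx⟩ : ∃ x, (∀ e, 0 < e → e < 2 * Nat.count (fun t => μ (x + t)) e) ∧ κ x := by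
    have h1 : μ x₀ := by
      have := hx₀ 1 one_pos
      by_contra h
      simp [Nat.count_succ, h] at this
    rcases (hμ _).1 h1 with h | h
    · exact ⟨x₀, hx₀, h⟩
    · refine ⟨x₀ + m, ?_, h⟩
      have : ∀ t, μ (x₀ + m + t) ↔ μ (x₀ + t) := fun t => by
        rw [← hμper (x₀ + t)]; congr! 1; omega
      simpa only [this] using hx₀
  have hexe : ∃ e, κ (x + (m + e)) := ⟨m, by rw [← two_mul]; exact (hper x).2 hκx⟩
  have hnot0 : ¬ κ (x + (m + 0)) := by simpa using hex x hκx
  have hpos : 0 < Nat.find hexe := by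
    rw [Nat.pos_iff_ne_zero]
    intro h
    have := Nat.find_spec hexe
    rw [h] at this
    exact hnot0 this
  -- By minimality of `e`, only elements of `κ` itself are counted by `μ` on `[x, x + e)`.
  refine ⟨x, Nat.find hexe, hκx, hpos, Nat.find_min' hexe (by
    rw [← two_mul]; exact (hper x).2 hκx), Nat.find_spec hexe, ?_⟩
  refine (hx _ hpos).trans_le (Nat.mul_le_mul_left 2 ?_)
  rw [Nat.count_eq_card_filter_range, Nat.count_eq_card_filter_range]
  refine Finset.card_le_card fun t => ?_
  simp only [Finset.mem_filter, Finset.mem_range]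
  rw [hμ]
  rintro ⟨ht, h | h⟩
  · exact ⟨ht, h⟩
  · exact absurd (by convert h using 1; omega) (Nat.find_min hexe ht)

/-- If `P` contains more than half of `0, …, y`, then every residue `q` modulo `y + 1` is the
difference of two elements of `P`: otherwise `P` and its cyclic shift by `q` would be disjoint. -/
theorem exists_pair_sub (P : Finset ℕ) (y q : ℕ) (hP : ∀ k ∈ P, k ≤ y) (hq : q ≤ y)
    (hc : y + 1 < 2 * P.card) :
    ∃ k₁ ∈ P, ∃ k₂ ∈ P, k₁ = k₂ + q ∨ k₁ + (y + 1) = k₂ + q := by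
  have hinj : Set.InjOn (fun k => (k + q) % (y + 1)) (P : Set ℕ) := by
    intro a ha b hb hab
    have h1 : a ≡ b [MOD (y + 1)] := Nat.ModEq.add_right_cancel' q hab
    exact Nat.ModEq.eq_of_lt_of_lt h1 (by have := hP a ha; omega) (by have := hP b hb; omega)
  have hnd : ¬ Disjoint P (P.image fun k => (k + q) % (y + 1)) := by
    intro h
    have h1 := Finset.card_union_of_disjoint h
    rw [Finset.card_image_of_injOn hinj] at h1
    have h2 : P ∪ P.image (fun k => (k + q) % (y + 1)) ⊆ Finset.range (y + 1) := by
      intro k hk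
      rw [Finset.mem_union, Finset.mem_image] at hk
      rw [Finset.mem_range]
      rcases hk with hk | ⟨j, -, rfl⟩
      · have := hP k hk; omega
      · exact Nat.mod_lt _ (by omega)
    have h3 := Finset.card_le_card h2
    rw [Finset.card_range] at h3
    omega
  obtain ⟨k₁, h1, h2⟩ := Finset.not_disjoint_iff.1 hnd
  obtain ⟨k₂, h3, rfl⟩ := Finset.mem_image.1 h2
  refine ⟨_, h1, k₂, h3, ?_⟩
  have := hP k₂ h3
  by_cases h : k₂ + q < y + 1
  · left; exact Nat.mod_eq_of_lt h
  · right
    rw [Nat.mod_eq_sub_mod (by omega), Nat.mod_eq_of_lt (by omega)]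
    omega

/-! ### Edge cuts -/

/-- The set of edges of `G` crossing the cut `(B, Bᶜ)`. -/
def cutSet {V : Type*} (G : SimpleGraph V) (B : Finset V) : Set (Sym2 V) :=
  {e | ∃ x y, G.Adj x y ∧ x ∈ B ∧ y ∉ B ∧ e = s(x, y)}

theorem cutWidth_eq_ncard {V : Type*} (G : SimpleGraph V) (B : Finset V) :
    cutWidth G B = (cutSet G B).ncard := rfl

theorem cutSet_union_subset {V : Type*} (G : SimpleGraph V) (A B : Finset V) :
    cutSet G (A ∪ B) ⊆ cutSet G A ∪ cutSet G B := by
  rintro _ ⟨x, y, h, hx, hy, rfl⟩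
  simp only [Finset.mem_union, not_or] at hx hy
  rcases hx with hx | hx
  · exact Or.inl ⟨x, y, h, hx, hy.1, rfl⟩
  · exact Or.inr ⟨x, y, h, hx, hy.2, rfl⟩

theorem cutSet_sdiff_subset {V : Type*} (G : SimpleGraph V) (A B : Finset V) :
    cutSet G (A \ B) ⊆ cutSet G A ∪ cutSet G B := by
  rintro _ ⟨x, y, h, hx, hy, rfl⟩
  simp only [Finset.mem_sdiff, not_and, not_not] at hx hy
  by_cases hyA : y ∈ A
  · exact Or.inr ⟨y, x, h.symm, hy hyA, hx.2, Sym2.eq_swap⟩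
  · exact Or.inl ⟨x, y, h, hx.1, hyA, rfl⟩

theorem cutSet_compl_subset {V : Type*} [Fintype V] (G : SimpleGraph V) (A : Finset V) :
    cutSet G Aᶜ ⊆ cutSet G A := by
  rintro _ ⟨x, y, h, hx, hy, rfl⟩
  simp only [Finset.mem_compl, not_not] at hx hy
  exact ⟨y, x, h.symm, hy, hx, Sym2.eq_swap⟩

theorem cutSet_singleton_subset {V : Type*} (G : SimpleGraph V) (v : V) :
    cutSet G {v} ⊆ G.incidenceSet v := by
  rintro _ ⟨x, y, h, hx, hy, rfl⟩
  rw [Finset.mem_singleton] at hx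
  subst hx
  exact G.mk'_mem_incidenceSet_left_iff.2 h

theorem ncard_incidenceSet_le {V : Type*} [Fintype V] (G : SimpleGraph V) (v : V) :
    (G.incidenceSet v).ncard ≤ maxDeg G := by
  have h1 : (G.incidenceSet v).ncard = Nat.card {u // G.Adj v u} :=
    Nat.card_congr (G.incidenceSetEquivNeighborSet v)
  rw [h1]
  exact Finset.le_sup (f := fun v => Nat.card {u // G.Adj v u}) (Finset.mem_univ v)

/-! ### Approximate splitting of forests -/

/-- Two vertices of a connected set cannot have a common neighbour outside of it, since in a forest
every edge is a bridge. Connectedness of `K` is encoded by the absence of a nonempty proper subset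
without edges to the rest of `K`. -/
theorem eq_of_adj_of_connected {V : Type*} {G : SimpleGraph V} (hF : G.IsAcyclic) {K : Finset V}
    {w a b : V} (hw : w ∉ K) (ha : a ∈ K) (hb : b ∈ K) (hwa : G.Adj w a) (hwb : G.Adj w b)
    (hK : ∀ R ⊆ K, R.Nonempty → (∀ x ∈ R, ∀ y ∈ K, G.Adj x y → y ∈ R) → R = K) : a = b := by
  by_contra hne
  set H := G.deleteEdges {s(w, a)} with hH
  have hbr : ¬ H.Reachable w a :=
    SimpleGraph.isBridge_iff.1 (SimpleGraph.isAcyclic_iff_forall_adj_isBridge.1 hF hwa)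
  have hR : K.filter (fun u => H.Reachable u a) = K := by
    refine hK _ (Finset.filter_subset _ _) ⟨a, by simp [ha]⟩ fun x hx y hy hxy => ?_
    rw [Finset.mem_filter] at hx ⊢
    refine ⟨hy, SimpleGraph.Reachable.trans (SimpleGraph.Adj.reachable ?_) hx.2⟩
    rw [hH, SimpleGraph.deleteEdges_adj]
    refine ⟨hxy.symm, ?_⟩
    rw [Set.mem_singleton_iff, Sym2.eq_iff]
    rintro (⟨rfl, -⟩ | ⟨-, rfl⟩)
    · exact hw hy
    · exact hw hx.1
  have hb' : H.Reachable b a := by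
    rw [← hR] at hb
    exact (Finset.mem_filter.1 hb).2
  refine hbr (SimpleGraph.Reachable.trans (SimpleGraph.Adj.reachable ?_) hb')
  rw [hH, SimpleGraph.deleteEdges_adj]
  refine ⟨hwb, ?_⟩
  rw [Set.mem_singleton_iff, Sym2.eq_iff]
  rintro (⟨-, h⟩ | ⟨-, h⟩)
  · exact hne h.symm
  · exact hw (h ▸ hb)

/-- The inductive step of `exists_split`: `C` plays the role of a subtree of `S` with root `w`.
Either a union of components of `C - w` has a suitable size, or some component has more than `M`
vertices and takes the place of `C`. -/
theorem exists_split_aux {V : Type*} {G : SimpleGraph V} (hF : G.IsAcyclic) (S : Finset V) (M : ℕ)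
    (N : ℕ) : ∀ C ⊆ S, C.card = N → M ≤ C.card → ∀ w ∈ C,
      (∀ x ∈ C, ∀ y ∈ S \ C, G.Adj x y → x = w) →
      ∃ v, ∃ A ⊆ S, M ≤ 2 * A.card ∧ A.card ≤ M ∧
        ∀ x ∈ A, ∀ y ∈ S \ A, G.Adj x y → x = v ∨ y = v := by
  induction N using Nat.strong_induction_on with
  | _ N ih =>
    intro C hCS hCN hMC w hw hCw
    rcases hMC.eq_or_lt with hMC | hMC
    · exact ⟨w, C, hCS, by omega, by omega, fun x hx y hy h => Or.inl (hCw x hx y hy h)⟩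
    -- A good set is a union of components of `C - w`.
    obtain ⟨good, hgood⟩ : ∃ good : Finset V → Prop, ∀ A, good A ↔ A ⊆ C.erase w ∧
        ∀ x ∈ A, ∀ y ∈ S \ A, G.Adj x y → y = w := ⟨_, fun _ => Iff.rfl⟩
    have hdone : ∀ A, good A → M ≤ 2 * A.card → A.card ≤ M → ∃ v, ∃ A ⊆ S,
        M ≤ 2 * A.card ∧ A.card ≤ M ∧ ∀ x ∈ A, ∀ y ∈ S \ A, G.Adj x y → x = v ∨ y = v := by
      intro A hA h1 h2
      rw [hgood] at hA
      exact ⟨w, A, (hA.1.trans (Finset.erase_subset _ _)).trans hCS, h1, h2,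
        fun x hx y hy h => Or.inr (hA.2 x hx y hy h)⟩
    have hcard : (C.erase w).card = C.card - 1 := Finset.card_erase_of_mem hw
    -- If the largest good set `A` with at most `M` vertices is too small, then every component
    -- `K` of the remainder satisfies `|A| + |K| > M`.
    obtain ⟨A, hA, hAmax⟩ := Finset.exists_max_image
      ((C.erase w).powerset.filter fun A => good A ∧ A.card ≤ M) Finset.card
      ⟨∅, by simp [hgood]⟩
    simp only [Finset.mem_filter, Finset.mem_powerset] at hA hAmax
    obtain ⟨hAC, hAg, hAM⟩ := hA
    by_cases hbig : M ≤ 2 * A.card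
    · exact hdone A hAg hbig hAM
    have hAg' := (hgood A).1 hAg
    have hRg : good (C.erase w \ A) := by
      rw [hgood]
      refine ⟨Finset.sdiff_subset, fun x hx y hy h => ?_⟩
      simp only [Finset.mem_sdiff, Finset.mem_erase, not_and, not_not] at hx hy
      by_contra hyw
      by_cases hyC : y ∈ C
      · exact hx.1.1 (hAg'.2 y (hy.2 ⟨hyw, hyC⟩) x
          (Finset.mem_sdiff.2 ⟨hCS hx.1.2, hx.2⟩) h.symm)
      · exact hx.1.1 (hCw x hx.1.2 y (Finset.mem_sdiff.2 ⟨hy.1, hyC⟩) h)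
    have hRne : (C.erase w \ A).Nonempty := by
      rw [← Finset.card_pos, Finset.card_sdiff_of_subset hAC]
      omega
    obtain ⟨K, hK, hKmin⟩ := Finset.exists_min_image
      ((C.erase w \ A).powerset.filter fun K => good K ∧ K.Nonempty) Finset.card
      ⟨C.erase w \ A, by simpa using ⟨hRg, hRne⟩⟩
    simp only [Finset.mem_filter, Finset.mem_powerset] at hK hKmin
    obtain ⟨hKR, hKg, hKne⟩ := hK
    have hKg' := (hgood K).1 hKg
    have hdisj : Disjoint A K := Finset.disjoint_left.2 fun x hx hxK =>
      (Finset.mem_sdiff.1 (hKR hxK)).2 hx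
    have hAK : good (A ∪ K) := by
      rw [hgood]
      refine ⟨Finset.union_subset hAC hKg'.1, fun x hx y hy h => ?_⟩
      simp only [Finset.mem_sdiff, Finset.mem_union, not_or] at hx hy
      rcases hx with hx | hx
      · exact hAg'.2 x hx y (Finset.mem_sdiff.2 ⟨hy.1, hy.2.1⟩) h
      · exact hKg'.2 x hx y (Finset.mem_sdiff.2 ⟨hy.1, hy.2.2⟩) h
    have hAKcard : M < A.card + K.card := by
      rw [← Finset.card_union_of_disjoint hdisj]
      by_contra hle
      have := hAmax (A ∪ K) ⟨Finset.union_subset hAC hKg'.1, hAK, not_lt.1 hle⟩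
      rw [Finset.card_union_of_disjoint hdisj] at this
      have := hKne.card_pos
      omega
    by_cases hKM : K.card ≤ M
    · exact hdone K hKg (by omega) hKM
    have hKC : K ⊆ C := hKg'.1.trans (Finset.erase_subset _ _)
    have hKlt : K.card < N := by
      have := Finset.card_le_card hKg'.1
      have := Finset.card_pos.2 ⟨w, hw⟩
      omega
    have hwK : w ∉ K := fun h => by simpa using hKg'.1 h
    have hconn : ∀ R ⊆ K, R.Nonempty → (∀ x ∈ R, ∀ y ∈ K, G.Adj x y → y ∈ R) → R = K := by
      intro R hRK hRne hR
      refine Finset.eq_of_subset_of_card_le hRK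
        (hKmin R ⟨hRK.trans hKR, (hgood R).2 ⟨hRK.trans hKg'.1, fun x hx y hy h => ?_⟩, hRne⟩)
      rw [Finset.mem_sdiff] at hy
      refine hKg'.2 x (hRK hx) y (Finset.mem_sdiff.2 ⟨hy.1, fun hyK => hy.2 (hR x hx y hyK h)⟩) h
    by_cases hex : ∃ a ∈ K, G.Adj w a
    · obtain ⟨a, ha, hwa⟩ := hex
      refine ih K.card hKlt K (hKC.trans hCS) rfl (by omega) a ha fun x hx y hy h => ?_
      have hyw := hKg'.2 x hx y hy h
      rw [hyw] at h
      exact eq_of_adj_of_connected hF hwK hx ha h.symm hwa hconn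
    · obtain ⟨a, ha⟩ := hKne
      refine ih K.card hKlt K (hKC.trans hCS) rfl (by omega) a ha fun x hx y hy h => ?_
      have hyw := hKg'.2 x hx y hy h
      rw [hyw] at h
      exact absurd ⟨x, hx, h.symm⟩ hex

/-- In a forest, any target size `M ≤ |S|` is met up to a factor of two by a subset `A` of `S` all
of whose edges to the rest of `S` share one vertex `v`. -/
theorem exists_split {V : Type*} {G : SimpleGraph V} (hF : G.IsAcyclic) (S : Finset V) (M : ℕ)
    (hM : 0 < M) (hMS : M ≤ S.card) :
    ∃ v, ∃ A ⊆ S, M ≤ 2 * A.card ∧ A.card ≤ M ∧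
      ∀ x ∈ A, ∀ y ∈ S \ A, G.Adj x y → x = v ∨ y = v := by
  obtain ⟨w, hw⟩ := Finset.card_pos.1 (hM.trans_le hMS)
  exact exists_split_aux hF S M S.card S subset_rfl rfl hMS w hw
    fun x hx y hy => by simp at hy

theorem exists_split_cutSet {V : Type*} {G : SimpleGraph V} (hF : G.IsAcyclic) (S : Finset V)
    (M : ℕ) (hM : 0 < M) (hMS : M ≤ S.card) :
    ∃ v, ∃ A ⊆ S, M ≤ 2 * A.card ∧ A.card ≤ M ∧
      cutSet G A ⊆ G.incidenceSet v ∪ cutSet G S := by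
  obtain ⟨v, A, hAS, h1, h2, h3⟩ := exists_split hF S M hM hMS
  refine ⟨v, A, hAS, h1, h2, ?_⟩
  rintro _ ⟨x, y, h, hx, hy, rfl⟩
  by_cases hyS : y ∈ S
  · left
    rw [SimpleGraph.mk'_mem_incidenceSet_iff]
    refine ⟨h, ?_⟩
    rcases h3 x hx y (Finset.mem_sdiff.2 ⟨hyS, hy⟩) h with h | h
    · exact Or.inl h.symm
    · exact Or.inr h.symm
  · exact Or.inr ⟨x, y, h, hAS hx, hyS, rfl⟩

/-! ### Chains of sets with small cuts -/

/-- Deleting the edges of a path of a forest separates all of its vertices. -/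
theorem not_reachable_getVert {V : Type*} {G : SimpleGraph V} (hF : G.IsAcyclic) {a b : V}
    (p : G.Walk a b) (hp : p.IsPath) {i j : ℕ} (hij : i < j) (hj : j ≤ p.length) :
    ¬ (G.deleteEdges {e | e ∈ p.edges}).Reachable (p.getVert i) (p.getVert j) := by
  intro hreach
  have hadj := p.adj_getVert_succ (show i < p.length by omega)
  have hbr := SimpleGraph.isBridge_iff.1 (SimpleGraph.isAcyclic_iff_forall_adj_isBridge.1 hF hadj)
  set H := G.deleteEdges {s(p.getVert i, p.getVert (i + 1))} with hH
  have hle : G.deleteEdges {e | e ∈ p.edges} ≤ H := by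
    refine SimpleGraph.deleteEdges_anti ?_
    rw [Set.singleton_subset_iff]
    exact (p.mk_mem_edges_iff_exists).2 ⟨i, by omega, rfl⟩
  -- The rest of the path leads back from its `j`-th to its `(i + 1)`-st vertex.
  have hback : ∀ k, i + 1 + k ≤ p.length →
      H.Reachable (p.getVert (i + 1 + k)) (p.getVert (i + 1)) := by
    intro k
    induction k with
    | zero => intro _; exact SimpleGraph.Reachable.refl _
    | succ k ih =>
      intro hk
      refine SimpleGraph.Reachable.trans (SimpleGraph.Adj.reachable ?_) (ih (by omega))
      rw [hH, SimpleGraph.deleteEdges_adj]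
      refine ⟨(p.adj_getVert_succ (show i + 1 + k < p.length by omega)).symm, ?_⟩
      have hinj := hp.getVert_injOn
      have inj : ∀ s t, s ≤ p.length → t ≤ p.length → p.getVert s = p.getVert t → s = t :=
        fun s t hs ht h => hinj hs ht h
      rw [Set.mem_singleton_iff, Sym2.eq_iff]
      rintro (⟨h1, h2⟩ | ⟨h1, h2⟩)
      · have := inj _ _ (by omega) (by omega) h1
        omega
      · have := inj _ _ (by omega) (by omega) h2
        omega
  obtain ⟨k, rfl⟩ := Nat.exists_eq_add_of_le (show i + 1 ≤ j by omega)
  exact hbr ((hreach.mono hle).trans (hback k hj))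

/-- Following a walk towards a vertex of the path `p` up to its first edge in `p` shows that every
vertex of the component is attached to some vertex of `p`. -/
theorem exists_reachable_getVert {V : Type*} {G : SimpleGraph V} {a b : V} (p : G.Walk a b)
    {u w : V} (q : G.Walk u w) (hw : w ∈ p.support) :
    ∃ i ≤ p.length, (G.deleteEdges {e | e ∈ p.edges}).Reachable u (p.getVert i) := by
  induction q with
  | nil =>
    obtain ⟨i, hi, hil⟩ := SimpleGraph.Walk.mem_support_iff_exists_getVert.1 hw
    exact ⟨i, hil, by rw [hi]⟩
  | @cons u v w h q ih =>
    by_cases he : s(u, v) ∈ p.edges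
    · obtain ⟨i, hi, hil⟩ := SimpleGraph.Walk.mem_support_iff_exists_getVert.1
        (p.fst_mem_support_of_mem_edges he)
      exact ⟨i, hil, by rw [hi]⟩
    · obtain ⟨i, hil, hi⟩ := ih hw
      refine ⟨i, hil, SimpleGraph.Reachable.trans (SimpleGraph.Adj.reachable ?_) hi⟩
      rw [SimpleGraph.deleteEdges_adj]
      exact ⟨h, he⟩

/-- A path of a forest yields a chain of vertex sets exhausting its component, one for each vertex
of the path, each cutting at most one edge: the `j`-th set consists of the first `j + 1` vertices of
the path together with everything attached to them off the path. -/
theorem exists_chain_of_path {V : Type*} [Fintype V] {G : SimpleGraph V} (hF : G.IsAcyclic)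
    {a b : V} (p : G.Walk a b) (hp : p.IsPath) (U : Finset V)
    (hU : ∀ u, u ∈ U ↔ G.Reachable u a) :
    ∃ 𝒟 : Finset (Finset V), 𝒟.card = p.support.length ∧ U ∈ 𝒟 ∧
      (∀ D ∈ 𝒟, D.Nonempty ∧ D ⊆ U ∧ (cutSet G D).ncard ≤ 1) ∧
      (∀ D ∈ 𝒟, ∀ D' ∈ 𝒟, D ⊆ D' ∨ D' ⊆ D) := by
  set H := G.deleteEdges {e | e ∈ p.edges} with hH
  obtain ⟨D, hD⟩ : ∃ D : ℕ → Finset V, ∀ j u,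
      u ∈ D j ↔ ∃ i ≤ j, H.Reachable u (p.getVert i) :=
    ⟨fun j => Finset.univ.filter fun u => ∃ i ≤ j, H.Reachable u (p.getVert i), by simp⟩
  have hmono : ∀ i j, i ≤ j → D i ⊆ D j := by
    intro i j hij u hu
    rw [hD] at hu ⊢
    obtain ⟨k, hk, h⟩ := hu
    exact ⟨k, hk.trans hij, h⟩
  have hmem : ∀ k j, k ≤ p.length → (p.getVert k ∈ D j ↔ k ≤ j) := by
    intro k j hk
    rw [hD]
    refine ⟨?_, fun h => ⟨k, h, SimpleGraph.Reachable.refl _⟩⟩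
    rintro ⟨i, hij, hi⟩
    by_contra hkj
    exact not_reachable_getVert hF p hp (show i < k by omega) hk hi.symm
  have hinj : Set.InjOn D (Finset.range (p.length + 1) : Set ℕ) := by
    intro i hi j hj hij
    simp only [Finset.coe_range, Set.mem_Iio] at hi hj
    have h1 := (hmem i j (by omega)).1 (hij ▸ (hmem i i (by omega)).2 le_rfl)
    have h2 := (hmem j i (by omega)).1 (hij ▸ (hmem j j (by omega)).2 le_rfl)
    omega
  have hlast : D p.length = U := by
    ext u
    rw [hU, hD]
    constructor
    · rintro ⟨i, -, hi⟩
      exact (hi.mono (SimpleGraph.deleteEdges_le _)).trans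
        (p.take i).reachable.symm
    · rintro ⟨q⟩
      exact exists_reachable_getVert p q p.start_mem_support
  refine ⟨(Finset.range (p.length + 1)).image D, ?_, ?_, ?_, ?_⟩
  · rw [Finset.card_image_of_injOn hinj, Finset.card_range, SimpleGraph.Walk.length_support]
  · exact Finset.mem_image.2 ⟨p.length, by simp, hlast⟩
  · simp only [Finset.mem_image, Finset.mem_range]
    rintro _ ⟨j, hj, rfl⟩
    refine ⟨⟨p.getVert 0, (hmem 0 j (by omega)).2 (by omega)⟩,
      hlast ▸ hmono _ _ (by omega), ?_⟩
    refine (Set.ncard_le_ncard (t := {s(p.getVert j, p.getVert (j + 1))}) ?_).trans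
      (Set.ncard_singleton _).le
    rintro _ ⟨x, y, h, hx, hy, rfl⟩
    have he : s(x, y) ∈ p.edges := by
      by_contra he
      have hadj : H.Adj y x := by
        rw [hH, SimpleGraph.deleteEdges_adj, Sym2.eq_swap]
        exact ⟨h.symm, he⟩
      rw [hD] at hx hy
      obtain ⟨i, hij, hi⟩ := hx
      exact hy ⟨i, hij, hadj.reachable.trans hi⟩
    obtain ⟨i, hil, hi⟩ := p.mk_mem_edges_iff_exists.1 he
    rcases Sym2.eq_iff.1 hi with ⟨rfl, rfl⟩ | ⟨rfl, rfl⟩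
    · rw [hmem _ _ (by omega)] at hx hy
      obtain rfl : i = j := by omega
      exact rfl
    · rw [hmem _ _ (by omega)] at hx hy
      omega
  · simp only [Finset.mem_image]
    rintro _ ⟨i, -, rfl⟩ _ ⟨j, -, rfl⟩
    rcases le_total i j with h | h
    · exact Or.inl (hmono _ _ h)
    · exact Or.inr (hmono _ _ h)

/-- Concatenating the chains given by `exists_chain_of_path` over a set of components: each new
chain is placed on top of the union `T` of the components treated before. -/
theorem exists_chain {V : Type*} [Fintype V] {G : SimpleGraph V} (hF : G.IsAcyclic)
    [Fintype G.ConnectedComponent] (𝒞 : Finset G.ConnectedComponent) :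
    ∃ 𝒟 : Finset (Finset V), 𝒟.card = ∑ c ∈ 𝒞, compLongestPathCard G c ∧
      (𝒞.Nonempty → Finset.univ.filter (fun u => G.connectedComponentMk u ∈ 𝒞) ∈ 𝒟) ∧
      (∀ D ∈ 𝒟, D.Nonempty ∧ D ⊆ Finset.univ.filter (fun u => G.connectedComponentMk u ∈ 𝒞) ∧
        (cutSet G D).ncard ≤ 1) ∧
      (∀ D ∈ 𝒟, ∀ D' ∈ 𝒟, D ⊆ D' ∨ D' ⊆ D) := by
  induction 𝒞 using Finset.induction_on with
  | empty => exact ⟨∅, by simp⟩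
  | insert c 𝒞 hc ih =>
    obtain ⟨𝒟, hcard, -, hprop, hch⟩ := ih
    set T : Finset V := Finset.univ.filter (fun u => G.connectedComponentMk u ∈ 𝒞) with hT
    set U : Finset V := Finset.univ.filter (fun u => G.connectedComponentMk u = c) with hU
    have hTU : Finset.univ.filter (fun u => G.connectedComponentMk u ∈ insert c 𝒞) = T ∪ U := by
      ext u
      simp only [hT, hU, Finset.mem_insert, Finset.mem_union, Finset.mem_filter, Finset.mem_univ,
        true_and]
      exact or_comm
    have hdisj : Disjoint T U := by
      rw [Finset.disjoint_left]
      intro u h1 h2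
      simp only [hT, hU, Finset.mem_filter, Finset.mem_univ, true_and] at h1 h2
      exact hc (h2 ▸ h1)
    obtain ⟨a, b, p, hp, hac, hlen⟩ : ∃ (u v : V) (p : G.Walk u v), p.IsPath ∧
        G.connectedComponentMk u = c ∧ compLongestPathCard G c = p.support.length := by
      refine Nat.sSup_mem (s := {k | ∃ (u v : V) (p : G.Walk u v), p.IsPath ∧
        G.connectedComponentMk u = c ∧ k = p.support.length}) ?_ ?_
      · obtain ⟨u, rfl⟩ := c.exists_rep
        exact ⟨_, u, u, SimpleGraph.Walk.nil, SimpleGraph.Walk.IsPath.nil, rfl, rfl⟩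
      · refine ⟨Fintype.card V, ?_⟩
        rintro _ ⟨u, v, p, hp, -, rfl⟩
        exact hp.support_nodup.length_le_card
    obtain ⟨ℰ, hEcard, hUE, hEprop, hEch⟩ := exists_chain_of_path hF p hp U (by
      intro u
      simp only [hU, Finset.mem_filter, Finset.mem_univ, true_and, ← hac]
      exact SimpleGraph.ConnectedComponent.eq)
    have hTcut : ∀ x y, G.Adj x y → (x ∈ T ↔ y ∈ T) := by
      intro x y h
      simp only [hT, Finset.mem_filter, Finset.mem_univ, true_and]
      rw [SimpleGraph.ConnectedComponent.eq.2 h.reachable]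
    have hinj : Set.InjOn (fun D => T ∪ D) (ℰ : Set (Finset V)) := by
      intro D hD D' hD' h
      have h1 := (hEprop D hD).2.1
      have h2 := (hEprop D' hD').2.1
      ext u
      have h3 := Finset.ext_iff.1 h u
      simp only [Finset.mem_union] at h3
      have h4 : u ∈ U → u ∉ T := fun h5 h6 => Finset.disjoint_left.1 hdisj h6 h5
      have h5 := @h1 u
      have h6 := @h2 u
      tauto
    have hdisj' : Disjoint 𝒟 (ℰ.image fun D => T ∪ D) := by
      rw [Finset.disjoint_left]
      rintro D hD hD'
      obtain ⟨E, hE, rfl⟩ := Finset.mem_image.1 hD'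
      obtain ⟨u, hu⟩ := (hEprop E hE).1
      exact Finset.disjoint_left.1 hdisj ((hprop _ hD).2.1 (Finset.mem_union_right _ hu))
        ((hEprop E hE).2.1 hu)
    refine ⟨𝒟 ∪ ℰ.image (fun D => T ∪ D), ?_, ?_, ?_, ?_⟩
    · rw [Finset.card_union_of_disjoint hdisj', Finset.card_image_of_injOn hinj,
        Finset.sum_insert hc, hcard, hEcard, hlen, add_comm]
    · intro _
      rw [hTU]
      exact Finset.mem_union_right _ (Finset.mem_image_of_mem _ hUE)
    · intro D hD
      rw [hTU]
      rcases Finset.mem_union.1 hD with hD | hD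
      · have := hprop D hD
        exact ⟨this.1, this.2.1.trans Finset.subset_union_left, this.2.2⟩
      · obtain ⟨E, hE, rfl⟩ := Finset.mem_image.1 hD
        obtain ⟨h1, h2, h3⟩ := hEprop E hE
        refine ⟨h1.mono Finset.subset_union_right, Finset.union_subset_union_right h2,
          (Set.ncard_le_ncard ?_ (Set.toFinite _)).trans h3⟩
        rintro _ ⟨x, y, h, hx, hy, rfl⟩
        rw [Finset.mem_union] at hx hy
        rw [not_or] at hy
        exact ⟨x, y, h, hx.resolve_left fun hxT => hy.1 ((hTcut x y h).1 hxT), hy.2, rfl⟩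
    · intro D hD D' hD'
      rcases Finset.mem_union.1 hD with hD | hD <;> rcases Finset.mem_union.1 hD' with hD' | hD'
      · exact hch D hD D' hD'
      · obtain ⟨E, hE, rfl⟩ := Finset.mem_image.1 hD'
        exact Or.inl ((hprop D hD).2.1.trans Finset.subset_union_left)
      · obtain ⟨E, hE, rfl⟩ := Finset.mem_image.1 hD
        exact Or.inr ((hprop D' hD').2.1.trans Finset.subset_union_left)
      · obtain ⟨E, hE, rfl⟩ := Finset.mem_image.1 hD
        obtain ⟨E', hE', rfl⟩ := Finset.mem_image.1 hD'
        exact (hEch E hE E' hE').imp (Finset.union_subset_union_right)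
          (Finset.union_subset_union_right)

/-! ### Construction of the bisection -/

/-- Rotating a chain so that it starts at its member `D₀`: the members above `D₀` come first, with
`D₀` removed, followed by those below `D₀`, joined to the complement of `D₀`. -/
theorem exists_rotated_chain {V : Type*} [Fintype V] (G : SimpleGraph V)
    (𝒟 : Finset (Finset V)) (hne : ∀ D ∈ 𝒟, D.Nonempty)
    (hch : ∀ D ∈ 𝒟, ∀ D' ∈ 𝒟, D ⊆ D' ∨ D' ⊆ D) (D₀ : Finset V) (hD₀ : D₀ ∈ 𝒟) :
    ∃ 𝒰 : Set (Finset V),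
      (∀ U ∈ 𝒰, ∃ D ∈ 𝒟, cutSet G U ⊆ cutSet G D₀ ∪ cutSet G D) ∧
      (∀ U ∈ 𝒰, ∀ U' ∈ 𝒰, U.card ≤ U'.card → U ⊆ U') ∧
      (∀ D ∈ 𝒟, ∀ t ≤ Fintype.card V, D.card ≡ D₀.card + t [MOD Fintype.card V] →
        ∃ U ∈ 𝒰, U.card = t) := by
  refine ⟨{U | ∃ D ∈ 𝒟, (D₀ ⊆ D ∧ U = D \ D₀) ∨ (D ⊆ D₀ ∧ U = D₀ᶜ ∪ D)}, ?_, ?_, ?_⟩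
  · rintro _ ⟨D, hD, ⟨-, rfl⟩ | ⟨-, rfl⟩⟩
    · exact ⟨D, hD, (cutSet_sdiff_subset G D D₀).trans (Set.union_comm _ _).subset⟩
    · exact ⟨D, hD, (cutSet_union_subset G _ D).trans
        (Set.union_subset_union_left _ (cutSet_compl_subset G D₀))⟩
  · have hcmp : ∀ U U' : Finset V, U ⊆ U' ∨ U' ⊆ U → U.card ≤ U'.card → U ⊆ U' := by
      rintro U U' (h | h) hle
      · exact h
      · exact (Finset.eq_of_subset_of_card_le h hle).symm.subset
    have hcross : ∀ D D' : Finset V, D \ D₀ ⊆ D₀ᶜ ∪ D' := fun D D' u hu =>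
      Finset.mem_union_left _ (Finset.mem_compl.2 (Finset.mem_sdiff.1 hu).2)
    rintro _ ⟨D, hD, ⟨-, rfl⟩ | ⟨-, rfl⟩⟩ _ ⟨D', hD', ⟨-, rfl⟩ | ⟨-, rfl⟩⟩ <;> apply hcmp
    · exact (hch D hD D' hD').imp (fun h => Finset.sdiff_subset_sdiff h subset_rfl)
        (fun h => Finset.sdiff_subset_sdiff h subset_rfl)
    · exact Or.inl (hcross _ _)
    · exact Or.inr (hcross _ _)
    · exact (hch D hD D' hD').imp Finset.union_subset_union_right
        Finset.union_subset_union_right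
  · intro D hD t ht hmod
    have h1 := (hne D hD).card_pos
    have h2 := (hne D₀ hD₀).card_pos
    have h3 := D.card_le_univ
    have h4 := D₀.card_le_univ
    obtain ⟨z, hz⟩ := (Nat.modEq_iff_dvd.1 hmod)
    push_cast at hz
    -- Both cardinalities lie between `1` and `|V|`, so the congruence leaves only two options.
    have hz0 : 0 ≤ z := by
      by_contra h
      nlinarith
    have hz1 : z ≤ 1 := by
      by_contra h
      nlinarith
    obtain rfl | rfl : z = 0 ∨ z = 1 := by omega
    · have hle : D₀ ⊆ D := by
        rcases hch D hD D₀ hD₀ with h | h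
        · exact (Finset.eq_of_subset_of_card_le h (by omega)).symm.subset
        · exact h
      refine ⟨_, ⟨D, hD, Or.inl ⟨hle, rfl⟩⟩, ?_⟩
      rw [Finset.card_sdiff_of_subset hle]
      omega
    · have hle : D ⊆ D₀ := by
        rcases hch D hD D₀ hD₀ with h | h
        · exact h
        · exact (Finset.eq_of_subset_of_card_le h (by omega)).symm.subset
      refine ⟨_, ⟨D, hD, Or.inr ⟨hle, rfl⟩⟩, ?_⟩
      rw [Finset.card_union_of_disjoint
        (Finset.disjoint_left.2 fun u hu hu' => Finset.mem_compl.1 hu (hle hu')),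
        Finset.card_compl]
      omega

/-- The bisection, up to one surplus vertex, inside a chain with a member of size `m + e` such that
more than half of the numbers below `e` are sizes of members; `P` is a set of such sizes. -/
theorem exists_almost_bisection {V : Type*} [Fintype V] {G : SimpleGraph V} (hF : G.IsAcyclic)
    (𝒰 : Set (Finset V)) (hch : ∀ U ∈ 𝒰, ∀ U' ∈ 𝒰, U.card ≤ U'.card → U ⊆ U')
    (m e : ℕ) (he : 0 < e) (hem : e ≤ m) (hh : ∃ U ∈ 𝒰, U.card = m + e)
    (P : Finset ℕ) (hP : ∀ k ∈ P, k < e ∧ ∃ U ∈ 𝒰, U.card = k) (hc : e < 2 * P.card) :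
    ∃ B : Finset V, (B.card = m ∨ B.card = m + 1) ∧
      ∃ v, ∃ U₁ ∈ 𝒰, ∃ U₂ ∈ 𝒰, ∃ U₃ ∈ 𝒰, ∃ U₄ ∈ 𝒰, cutSet G B ⊆ G.incidenceSet v ∪
        (cutSet G U₁ ∪ cutSet G U₂ ∪ cutSet G U₃ ∪ cutSet G U₄) := by
  obtain ⟨Uh, hUh, hUhc⟩ := hh
  have hPne : P.Nonempty := Finset.card_pos.1 (by omega)
  set y := P.max' hPne with hy
  have hyP : y ∈ P := P.max'_mem hPne
  have hPy : ∀ k ∈ P, k ≤ y := fun k hk => P.le_max' k hk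
  obtain ⟨hye, Uy, hUy, hUyc⟩ := hP y hyP
  have hPcard : P.card ≤ y + 1 := by
    rw [← Finset.card_range (y + 1)]
    exact Finset.card_le_card fun k hk => Finset.mem_range.2 (Nat.lt_succ_of_le (hPy k hk))
  have hyh : Uy ⊆ Uh := hch _ hUy _ hUh (by omega)
  have hS : (Uh \ Uy).card = m + e - y := by
    rw [Finset.card_sdiff_of_subset hyh, hUhc, hUyc]
  obtain ⟨v, A, hAS, hA1, hA2, hAcut⟩ := exists_split_cutSet hF (Uh \ Uy) e he (by omega)
  -- `Uh \ A` exceeds the size `m` by `e - |A| ≤ y`, to be compensated by vertices of `Uy`.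
  obtain ⟨q, hq⟩ : ∃ q, e = A.card + q := Nat.exists_eq_add_of_le hA2
  obtain ⟨k₁, hk₁, k₂, hk₂, hk⟩ := exists_pair_sub P y q hPy (by omega) (by omega)
  obtain ⟨-, U₁, hU₁, hU₁c⟩ := hP k₁ hk₁
  obtain ⟨-, U₂, hU₂, hU₂c⟩ := hP k₂ hk₂
  have hk₁y := hPy k₁ hk₁
  have hk₂y := hPy k₂ hk₂
  have h1y : U₁ ⊆ Uy := hch _ hU₁ _ hUy (by omega)
  have h2y : U₂ ⊆ Uy := hch _ hU₂ _ hUy (by omega)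
  obtain ⟨J, hJy, hJc, hJcut⟩ : ∃ J ⊆ Uy, (J.card = q ∨ J.card + 1 = q) ∧
      cutSet G J ⊆ cutSet G Uy ∪ (cutSet G U₁ ∪ cutSet G U₂) := by
    rcases hk with hk | hk
    · have h21 : U₂ ⊆ U₁ := hch _ hU₂ _ hU₁ (by omega)
      refine ⟨U₁ \ U₂, Finset.sdiff_subset.trans h1y, Or.inl ?_,
        (cutSet_sdiff_subset G U₁ U₂).trans Set.subset_union_right⟩
      rw [Finset.card_sdiff_of_subset h21]
      omega
    · have h12 : U₁ ⊆ U₂ := hch _ hU₁ _ hU₂ (by omega)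
      refine ⟨Uy \ (U₂ \ U₁), Finset.sdiff_subset, Or.inr ?_,
        (cutSet_sdiff_subset G _ _).trans (Set.union_subset_union_right _
          ((cutSet_sdiff_subset G U₂ U₁).trans (Set.union_comm _ _).subset))⟩
      rw [Finset.card_sdiff_of_subset (Finset.sdiff_subset.trans h2y),
        Finset.card_sdiff_of_subset h12]
      omega
  have hAh : A ⊆ Uh := hAS.trans Finset.sdiff_subset
  have hJA : J ⊆ Uh \ A := fun u hu => Finset.mem_sdiff.2
    ⟨hyh (hJy hu), fun huA => (Finset.mem_sdiff.1 (hAS huA)).2 (hJy hu)⟩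
  refine ⟨(Uh \ A) \ J, ?_, v, Uh, hUh, Uy, hUy, U₁, hU₁, U₂, hU₂, ?_⟩
  · rw [Finset.card_sdiff_of_subset hJA, Finset.card_sdiff_of_subset hAh]
    omega
  · intro x hx
    have key : x ∈ G.incidenceSet v ∨ x ∈ cutSet G Uh ∨ x ∈ cutSet G Uy ∨ x ∈ cutSet G U₁ ∨
        x ∈ cutSet G U₂ := by
      rcases cutSet_sdiff_subset G _ _ hx with h | h
      · rcases cutSet_sdiff_subset G _ _ h with h | h
        · exact Or.inr (Or.inl h)
        · rcases hAcut h with h | h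
          · exact Or.inl h
          · rcases cutSet_sdiff_subset G _ _ h with h | h
            · exact Or.inr (Or.inl h)
            · exact Or.inr (Or.inr (Or.inl h))
      · rcases hJcut h with h | h | h
        · exact Or.inr (Or.inr (Or.inl h))
        · exact Or.inr (Or.inr (Or.inr (Or.inl h)))
        · exact Or.inr (Or.inr (Or.inr (Or.inr h)))
    simpa only [Set.mem_union, or_assoc] using key

theorem isBisection_of_card {V : Type*} [Fintype V] {m : ℕ} (hn : Fintype.card V = 2 * m)
    {B : Finset V} (hB : B.card = m) : IsBisection B := by
  have : Bᶜ.card = m := by rw [Finset.card_compl]; omega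
  constructor <;> omega

/-- A chain of more than `m / 2` nonempty sets, each cutting at most one edge, yields a
bisection. -/
theorem exists_bisection_of_chain {V : Type*} [Fintype V] {G : SimpleGraph V}
    (hF : G.IsAcyclic) {m : ℕ} (hn : Fintype.card V = 2 * m) (𝒟 : Finset (Finset V))
    (hprop : ∀ D ∈ 𝒟, D.Nonempty ∧ (cutSet G D).ncard ≤ 1)
    (hch : ∀ D ∈ 𝒟, ∀ D' ∈ 𝒟, D ⊆ D' ∨ D' ⊆ D) (hcard : m < 2 * 𝒟.card) (hm : 0 < m)
    (hΔ : 0 < maxDeg G) :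
    ∃ B : Finset V, B.card = m ∧ (cutSet G B).ncard ≤ 8 * maxDeg G := by
  obtain ⟨κ, hκ⟩ : ∃ κ : ℕ → Prop, ∀ t, κ t ↔ ∃ D ∈ 𝒟, D.card ≡ t [MOD Fintype.card V] :=
    ⟨_, fun _ => Iff.rfl⟩
  have hne : ∀ D ∈ 𝒟, D.Nonempty := fun D hD => (hprop D hD).1
  -- Two members with sizes differing by `m` modulo `2m` give a bisection of width at most `2`.
  by_cases hex : ∀ t, κ t → ¬ κ (t + m)
  swap
  · push Not at hex
    obtain ⟨t, ht, htm⟩ := hex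
    obtain ⟨D₀, hD₀, h₀⟩ := (hκ _).1 ht
    obtain ⟨D, hD, h⟩ := (hκ _).1 htm
    obtain ⟨𝒰, h𝒰cut, -, h𝒰⟩ := exists_rotated_chain G 𝒟 hne hch D₀ hD₀
    obtain ⟨U, hU, hUm⟩ := h𝒰 D hD m (by omega) (h.trans (h₀.symm.add_right m))
    obtain ⟨D', hD', hcut⟩ := h𝒰cut U hU
    refine ⟨U, hUm, ?_⟩
    have h1 := Set.ncard_le_ncard hcut (Set.toFinite _)
    have h2 := Set.ncard_union_le (cutSet G D₀) (cutSet G D')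
    have h3 := (hprop D₀ hD₀).2
    have h4 := (hprop D' hD').2
    omega
  have hcount : m < 2 * Nat.count κ (2 * m) := by
    refine hcard.trans_le (Nat.mul_le_mul_left 2 ?_)
    rw [Nat.count_eq_card_filter_range]
    refine Finset.card_le_card_of_injOn (fun D => D.card % (2 * m)) ?_ ?_
    · intro D hD
      simp only [Finset.coe_filter, Finset.mem_range, Set.mem_ofPred_eq]
      refine ⟨Nat.mod_lt _ (by omega), (hκ _).2 ⟨D, hD, ?_⟩⟩
      rw [hn]
      exact (Nat.mod_modEq _ _).symm
    · intro D hD D' hD' h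
      have h1 := (hne D hD).card_pos
      have h2 := (hne D' hD').card_pos
      have h3 := D.card_le_univ
      have h4 := D'.card_le_univ
      have h5 : D.card = D'.card := by
        have h6 : D.card - 1 + 1 ≡ D'.card - 1 + 1 [MOD 2 * m] := by
          rw [Nat.sub_add_cancel h1, Nat.sub_add_cancel h2]
          exact h
        have := Nat.ModEq.eq_of_lt_of_lt (Nat.ModEq.add_right_cancel' 1 h6)
          (by omega) (by omega)
        omega
      rcases hch D hD D' hD' with h | h
      · exact Finset.eq_of_subset_of_card_le h h5.ge
      · exact (Finset.eq_of_subset_of_card_le h h5.le).symm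
  have hper : ∀ t, κ (t + 2 * m) ↔ κ t := by
    intro t
    simp only [hκ, hn, Nat.ModEq, Nat.add_mod_right]
  obtain ⟨x, e, hx, he, hem, hxe, hc⟩ := exists_rotation κ m hm hper hex hcount
  obtain ⟨D₀, hD₀, h₀⟩ := (hκ _).1 hx
  obtain ⟨Dh, hDh, hh⟩ := (hκ _).1 hxe
  obtain ⟨𝒰, h𝒰cut, h𝒰ch, h𝒰⟩ := exists_rotated_chain G 𝒟 hne hch D₀ hD₀
  rw [Nat.count_eq_card_filter_range] at hc
  obtain ⟨B, hB, v, U₁, hU₁, U₂, hU₂, U₃, hU₃, U₄, hU₄, hcut⟩ :=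
    exists_almost_bisection hF 𝒰 h𝒰ch m e he hem
      (h𝒰 Dh hDh (m + e) (by omega) (hh.trans (h₀.symm.add_right _))) _ (by
        intro k hk
        rw [Finset.mem_filter, Finset.mem_range] at hk
        obtain ⟨hke, hk⟩ := hk
        obtain ⟨D, hD, hk⟩ := (hκ _).1 hk
        exact ⟨hke, h𝒰 D hD k (by omega) (hk.trans (h₀.symm.add_right _))⟩) hc
  obtain ⟨D₁, hD₁, h₁⟩ := h𝒰cut U₁ hU₁
  obtain ⟨D₂, hD₂, h₂⟩ := h𝒰cut U₂ hU₂
  obtain ⟨D₃, hD₃, h₃⟩ := h𝒰cut U₃ hU₃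
  obtain ⟨D₄, hD₄, h₄⟩ := h𝒰cut U₄ hU₄
  -- The edges leaving `D₀` are common to all four bounds and are counted only once.
  have hBcut : (cutSet G B).ncard ≤ maxDeg G + 5 := by
    have hsub : cutSet G B ⊆ G.incidenceSet v ∪ (cutSet G D₀ ∪ (cutSet G D₁ ∪
        (cutSet G D₂ ∪ (cutSet G D₃ ∪ cutSet G D₄)))) := by
      refine hcut.trans (Set.union_subset_union_right _ (Set.union_subset
        (Set.union_subset (Set.union_subset (h₁.trans ?_) (h₂.trans ?_)) (h₃.trans ?_))
        (h₄.trans ?_))) <;> refine Set.union_subset_union_right _ ?_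
      · exact Set.subset_union_left
      · exact Set.subset_union_left.trans Set.subset_union_right
      · exact (Set.subset_union_left.trans Set.subset_union_right).trans Set.subset_union_right
      · exact (Set.subset_union_right.trans Set.subset_union_right).trans Set.subset_union_right
    have b0 := Set.ncard_le_ncard hsub (Set.toFinite _)
    have b1 := Set.ncard_union_le (G.incidenceSet v) (cutSet G D₀ ∪ (cutSet G D₁ ∪
        (cutSet G D₂ ∪ (cutSet G D₃ ∪ cutSet G D₄))))
    have b2 := Set.ncard_union_le (cutSet G D₀) (cutSet G D₁ ∪
        (cutSet G D₂ ∪ (cutSet G D₃ ∪ cutSet G D₄)))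
    have b3 := Set.ncard_union_le (cutSet G D₁) (cutSet G D₂ ∪ (cutSet G D₃ ∪ cutSet G D₄))
    have b4 := Set.ncard_union_le (cutSet G D₂) (cutSet G D₃ ∪ cutSet G D₄)
    have b5 := Set.ncard_union_le (cutSet G D₃) (cutSet G D₄)
    have c := ncard_incidenceSet_le G v
    have c0 := (hprop D₀ hD₀).2
    have c1 := (hprop D₁ hD₁).2
    have c2 := (hprop D₂ hD₂).2
    have c3 := (hprop D₃ hD₃).2
    have c4 := (hprop D₄ hD₄).2
    omega
  rcases hB with hB | hB
  · exact ⟨B, hB, by omega⟩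
  · obtain ⟨w, hw⟩ := Finset.card_pos.1 (show 0 < B.card by omega)
    refine ⟨B \ {w}, ?_, ?_⟩
    · rw [Finset.card_sdiff_of_subset (Finset.singleton_subset_iff.2 hw), Finset.card_singleton]
      omega
    · have b0 := Set.ncard_le_ncard ((cutSet_sdiff_subset G B {w}).trans
        (Set.union_subset_union_right _ (cutSet_singleton_subset G w))) (Set.toFinite _)
      have b1 := Set.ncard_union_le (cutSet G B) (G.incidenceSet w)
      have b2 := ncard_incidenceSet_le G w
      omega

end MinBisection

/-- In every forest `G` with an even number of vertices and
`diam*(G) > 1/4`, there is a bisection `(B, W)` with `e_G(B, W) ≤ 8 Δ(G)`. -/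
theorem MinBisection.bisection_of_diamStar_quarter {V : Type*} [Fintype V]
    (G : SimpleGraph V) (hF : G.IsAcyclic) (heven : Even (Fintype.card V))
    (hd : 1 / 4 < forestDiamStar G) :
    ∃ B : Finset V, IsBisection B ∧ cutWidth G B ≤ 8 * maxDeg G := by
  let _ : Fintype G.ConnectedComponent := Fintype.ofFinite _
  obtain ⟨m, hm⟩ := heven
  have hn : Fintype.card V = 2 * m := by omega
  obtain ⟨𝒟, hcard, -, hprop, hch⟩ := exists_chain hF (Finset.univ : Finset G.ConnectedComponent)
  have hd' : (1 : ℝ) / 4 < (𝒟.card : ℝ) / (Fintype.card V : ℝ) := by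
    rw [hcard, Nat.cast_sum]
    exact hd
  have hmpos : 0 < m := by
    -- For `m = 0` the relative diameter is `0` by division by zero.
    rw [Nat.pos_iff_ne_zero]
    rintro rfl
    rw [hn] at hd'
    norm_num at hd'
  have hlt : m < 2 * 𝒟.card := by
    rw [hn, div_lt_div_iff₀ (by norm_num) (by positivity)] at hd'
    have : (2 * m : ℝ) < 4 * 𝒟.card := by push_cast at hd'; linarith
    have : 2 * m < 4 * 𝒟.card := by exact_mod_cast this
    omega
  rcases Nat.eq_zero_or_pos (maxDeg G) with hΔ | hΔ
  · -- Without edges every cut has width `0`.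
    obtain ⟨B, -, hB⟩ := Finset.exists_subset_card_eq
      (show m ≤ (Finset.univ : Finset V).card by rw [Finset.card_univ]; omega)
    refine ⟨B, isBisection_of_card hn hB, ?_⟩
    have hempty : cutSet G B = ∅ := by
      rw [Set.eq_empty_iff_forall_notMem]
      rintro _ ⟨x, y, h, -, -, rfl⟩
      have h1 := ncard_incidenceSet_le G x
      rw [hΔ, Nat.le_zero, Set.ncard_eq_zero (Set.toFinite _)] at h1
      have h2 := G.mk'_mem_incidenceSet_left_iff.2 h
      rw [h1] at h2
      exact h2
    rw [cutWidth_eq_ncard, hempty, Set.ncard_empty]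
    exact Nat.zero_le _
  · obtain ⟨B, hB, hcut⟩ := exists_bisection_of_chain hF hn 𝒟
      (fun D hD => ⟨(hprop D hD).1, (hprop D hD).2.2⟩) hch hlt hmpos hΔ
    exact ⟨B, isBisection_of_card hn hB, hcut⟩
end

section
/- For every forest G on n vertices and every integer m with 1 ≤ m ≤ n, the vertex set of G can be partitioned into three classes B, W, Z such that one of the following two options occurs: (1) |B| = m, Z = ∅, and e_G(B,W,Z) ≤ 2; or (2) |B| ≤ m ≤ |B| + |Z|, 0 < |Z| ≤ n/2, e_G(B,W,Z) ≤ 2·Δ(G)/diam*(G), and diam*(G[Z]) ≥ 2·diam*(G), where G[Z] is the subgraph of G induced by Z and Δ(G) is the maximum degree of G. -/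
/-!
Choose a longest path in every component of the forest, list the vertices of these paths one path
after the other as `x 0, …, x (d - 1)`, where `d = n · diam*(G)`, and continue the list
`d`-periodically. Removing the edges of the paths leaves a forest in which every component contains
exactly one listed vertex; these components are the classes (`exists_pathSystem`). Only edges
between consecutive listed vertices leave a class, so a union of cyclically consecutive classes is
cut off by at most two edges. Let `c` be the function that counts the vertices in the classes up to
a given index; it satisfies `c (i + d) = c i + n`. If `c j - c i = m` for some `i, j`, then
option (1) holds (`PathSystem.exists_exact_cut`).

Otherwise the values of `c` and of `c - m` are two disjoint `n`-periodic sets of integers, with `d`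
values each per period. Minimising a potential around the circle (`exists_dense_run`) yields a run
of consecutive values of one kind, without values of the other kind in between, whose number is at
least `2 d / n` times the distance `M` from its first value to the next value of the other kind.
Let `Z` consist of the classes between the first and the last value of the run together with the
listed vertex at the last one. Then `Z` contains one listed vertex for each value of the run, so it
has at least `2 d / n · M ≥ 2 d / n · |Z|` listed vertices, and in an induced subgraph of `G` the
sum of the lengths of the longest paths is at least the number of listed vertices. Hence `diam*`
doubles on `Z`.

For `B` take the classes after `Z` up to the first one with which `|B| + |Z|` reaches `m`. This
overshoots by `M` and is corrected by cutting off from the last class a set `D` with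
`M - |Z| ≤ |D| ≤ M`. In a forest some set of between half and all of a prescribed size can be
separated from the rest by the edges at a single vertex (`exists_half_cut`); repeating this
`n / (2 d)` times is enough (`exists_approx_cut`), which with the edges at the last vertex of `Z`
and at most two further path edges gives the bound on the width (`PathSystem.exists_dense_cut`). If
the run consists of values of the other kind, the same construction is applied to `n - m`, with `B`
and `W` exchanged.
-/

open scoped Classical

namespace MinBisection

variable {V : Type*}

/-! ### Trimming a path -/

/-- If the marked vertices of a path are trimmed to the part between the first and the last of
them, one gets a path that joins two marked vertices and still visits all of them. -/
lemma exists_trimmed_path {G : SimpleGraph V} (s : Set V) (hs : s.Nonempty) :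
    ∀ (N : ℕ) (a b : V) (p : G.Walk a b), p.length ≤ N → p.IsPath → (∀ v ∈ s, v ∈ p.support) →
      ∃ x ∈ s, ∃ y ∈ s, ∃ q : G.Walk x y, q.IsPath ∧ (∀ v ∈ s, v ∈ q.support) ∧
        ∀ e ∈ q.edges, e ∈ p.edges := by
  intro N
  induction N with
  | zero =>
    intro a b p hN hp hsub
    cases p with
    | nil =>
      obtain ⟨v, hv⟩ := hs
      have hva : v = a := by simpa using hsub v hv
      subst hva
      exact ⟨v, hv, v, hv, .nil, by simp, hsub, by simp⟩
    | cons h p' => simp at hN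
  | succ N ih =>
    -- dropping an unmarked first vertex
    have key : ∀ (a b : V) (p : G.Walk a b), p.length ≤ N + 1 → p.IsPath →
        (∀ v ∈ s, v ∈ p.support) → a ∉ s →
        ∃ x ∈ s, ∃ y ∈ s, ∃ q : G.Walk x y, q.IsPath ∧ (∀ v ∈ s, v ∈ q.support) ∧
          ∀ e ∈ q.edges, e ∈ p.edges := by
      intro a b p hN hp hsub ha
      cases p with
      | nil =>
        obtain ⟨v, hv⟩ := hs
        have hva : v = a := by simpa using hsub v hv
        exact absurd (hva ▸ hv) ha
      | cons h p' =>
        obtain ⟨x, hx, y, hy, q, hq, h1, h2⟩ := ih _ _ p' (by simpa using hN) hp.of_cons (by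
          intro v hv
          have := hsub v hv
          rw [SimpleGraph.Walk.support_cons, List.mem_cons] at this
          rcases this with rfl | h
          · exact absurd hv ha
          · exact h)
        exact ⟨x, hx, y, hy, q, hq, h1, fun e he => by simp [h2 e he]⟩
    intro a b p hN hp hsub
    by_cases ha : a ∈ s
    · by_cases hb : b ∈ s
      · exact ⟨a, ha, b, hb, p, hp, hsub, fun e he => he⟩
      · obtain ⟨x, hx, y, hy, q, hq, h1, h2⟩ :=
          key b a p.reverse (by simpa using hN) hp.reverse (by simpa using hsub) hb
        exact ⟨x, hx, y, hy, q, hq, h1, by simpa using h2⟩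
    · exact key a b p hN hp hsub ha

/-! ### Approximate cuts in forests -/

/-- The edges of `G` with one end in `D` and the other in `T`. -/
def edgesBetween (G : SimpleGraph V) (D T : Finset V) : Set (Sym2 V) :=
  {e | ∃ x ∈ D, ∃ y ∈ T, G.Adj x y ∧ e = s(x, y)}

/-- The edges of `G` incident to `u`. -/
def edgesAt (G : SimpleGraph V) (u : V) : Set (Sym2 V) :=
  {e | ∃ y, G.Adj u y ∧ e = s(u, y)}

lemma ncard_edgesAt_le [Fintype V] (G : SimpleGraph V) (u : V) :
    (edgesAt G u).ncard ≤ maxDeg G := by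
  have h1 : edgesAt G u = (fun y => s(u, y)) '' {y | G.Adj u y} := by
    ext e; simp only [edgesAt, Set.mem_ofPred_eq, Set.mem_image]
    exact ⟨fun ⟨y, h, e⟩ => ⟨y, h, e.symm⟩, fun ⟨y, h, e⟩ => ⟨y, h, e.symm⟩⟩
  rw [h1]
  refine (Set.ncard_image_le (Set.toFinite _)).trans ?_
  exact Finset.le_sup (f := fun v => Nat.card {u // G.Adj v u}) (Finset.mem_univ u)

/-- One step of the approximate cut: a set `D` with `M / 2 ≤ |D| ≤ M` can be separated from the
rest of `S` by edges that all share one vertex. That vertex `u` is the root of a smallest branch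
`A` with more than `M` vertices; every component of `A - u` is a smaller branch, so has at most
`M` vertices, and a largest union of components with at most `M` vertices will do. -/
lemma exists_half_cut [Fintype V] (G : SimpleGraph V) (hF : G.IsAcyclic) (S : Finset V) (M : ℕ)
    (hM : M ≤ S.card) :
    ∃ D ⊆ S, D.card ≤ M ∧ M ≤ 2 * D.card ∧ (edgesBetween G D (S \ D)).ncard ≤ maxDeg G := by
  rcases hM.eq_or_lt with rfl | hlt
  · exact ⟨S, subset_rfl, le_rfl, by omega, by simp [edgesBetween]⟩
  -- a pair `(A, u)` is a branch of `S` if `A` is attached to the rest of `S` only through `u`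
  let F : Finset (Finset V × V) := Finset.univ.filter fun q =>
    q.1 ⊆ S ∧ q.2 ∈ q.1 ∧ M < q.1.card ∧ ∀ a ∈ q.1, ∀ b ∈ S \ q.1, G.Adj a b → a = q.2
  have hFne : F.Nonempty := by
    obtain ⟨v, hv⟩ : S.Nonempty := Finset.card_pos.mp (by omega)
    exact ⟨(S, v), by simp +contextual [F, hv, hlt]⟩
  obtain ⟨⟨A, u⟩, hAF, hmin⟩ := Finset.exists_min_image F (fun q => q.1.card) hFne
  simp only [F, Finset.mem_filter, Finset.mem_univ, true_and] at hAF hmin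
  obtain ⟨hAS, huA, hAM, hAout⟩ := hAF
  have hAu : (A.erase u).card = A.card - 1 := Finset.card_erase_of_mem huA
  -- unions of components of `A - u`
  let C : Finset (Finset V) := Finset.univ.filter fun D =>
    D ⊆ A.erase u ∧ D.card ≤ M ∧ ∀ a ∈ D, ∀ b ∈ A.erase u \ D, ¬ G.Adj a b
  have hCne : C.Nonempty := ⟨∅, by simp [C]⟩
  obtain ⟨D, hDC, hmax⟩ := Finset.exists_max_image C Finset.card hCne
  simp only [C, Finset.mem_filter, Finset.mem_univ, true_and] at hDC hmax
  obtain ⟨hDA, hDM, hDcl⟩ := hDC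
  refine ⟨D, fun v hv => hAS (Finset.mem_of_mem_erase (hDA hv)), hDM, ?_, ?_⟩
  · by_contra! hsmall
    obtain ⟨z, hz⟩ : (A.erase u \ D).Nonempty := by
      rw [← Finset.card_pos, Finset.card_sdiff_of_subset hDA]; omega
    have hzA := (Finset.mem_sdiff.mp hz).1
    have hzD := (Finset.mem_sdiff.mp hz).2
    let K : Finset V := Finset.univ.filter fun w =>
      ∃ p : G.Walk z w, ∀ v ∈ p.support, v ∈ A.erase u
    have hKmem : ∀ w, w ∈ K ↔ ∃ p : G.Walk z w, ∀ v ∈ p.support, v ∈ A.erase u := by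
      intro w; simp [K]
    have hKA : K ⊆ A.erase u := by
      intro w hw
      obtain ⟨p, hp⟩ := (hKmem w).1 hw
      exact hp w p.end_mem_support
    have hzK : z ∈ K := (hKmem z).2 ⟨.nil, by simpa using hzA⟩
    have hKcl : ∀ a ∈ K, ∀ b ∈ A.erase u, G.Adj a b → b ∈ K := by
      intro a ha b hb hab
      obtain ⟨p, hp⟩ := (hKmem a).1 ha
      refine (hKmem b).2 ⟨p.concat hab, ?_⟩
      intro v hv
      rw [SimpleGraph.Walk.support_concat, List.mem_append, List.mem_singleton] at hv
      rcases hv with hv | rfl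
      · exact hp v hv
      · exact hb
    -- two neighbours of `u` in one component of `A - u` would close a cycle
    have huniq : ∀ w₁ ∈ K, ∀ w₂ ∈ K, G.Adj w₁ u → G.Adj w₂ u → w₁ = w₂ := by
      intro w₁ h₁ w₂ h₂ a₁ a₂
      by_contra hne
      obtain ⟨p₁, hp₁⟩ := (hKmem w₁).1 h₁
      obtain ⟨p₂, hp₂⟩ := (hKmem w₂).1 h₂
      let q : G.Path w₁ w₂ := (p₁.reverse.append p₂).toPath
      let q' : G.Walk w₁ w₂ := .cons a₁ (.cons a₂.symm .nil)
      have hq' : q'.IsPath := by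
        simp [q', SimpleGraph.Walk.cons_isPath_iff, hne, a₁.ne, a₂.ne.symm]
      have heq := (hF.subsingleton_path w₁ w₂).elim q ⟨q', hq'⟩
      have hu : u ∈ (q : G.Walk w₁ w₂).support := by rw [heq]; simp [q']
      have hu' := SimpleGraph.Walk.support_toPath_subset_support _ hu
      rw [SimpleGraph.Walk.mem_support_append_iff, SimpleGraph.Walk.support_reverse,
        List.mem_reverse] at hu'
      have : u ∈ A.erase u := hu'.elim (hp₁ u) (hp₂ u)
      simp at this
    have hKlt : K.card < A.card := by
      have := Finset.card_le_card hKA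
      have := Finset.card_pos.mpr ⟨u, huA⟩
      omega
    have hKM : K.card ≤ M := by
      by_contra! hbig
      obtain ⟨z', hz', hz'u⟩ : ∃ z' ∈ K, ∀ w ∈ K, G.Adj w u → w = z' := by
        by_cases hex : ∃ w ∈ K, G.Adj w u
        · obtain ⟨w, hw, hwu⟩ := hex
          exact ⟨w, hw, fun w' hw' h => huniq w' hw' w hw h hwu⟩
        · push Not at hex
          exact ⟨z, hzK, fun w hw h => absurd h (hex w hw)⟩
      refine absurd (hmin (K, z') ⟨hKA.trans ((Finset.erase_subset _ _).trans hAS), hz', hbig, ?_⟩)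
        (not_le.mpr hKlt)
      intro a ha b hb hab
      simp only [Finset.mem_sdiff] at hb
      by_cases hbu : b = u
      · subst hbu; exact hz'u a ha hab
      · by_cases hbA : b ∈ A
        · exact absurd (hKcl a ha b (Finset.mem_erase.mpr ⟨hbu, hbA⟩) hab) hb.2
        · have := hAout a (Finset.mem_of_mem_erase (hKA ha)) b (by simp [hb.1, hbA]) hab
          exact absurd this (Finset.ne_of_mem_erase (hKA ha))
    have hDK : Disjoint D K := by
      rw [Finset.disjoint_left]
      intro v hvD hvK
      obtain ⟨p, hp⟩ := (hKmem v).1 hvK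
      -- a walk in `A - u` that ends in the union of components `D` starts there
      have : ∀ (a b : V) (p : G.Walk a b), (∀ v ∈ p.support, v ∈ A.erase u) → b ∈ D → a ∈ D := by
        intro a b p
        induction p with
        | nil => intro _ h; exact h
        | @cons a' b' c' h p ih =>
          intro hsup hc
          have hb' : b' ∈ D := ih (fun v hv => hsup v (by simp [hv])) hc
          by_contra hna
          exact hDcl b' hb' a' (by
            rw [Finset.mem_sdiff]; exact ⟨hsup a' (by simp), hna⟩) h.symm
      exact hzD (this z v p hp hvD)
    have h1 := hmax K ⟨hKA, hKM, fun a ha b hb hab => by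
      rw [Finset.mem_sdiff] at hb
      exact hb.2 (hKcl a ha b hb.1 hab)⟩
    have hcard := Finset.card_union_of_disjoint hDK
    have hKpos : 0 < K.card := Finset.card_pos.mpr ⟨z, hzK⟩
    have h2 := hmax (D ∪ K) ⟨Finset.union_subset hDA hKA, by omega, by
      intro a ha b hb hab
      rw [Finset.mem_sdiff, Finset.mem_union, not_or] at hb
      rcases Finset.mem_union.mp ha with ha | ha
      · exact hDcl a ha b (by rw [Finset.mem_sdiff]; exact ⟨hb.1, hb.2.1⟩) hab
      · exact hb.2.2 (hKcl a ha b hb.1 hab)⟩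
    omega
  · refine (Set.ncard_le_ncard ?_ (Set.toFinite _)).trans (ncard_edgesAt_le G u)
    rintro e ⟨a, ha, b, hb, hab, rfl⟩
    rw [Finset.mem_sdiff] at hb
    have haA := hDA ha
    have hbu : b = u := by
      by_contra hbu
      by_cases hbA : b ∈ A
      · exact hDcl a ha b (by
          rw [Finset.mem_sdiff, Finset.mem_erase]; exact ⟨⟨hbu, hbA⟩, hb.2⟩) hab
      · exact Finset.ne_of_mem_erase haA (hAout a (Finset.mem_of_mem_erase haA) b
          (by rw [Finset.mem_sdiff]; exact ⟨hb.1, hbA⟩) hab)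
    subst hbu
    exact ⟨a, hab.symm, Sym2.eq_swap⟩

/-- The approximate cut: each of `r` rounds cuts off at least half of what is still missing. -/
lemma exists_approx_cut [Fintype V] (G : SimpleGraph V) (hF : G.IsAcyclic) (r : ℕ) :
    ∀ (S : Finset V) (M : ℕ), M ≤ S.card → ∃ D ⊆ S, D.card ≤ M ∧ 2 ^ r * (M - D.card) ≤ M ∧
      (edgesBetween G D (S \ D)).ncard ≤ r * maxDeg G := by
  induction r with
  | zero => intro S M _; exact ⟨∅, by simp, by simp, by simp, by simp [edgesBetween]⟩
  | succ r ih =>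
    intro S M hM
    obtain ⟨D₁, h1S, h1M, h1e, h1c⟩ := ih S M hM
    obtain ⟨D₂, h2S, h2M, h2e, h2c⟩ := exists_half_cut G hF (S \ D₁) (M - D₁.card) (by
      rw [Finset.card_sdiff_of_subset h1S]; omega)
    have hdis : Disjoint D₁ D₂ := by
      rw [Finset.disjoint_left]; intro v hv hv2
      exact (Finset.mem_sdiff.mp (h2S hv2)).2 hv
    have hcard := Finset.card_union_of_disjoint hdis
    refine ⟨D₁ ∪ D₂, Finset.union_subset h1S (h2S.trans Finset.sdiff_subset), by omega, ?_, ?_⟩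
    · rw [hcard, pow_succ, mul_assoc]
      exact (Nat.mul_le_mul_left _ (by omega)).trans h1e
    · rw [add_mul, one_mul]
      refine le_trans (Set.ncard_le_ncard ?_ (Set.toFinite _))
        ((Set.ncard_union_le _ _).trans (Nat.add_le_add h1c h2c))
      rintro e ⟨a, ha, b, hb, hab, rfl⟩
      rw [Finset.mem_sdiff, Finset.mem_union, not_or] at hb
      rcases Finset.mem_union.mp ha with ha | ha
      · exact Or.inl ⟨a, ha, b, by rw [Finset.mem_sdiff]; exact ⟨hb.1, hb.2.1⟩, hab, rfl⟩
      · exact Or.inr ⟨a, ha, b, by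
          simp only [Finset.mem_sdiff]; exact ⟨⟨hb.1, hb.2.1⟩, hb.2.2⟩, hab, rfl⟩

/-! ### Longest paths and the classes around them -/

/-- In a forest, choose a longest path in every component and list the vertices of these paths
one path after the other, as `x 0, …, x (d - 1)`, continued `d`-periodically. Removing the edges
of the paths leaves a forest in which each component contains exactly one `x t`; `ρ v` is the
index of the one in the component of `v`. In every induced subgraph the sum of the lengths of
the longest paths is at least the number of listed vertices it contains. -/
lemma exists_pathSystem [Fintype V] (G : SimpleGraph V) (hF : G.IsAcyclic) [Nonempty V]
    [Fintype G.ConnectedComponent] :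
    ∃ (d : ℕ) (x : ℤ → V) (ρ : V → ℤ), 0 < d ∧
      d = ∑ c : G.ConnectedComponent, compLongestPathCard G c ∧
      (∀ t, x (t + d) = x t) ∧ (∀ t, ρ (x t) = t % d) ∧
      (∀ u v, G.Adj u v → ρ u = ρ v ∨
        ∃ t, (u = x t ∧ v = x (t + 1)) ∨ (v = x t ∧ u = x (t + 1))) ∧
      (∀ (Z : Finset V) [Fintype (G.induce (Z : Set V)).ConnectedComponent],
        (Z.filter fun v => ∃ t, x t = v).card ≤
          ∑ c : (G.induce (Z : Set V)).ConnectedComponent,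
            compLongestPathCard (G.induce (Z : Set V)) c) := by
  have hbdd : ∀ {W : Type _} [Fintype W] (H : SimpleGraph W) (c : H.ConnectedComponent),
      BddAbove {k | ∃ (u v : W) (p : H.Walk u v), p.IsPath ∧ H.connectedComponentMk u = c ∧
        k = p.support.length} := by
    intro W _ H c
    refine ⟨Fintype.card W, ?_⟩
    rintro k ⟨u, v, p, hp, -, rfl⟩
    exact hp.support_nodup.length_le_card
  have hlong : ∀ c : G.ConnectedComponent, ∃ (u v : V) (p : G.Walk u v), p.IsPath ∧
      G.connectedComponentMk u = c ∧ compLongestPathCard G c = p.support.length := by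
    intro c
    refine Nat.sSup_mem ?_ (hbdd G c)
    obtain ⟨u, hu⟩ := c.exists_rep
    exact ⟨1, u, u, .nil, by simp, hu, by simp⟩
  choose a b p hp hpc hpl using hlong
  have hcomp : ∀ c, ∀ v ∈ (p c).support, G.connectedComponentMk v = c := by
    intro c v hv
    rw [← hpc c]
    exact SimpleGraph.ConnectedComponent.sound ((p c).takeUntil v hv).reachable.symm
  let L : List V := (Finset.univ : Finset G.ConnectedComponent).toList.flatMap
    fun c => (p c).support
  have hLmem : ∀ v, v ∈ L ↔ ∃ c, v ∈ (p c).support := by intro v; simp [L]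
  have hLnd : L.Nodup := by
    rw [List.nodup_flatMap]
    refine ⟨fun c _ => (hp c).support_nodup, ?_⟩
    refine (Finset.nodup_toList _).imp ?_
    intro c c' hne v hv hv'
    exact hne ((hcomp c v hv).symm.trans (hcomp c' v hv'))
  have hLlen : L.length = ∑ c : G.ConnectedComponent, compLongestPathCard G c := by
    rw [List.length_flatMap, ← Finset.sum_map_toList]
    congr 1
    exact List.map_congr_left fun c _ => (hpl c).symm
  have hLpos : 0 < L.length := by
    obtain ⟨v⟩ := ‹Nonempty V›
    exact List.length_pos_of_mem ((hLmem _).2 ⟨G.connectedComponentMk v, (p _).start_mem_support⟩)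
  -- consecutive vertices on one of the paths are consecutive in `L`
  have hLedge : ∀ c, ∀ e ∈ (p c).edges, ∃ (t : ℕ) (ht : t + 1 < L.length),
      e = s(L[t], L[t + 1]) := by
    intro c e he
    have hinf : (p c).support <:+: L := by
      obtain ⟨l₁, l₂, h⟩ := List.append_of_mem (Finset.mem_toList.mpr (Finset.mem_univ c))
      refine ⟨l₁.flatMap fun c => (p c).support, l₂.flatMap fun c => (p c).support, ?_⟩
      simp only [L, h, List.flatMap_append, List.flatMap_cons, List.append_assoc]
    obtain ⟨l₁, l₂, h⟩ := hinf
    obtain ⟨i, hi, rfl⟩ := List.getElem_of_mem he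
    have hi' : i < (p c).length := by simpa using hi
    have hlen : l₁.length + (p c).support.length + l₂.length = L.length := by
      rw [← h]; simp [add_assoc]
    have hsl : (p c).support.length = (p c).length + 1 := (p c).length_support
    have hget : ∀ k (hk : k < (p c).support.length), L[l₁.length + k]'(by omega) =
        (p c).support[k] := by
      intro k hk
      simp only [← h]
      rw [List.getElem_append_left (by simp; omega), List.getElem_append_right (by omega)]
      simp
    refine ⟨l₁.length + i, by omega, ?_⟩
    have h1 := hget i (by omega)
    have h2 := hget (i + 1) (by omega)
    simp only [← add_assoc] at h2
    rw [h1, h2, SimpleGraph.Walk.support_getElem_eq_getVert,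
      SimpleGraph.Walk.support_getElem_eq_getVert, SimpleGraph.Walk.getElem_edges]
  -- the forest left after removing the edges of the paths
  let E : Set (Sym2 V) := {e | ∃ c, e ∈ (p c).edges}
  let H : SimpleGraph V := G.deleteEdges E
  have hHG : H ≤ G := G.deleteEdges_le E
  have hend : ∀ e ∈ E, ∀ v ∈ e, v ∈ L := by
    rintro e ⟨c, he⟩ v hv
    exact (hLmem v).2 ⟨c, SimpleGraph.Walk.mem_support_of_mem_edges he hv⟩
  have hreach : ∀ v, ∃ w ∈ L, H.Reachable v w := by
    intro v
    have key : ∀ (v u : V) (q : G.Walk v u), u ∈ L → ∃ w ∈ L, H.Reachable v w := by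
      intro v u q hu
      induction q with
      | nil => exact ⟨_, hu, .refl _⟩
      | @cons v v' u h q ih =>
        by_cases he : s(v, v') ∈ E
        · exact ⟨v, hend _ he v (by simp), .refl _⟩
        · obtain ⟨w, hw, hr⟩ := ih hu
          have hadj : H.Adj v v' := by
            rw [SimpleGraph.deleteEdges_adj]; exact ⟨h, he⟩
          exact ⟨w, hw, hadj.reachable.trans hr⟩
    have hc : G.Reachable v (a (G.connectedComponentMk v)) :=
      (SimpleGraph.ConnectedComponent.exact (hpc (G.connectedComponentMk v))).symm
    obtain ⟨q⟩ := hc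
    exact key _ _ q ((hLmem _).2 ⟨_, (p _).start_mem_support⟩)
  have hsep : ∀ w ∈ L, ∀ w' ∈ L, H.Reachable w w' → w = w' := by
    intro w hw w' hw' hr
    obtain ⟨c, hc⟩ := (hLmem w).1 hw
    obtain ⟨c', hc'⟩ := (hLmem w').1 hw'
    have hcc : c = c' := by
      rw [← hcomp c w hc, ← hcomp c' w' hc']
      exact SimpleGraph.ConnectedComponent.sound (hr.mono hHG)
    subst hcc
    obtain ⟨x, hx, y, hy, q, hq, hsub, hqe⟩ := exists_trimmed_path ({w, w'} : Set V) ⟨w, by simp⟩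
      _ _ _ (p c) le_rfl (hp c) (by
        rintro v (rfl | rfl)
        · exact hc
        · exact hc')
    have hxy : H.Reachable x y := by
      rcases hx with rfl | rfl <;> rcases hy with rfl | rfl
      · exact .refl _
      · exact hr
      · exact hr.symm
      · exact .refl _
    obtain ⟨q', hq'⟩ := hxy.exists_isPath
    have heq := congrArg Subtype.val ((hF.subsingleton_path x y).elim ⟨q, hq⟩
      ⟨q'.mapLe hHG, hq'.mapLe hHG⟩)
    simp only at heq
    cases q' with
    | nil =>
      have h1 := hsub w (by simp)
      have h2 := hsub w' (by simp)
      rw [heq] at h1 h2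
      simp at h1 h2
      rw [h1, h2]
    | @cons _ z _ h _ =>
      -- its first edge would be both kept and removed
      have h1 : s(x, z) ∈ q.edges := by rw [heq]; simp [SimpleGraph.Walk.mapLe]
      have h2 : s(x, z) ∈ E := ⟨c, hqe _ h1⟩
      rw [SimpleGraph.deleteEdges_adj] at h
      exact absurd h2 h.2
  choose π hπL hπr using hreach
  have hπL' : ∀ w ∈ L, π w = w := fun w hw => (hsep w hw _ (hπL w) (hπr w)).symm
  have hd0 : (L.length : ℤ) ≠ 0 := by omega
  have hmod : ∀ t : ℤ, (t % (L.length : ℤ)).toNat < L.length := by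
    intro t
    have := Int.emod_nonneg t hd0
    have := Int.emod_lt_of_pos t (show (0 : ℤ) < L.length by omega)
    omega
  let x : ℤ → V := fun t => L[(t % (L.length : ℤ)).toNat]'(hmod t)
  have hxL : ∀ t, x t ∈ L := fun t => List.getElem_mem _
  have hxnat : ∀ (t : ℕ) (ht : t < L.length), x t = L[t] := by
    intro t ht
    simp only [x]
    congr 1
    rw [Int.emod_eq_of_lt (by omega) (by omega)]; simp
  refine ⟨L.length, x, fun v => (L.idxOf (π v) : ℤ), hLpos, hLlen, ?_, ?_, ?_, ?_⟩
  · intro t; simp [x]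
  · intro t
    simp only
    rw [hπL' _ (hxL t)]
    simp only [x]
    rw [hLnd.idxOf_getElem]
    exact Int.toNat_of_nonneg (Int.emod_nonneg t hd0)
  · intro u v huv
    by_cases he : s(u, v) ∈ E
    · right
      obtain ⟨c, hc⟩ := he
      obtain ⟨t, ht, heq⟩ := hLedge c _ hc
      refine ⟨t, ?_⟩
      have h1 := hxnat t (by omega)
      have h2 := hxnat (t + 1) ht
      push_cast at h2
      rw [h1, h2]
      rw [Sym2.eq_iff] at heq
      tauto
    · left
      have hadj : H.Adj u v := by
        rw [SimpleGraph.deleteEdges_adj]; exact ⟨huv, he⟩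
      have := hsep _ (hπL u) _ (hπL v) (((hπr u).symm.trans hadj.reachable).trans (hπr v))
      simp only [this]
  · intro Z _
    let GZ := G.induce (Z : Set V)
    have hxmem : ∀ v, (∃ t, x t = v) ↔ v ∈ L := by
      intro v
      constructor
      · rintro ⟨t, rfl⟩; exact hxL t
      · intro hv
        obtain ⟨i, hi, rfl⟩ := List.getElem_of_mem hv
        exact ⟨i, hxnat i hi⟩
    simp only [hxmem]
    let T : Finset (Z : Set V) := Finset.univ.filter fun v => (v : V) ∈ L
    have hTcard : (Z.filter fun v => v ∈ L).card = T.card := by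
      refine (Finset.card_bij (fun (v : (Z : Set V)) _ => (v : V)) ?_ ?_ ?_).symm
      · intro v hv
        simp only [T, Finset.mem_filter, Finset.mem_univ, true_and] at hv
        exact Finset.mem_filter.mpr ⟨v.2, hv⟩
      · intro v _ w _ h; exact Subtype.ext h
      · intro v hv
        rw [Finset.mem_filter] at hv
        exact ⟨⟨v, hv.1⟩, by simp [T, hv.2], rfl⟩
    rw [hTcard, Finset.card_eq_sum_card_fiberwise (f := GZ.connectedComponentMk)
      (t := Finset.univ) (by intro _ _; simp)]
    refine Finset.sum_le_sum fun c _ => ?_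
    let s : Finset V := (T.filter fun v => GZ.connectedComponentMk v = c).image
      (fun v : (Z : Set V) => (v : V))
    have hscard : s.card = (T.filter fun v => GZ.connectedComponentMk v = c).card :=
      Finset.card_image_of_injective _ Subtype.val_injective
    rw [← hscard]
    have hsm : ∀ v, v ∈ s → v ∈ L ∧ ∃ h : v ∈ (Z : Set V), GZ.connectedComponentMk ⟨v, h⟩ = c := by
      intro v hv
      obtain ⟨w, hw, rfl⟩ := Finset.mem_image.mp hv
      simp only [T, Finset.mem_filter, Finset.mem_univ, true_and] at hw
      exact ⟨hw.1, w.2, hw.2⟩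
    rcases s.eq_empty_or_nonempty with hs | ⟨w₀, hw₀⟩
    · simp [hs]
    have hGr : ∀ v w : (Z : Set V), GZ.Reachable v w → G.Reachable (v : V) w :=
      fun v w h => h.map (SimpleGraph.Embedding.induce (Z : Set V)).toHom
    obtain ⟨c', hc'⟩ := (hLmem w₀).1 (hsm w₀ hw₀).1
    obtain ⟨y, hy, z, hz, q, hq, hsub, -⟩ := exists_trimmed_path (s : Set V) ⟨w₀, hw₀⟩
      _ _ _ (p c') le_rfl (hp c') (by
        intro v hv
        obtain ⟨hvL, hvZ, hvc⟩ := hsm v hv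
        obtain ⟨-, hw₀Z, hw₀c⟩ := hsm w₀ hw₀
        obtain ⟨c'', hc''⟩ := (hLmem v).1 hvL
        have hr := hGr _ _ (SimpleGraph.ConnectedComponent.exact (hvc.trans hw₀c.symm))
        have : c'' = c' := by
          rw [← hcomp c'' v hc'', ← hcomp c' w₀ hc']
          exact SimpleGraph.ConnectedComponent.sound hr
        exact this ▸ hc'')
    obtain ⟨-, hyZ, hyc⟩ := hsm y hy
    obtain ⟨-, hzZ, hzc⟩ := hsm z hz
    obtain ⟨q', hq'⟩ := (SimpleGraph.ConnectedComponent.exact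
      (hyc.trans hzc.symm)).exists_isPath
    -- the path within `Z` is the part of the longest path between `y` and `z`
    have hq'' := hq'.map (f := (SimpleGraph.Embedding.induce (Z : Set V)).toHom)
      (SimpleGraph.Embedding.induce (G := G) (Z : Set V)).injective
    have heq := congrArg Subtype.val ((hF.subsingleton_path y z).elim ⟨q, hq⟩ ⟨_, hq''⟩)
    simp only at heq
    have hmap : (q'.map (SimpleGraph.Embedding.induce (Z : Set V)).toHom).support.length =
        q'.support.length := by
      rw [SimpleGraph.Walk.support_map, List.length_map]
    have hlen : q.support.length = q'.support.length :=
      (congrArg (fun w : G.Walk y z => w.support.length) heq).trans hmap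
    calc s.card ≤ q.support.toFinset.card :=
          Finset.card_le_card fun v hv => List.mem_toFinset.mpr (hsub v hv)
      _ ≤ q.support.length := q.support.toFinset_card_le
      _ = q'.support.length := hlen
      _ ≤ _ := le_csSup (hbdd _ c) ⟨_, _, q', hq', hyc, rfl⟩

/-! ### Dense runs in two interleaved periodic sequences -/

/-- Some run of points of `p` between consecutive points of `q`, followed by the gap up to the
next point of `q`, has density at least `2 d / n`, for `(p, q)` or for `(q, p)`.
Following `(number of points of both kinds before) * n - 2 * d * position` around the circle,
the claimed run starts at a point where this quantity is smallest. -/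
lemma exists_dense_run (d : ℕ) (n : ℤ) (hd : 0 < d) (p q : ℤ → ℤ)
    (hp : StrictMono p) (hq : StrictMono q) (hpd : ∀ i, p (i + d) = p i + n)
    (hqd : ∀ i, q (i + d) = q i + n) (hne : ∀ i j, p i ≠ q j) :
    (∃ i k j, i ≤ k ∧ p k < q j ∧ q (j - 1) < p i ∧ 2 * d * (q j - p i) ≤ (k + 1 - i) * n) ∨
    (∃ i k j, i ≤ k ∧ q k < p j ∧ p (j - 1) < q i ∧ 2 * d * (p j - q i) ≤ (k + 1 - i) * n) := by
  have hlb : ∀ f : ℤ → ℤ, StrictMono f → ∀ i : ℤ, 0 ≤ i → f 0 + i ≤ f i ∧ f (-i) + i ≤ f 0 := by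
    intro f hf i hi
    induction i, hi using Int.leInduction with
    | base => simp
    | succ i hi ih =>
      have h1 := hf (show i < i + 1 by omega)
      have h2 := hf (show -(i + 1) < -i by omega)
      omega
  -- the index of the first value of `f` above a given level
  have hnext : ∀ f : ℤ → ℤ, StrictMono f → ∃ g : ℤ → ℤ, ∀ y, y < f (g y) ∧ f (g y - 1) ≤ y := by
    intro f hf
    have : ∀ y, ∃ j, y < f j ∧ f (j - 1) ≤ y := by
      intro y
      obtain ⟨j, hj, hmin⟩ := Int.exists_least_of_bdd (P := fun j => y < f j)
        ⟨-(max 0 (f 0 - y)), fun z hz => by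
          by_contra hlt
          have h1 := hf (not_le.mp hlt)
          have h2 := (hlb f hf (max 0 (f 0 - y)) (by omega)).2
          omega⟩
        ⟨max 0 (y - f 0) + 1, by
          have h2 := (hlb f hf (max 0 (y - f 0) + 1) (by omega)).1
          omega⟩
      refine ⟨j, hj, ?_⟩
      by_contra hlt
      have := hmin (j - 1) (not_le.mp hlt)
      omega
    choose g hg using this
    exact ⟨g, hg⟩
  have huniq : ∀ f : ℤ → ℤ, StrictMono f → ∀ y a b, y < f a → f (a - 1) ≤ y → y < f b →
      f (b - 1) ≤ y → a = b := by
    intro f hf y a b h1 h2 h3 h4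
    have h5 := hf.lt_iff_lt.mp (lt_of_le_of_lt h2 h3)
    have h6 := hf.lt_iff_lt.mp (lt_of_le_of_lt h4 h1)
    omega
  obtain ⟨P, hP⟩ := hnext p hp
  obtain ⟨Q, hQ⟩ := hnext q hq
  have hshift : ∀ (f g : ℤ → ℤ), StrictMono f → (∀ i, f (i + d) = f i + n) →
      (∀ y, y < f (g y) ∧ f (g y - 1) ≤ y) → ∀ y, g (y + n) = g y + d := by
    intro f g hf hfd hg y
    refine huniq f hf (y + n) _ _ (hg _).1 (hg _).2 ?_ ?_
    · rw [hfd]; have := (hg y).1; omega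
    · rw [show g y + d - 1 = (g y - 1) + d by ring, hfd]; have := (hg y).2; omega
  have hmin : ∀ φ : ℤ → ℤ, (∀ i, φ (i + d) = φ i) → ∃ i₀, ∀ i, φ i₀ ≤ φ i := by
    intro φ hφ
    obtain ⟨i₀, -, h⟩ := Finset.exists_min_image (Finset.Ico (0 : ℤ) d) φ
      ⟨0, by simp [hd]⟩
    refine ⟨i₀, fun i => ?_⟩
    have hper : Function.Periodic φ (d : ℤ) := hφ
    obtain ⟨y, hy, hyi⟩ := hper.exists_mem_Ico₀ (by exact_mod_cast hd) i
    rw [hyi]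
    exact h y (by simpa using hy)
  obtain ⟨i₀, hi₀⟩ := hmin (fun i => (i + Q (p i)) * n - 2 * d * p i) (by
    intro i; simp only [hpd, hshift q Q hq hqd hQ]; ring)
  obtain ⟨j₀, hj₀⟩ := hmin (fun j => (P (q j) + j) * n - 2 * d * q j) (by
    intro i; simp only [hqd, hshift p P hp hpd hP]; ring)
  rcases le_total ((i₀ + Q (p i₀)) * n - 2 * d * p i₀) ((P (q j₀) + j₀) * n - 2 * d * q j₀)
    with h | h
  · left
    have h1 := hQ (p i₀)
    have h2 := hP (q (Q (p i₀)))
    have h3 := h.trans (hj₀ (Q (p i₀)))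
    refine ⟨i₀, P (q (Q (p i₀))) - 1, Q (p i₀), ?_, lt_of_le_of_ne h2.2 (hne _ _),
      lt_of_le_of_ne h1.2 (hne _ _).symm, by linarith⟩
    have := hp.lt_iff_lt.mp (h1.1.trans h2.1)
    omega
  · right
    have h1 := hP (q j₀)
    have h2 := hQ (p (P (q j₀)))
    have h3 := h.trans (hi₀ (P (q j₀)))
    refine ⟨j₀, Q (p (P (q j₀))) - 1, P (q j₀), ?_, lt_of_le_of_ne h2.2 (hne _ _).symm,
      lt_of_le_of_ne h1.2 (hne _ _), by linarith⟩
    have := hq.lt_iff_lt.mp (h1.1.trans h2.1)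
    omega

/-! ### Cuts along the classes -/

lemma ncard_pair_le_two {α : Type*} (a b : α) : ({a, b} : Set α).ncard ≤ 2 :=
  (Set.ncard_insert_le _ _).trans (by simp)

/-- A `d`-periodic enumeration `x` of the vertices of the chosen paths, together with the partition
of the vertices into `d` classes by the residue of `ρ` modulo `d`. The vertex `x t` lies in class
`t % d`, each edge stays within a class or joins consecutive `x t`, and `c` counts vertices: the
classes with indices `i, …, i + L - 1` modulo `d` have `c (i + L) - c i` vertices in total. -/
structure PathSystem [Fintype V] (G : SimpleGraph V) (d : ℕ) (x : ℤ → V) (ρ : V → ℤ)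
    (c : ℤ → ℤ) : Prop where
  pos : 0 < d
  periodic : ∀ t, x (t + d) = x t
  index : ∀ t, ρ (x t) = t % d
  edge : ∀ u v, G.Adj u v → ρ u = ρ v ∨
    ∃ t, (u = x t ∧ v = x (t + 1)) ∨ (v = x t ∧ u = x (t + 1))
  count : ∀ i L : ℤ, 0 ≤ L → L ≤ d →
    c (i + L) - c i = (Finset.univ.filter fun v => (ρ v - i) % d < L).card

namespace PathSystem

variable [Fintype V] {G : SimpleGraph V} {d : ℕ} {x : ℤ → V} {ρ : V → ℤ} {c : ℤ → ℤ}

lemma offset (h : PathSystem G d x ρ c) (i σ : ℤ) (h0 : 0 ≤ σ) (h1 : σ < d) :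
    (ρ (x (i + σ)) - i) % d = σ := by
  rw [h.index, Int.emod_sub_emod, add_sub_cancel_left, Int.emod_eq_of_lt h0 h1]

/-- An edge of the chosen paths, located by its offset `σ` from `i`. -/
lemma exists_offset (h : PathSystem G d x ρ c) (i t : ℤ) :
    ∃ σ : ℤ, 0 ≤ σ ∧ σ < d ∧ x t = x (i + σ) ∧ x (t + 1) = x (i + σ + 1) := by
  have hd : (0 : ℤ) < d := by exact_mod_cast h.pos
  have hper : Function.Periodic x (d : ℤ) := h.periodic
  have key : ∀ t' : ℤ, x (t' + ((t - i) / d) * d) = x t' := hper.int_mul _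
  have hdiv := Int.mul_ediv_add_emod (t - i) d
  refine ⟨(t - i) % d, Int.emod_nonneg _ hd.ne', Int.emod_lt_of_pos _ hd, ?_, ?_⟩
  · rw [← key (i + (t - i) % d)]; congr 1; linarith
  · rw [← key (i + (t - i) % d + 1)]; congr 1; linarith

lemma count_period (h : PathSystem G d x ρ c) (i : ℤ) : c (i + d) = c i + Fintype.card V := by
  have hd : (0 : ℤ) < d := by exact_mod_cast h.pos
  have h1 := h.count i d hd.le le_rfl
  rw [Finset.filter_true_of_mem (fun v _ => Int.emod_lt_of_pos _ hd), Finset.card_univ] at h1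
  linarith

lemma strictMono (h : PathSystem G d x ρ c) : StrictMono c := by
  have hd : (0 : ℤ) < d := by exact_mod_cast h.pos
  refine strictMono_int_of_lt_succ fun i => ?_
  have h1 := h.count i 1 (by omega) (by omega)
  have h2 : 0 < (Finset.univ.filter fun v => (ρ v - i) % d < 1).card := by
    refine Finset.card_pos.mpr ⟨x i, ?_⟩
    have := h.offset i 0 le_rfl hd
    rw [add_zero] at this
    simp [this]
  omega

/-- If `m` is the size of a union of cyclically consecutive classes, this union can be cut off
by removing at most two edges. -/
lemma exists_exact_cut (h : PathSystem G d x ρ c) (m : ℕ) (hm : 1 ≤ m)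
    (hmn : m ≤ Fintype.card V) (i j : ℤ) (hij : c j = c i + m) :
    ∃ B : Finset V, B.card = m ∧ cutWidth3 G B Bᶜ ∅ ≤ 2 := by
  have hmono := h.strictMono
  have h1 : i < j := hmono.lt_iff_lt.mp (by omega)
  have h2 : j ≤ i + d := hmono.le_iff_le.mp (by rw [h.count_period]; omega)
  refine ⟨Finset.univ.filter fun v => (ρ v - i) % d < j - i, ?_, ?_⟩
  · have h3 := h.count i (j - i) (by omega) (by omega)
    rw [add_sub_cancel] at h3
    omega
  · have hsub : {e : Sym2 V | ∃ u v, G.Adj u v ∧ e = s(u, v) ∧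
        ¬ ((u ∈ Finset.univ.filter (fun v => (ρ v - i) % d < j - i) ∧
            v ∈ Finset.univ.filter (fun v => (ρ v - i) % d < j - i)) ∨
          (u ∈ (Finset.univ.filter (fun v => (ρ v - i) % d < j - i))ᶜ ∧
            v ∈ (Finset.univ.filter (fun v => (ρ v - i) % d < j - i))ᶜ) ∨
          (u ∈ (∅ : Finset V) ∧ v ∈ (∅ : Finset V)))} ⊆
        ({s(x (i - 1), x i), s(x (j - 1), x j)} : Set (Sym2 V)) := by
      rintro e ⟨u, v, huv, rfl, hcut⟩
      simp only [Finset.mem_filter, Finset.mem_univ, true_and, Finset.mem_compl,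
        Finset.notMem_empty, false_and, or_false] at hcut
      have key : ∀ t, ¬ (((ρ (x t) - i) % d < j - i ↔ (ρ (x (t + 1)) - i) % d < j - i)) →
          s(x t, x (t + 1)) ∈ ({s(x (i - 1), x i), s(x (j - 1), x j)} : Set (Sym2 V)) := by
        intro t ht
        obtain ⟨σ, h0, hσ, e1, e2⟩ := h.exists_offset i t
        rw [e1, e2] at ht ⊢
        rw [h.offset i σ h0 hσ] at ht
        by_cases hσd : σ + 1 = d
        · left
          rw [show i + σ = i - 1 + d by omega, h.periodic, show i - 1 + d + 1 = i + d by ring,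
            h.periodic]
        · rw [add_assoc, h.offset i (σ + 1) (by omega) (by omega)] at ht
          right
          have : i + σ = j - 1 := by omega
          rw [this, sub_add_cancel]; rfl
      rcases h.edge u v huv with heq | ⟨t, ⟨rfl, rfl⟩ | ⟨rfl, rfl⟩⟩
      · rw [heq] at hcut; tauto
      · exact key t (by tauto)
      · rw [show s(x (t + 1), x t) = s(x t, x (t + 1)) from Sym2.eq_swap]
        exact key t (by tauto)
    exact (Set.ncard_le_ncard hsub (Set.toFinite _)).trans (ncard_pair_le_two _ _)

set_option maxHeartbeats 800000 in
/-- If the run of boundaries `c i, …, c k` followed by the gap up to `c j - m` has density at least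
`2 d / n`, take for `Z` the classes `i, …, k - 1` together with `x k`, and for `B` the classes from
there up to `j - 1`, minus an approximately cut off part `D` of class `j - 1`. The size of `D` may
be anything between `M - |Z|` and `M = c j - m - c i`, and `M / |Z|` is at most `n / (2 d)`, so
`n / (2 d)` rounds of halving are more than enough; they cut at most `n / (2 d) * Δ` edges. -/
lemma exists_dense_cut (h : PathSystem G d x ρ c) (hF : G.IsAcyclic) (m : ℕ)
    (hmn : m ≤ Fintype.card V) (i k j : ℤ) (hik : i ≤ k) (h1 : c k < c j - m)
    (h2 : c (j - 1) - m < c i)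
    (h3 : 2 * d * (c j - m - c i) ≤ (k + 1 - i) * (Fintype.card V : ℤ)) :
    ∃ B W Z : Finset V, Disjoint B W ∧ Disjoint B Z ∧ Disjoint W Z ∧ B ∪ W ∪ Z = Finset.univ ∧
      B.card ≤ m ∧ m ≤ B.card + Z.card ∧ 0 < Z.card ∧ 2 * Z.card ≤ Fintype.card V ∧
      cutWidth3 G B W Z * d ≤ 2 * maxDeg G * Fintype.card V ∧
      2 * d * Z.card ≤ (Z.filter fun v => ∃ t, x t = v).card * Fintype.card V := by
  have hmono := h.strictMono
  have hd := h.pos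
  set n := Fintype.card V with hn
  obtain ⟨L, hL⟩ : ∃ L, L = j - i := ⟨_, rfl⟩
  obtain ⟨K, hK⟩ : ∃ K, K = k - i := ⟨_, rfl⟩
  have hKL : K < L := by
    have := hmono.lt_iff_lt.mp (show c k < c j by omega)
    omega
  have hLd : L ≤ d := by
    have := hmono.lt_iff_lt.mp (show c (j - 1) < c (i + d) by rw [h.count_period]; omega)
    omega
  have hcj := h.count i L (by omega) hLd
  have hcj1 := h.count i (L - 1) (by omega) (by omega)
  have hck := h.count i K (by omega) (by omega)
  rw [show i + L = j by omega] at hcj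
  rw [show i + (L - 1) = j - 1 by omega] at hcj1
  rw [show i + K = k by omega] at hck
  let s : V → ℤ := fun v => (ρ v - i) % d
  have hs0 : ∀ v, 0 ≤ s v := fun v => Int.emod_nonneg _ (by omega)
  have hsd : ∀ v, s v < d := fun v => Int.emod_lt_of_pos _ (by omega)
  have hsx : ∀ σ : ℤ, 0 ≤ σ → σ < d → s (x (i + σ)) = σ := h.offset i
  have hsk : s (x k) = K := by
    rw [show k = i + K by omega]; exact hsx K (by omega) (by omega)
  let U : Finset V := Finset.univ.filter fun v => s v < L
  let U' : Finset V := Finset.univ.filter fun v => s v < L - 1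
  let U₀ : Finset V := Finset.univ.filter fun v => s v < K
  change c j - c i = U.card at hcj
  change c (j - 1) - c i = U'.card at hcj1
  change c k - c i = U₀.card at hck
  let Z : Finset V := insert (x k) U₀
  let S : Finset V := Finset.univ.filter fun v => s v = L - 1 ∧ v ≠ x k
  have hmU : ∀ v, v ∈ U ↔ s v < L := by simp [U]
  have hmZ : ∀ v, v ∈ Z ↔ v = x k ∨ s v < K := by simp [Z, U₀]
  have hmS : ∀ v, v ∈ S ↔ s v = L - 1 ∧ v ≠ x k := by simp [S]
  have hZcard : Z.card = U₀.card + 1 := Finset.card_insert_of_notMem (by simp [U₀, hsk])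
  have hScard : U.card ≤ S.card + U'.card + 1 := by
    have hsub : U ⊆ (S ∪ U') ∪ {x k} := by
      intro v hv
      rw [hmU] at hv
      simp only [Finset.mem_union, hmS, U', Finset.mem_filter, Finset.mem_univ, true_and,
        Finset.mem_singleton]
      by_cases hvk : v = x k
      · exact Or.inr hvk
      · by_cases hvs : s v = L - 1
        · exact Or.inl (Or.inl ⟨hvs, hvk⟩)
        · exact Or.inl (Or.inr (by omega))
    calc U.card ≤ _ := Finset.card_le_card hsub
      _ ≤ (S ∪ U').card + 1 := Finset.card_union_le _ _
      _ ≤ _ := by have := Finset.card_union_le S U'; omega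
  obtain ⟨M, hM⟩ : ∃ M : ℕ, (M : ℤ) = c j - m - c i :=
    ⟨(c j - m - c i).toNat, Int.toNat_of_nonneg (by have := hmono.monotone hik; omega)⟩
  obtain ⟨a, ha⟩ : ∃ a : ℕ, (a : ℤ) = k + 1 - i :=
    ⟨(k + 1 - i).toNat, Int.toNat_of_nonneg (by omega)⟩
  rw [← hM, ← ha] at h3
  have h3' : 2 * d * M ≤ a * n := by exact_mod_cast h3
  -- the vertices `x i, …, x k` of `Z`
  have haZ : a ≤ (Z.filter fun v => ∃ t, x t = v).card := by
    have himg : (Finset.range a).image (fun t : ℕ => x (i + t)) ⊆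
        Z.filter fun v => ∃ t, x t = v := by
      intro v hv
      obtain ⟨t, ht, rfl⟩ := Finset.mem_image.mp hv
      rw [Finset.mem_range] at ht
      rw [Finset.mem_filter, hmZ]
      refine ⟨?_, _, rfl⟩
      by_cases htK : (t : ℤ) = K
      · left; rw [htK]; congr 1; omega
      · right; rw [hsx t (by omega) (by omega)]; omega
    have hinj : Set.InjOn (fun t : ℕ => x (i + t)) (Finset.range a) := by
      intro t ht t' ht' heq
      simp only [Finset.coe_range, Set.mem_Iio] at ht ht' heq
      have e1 := hsx t (by omega) (by omega)
      have e2 := hsx t' (by omega) (by omega)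
      rw [heq] at e1
      omega
    calc a = ((Finset.range a).image (fun t : ℕ => x (i + t))).card := by
          rw [Finset.card_image_of_injOn hinj, Finset.card_range]
      _ ≤ _ := Finset.card_le_card himg
  have haZ' : a ≤ Z.card := haZ.trans (Finset.card_filter_le _ _)
  have hZM : Z.card ≤ M := by omega
  have ha1 : 1 ≤ a := by omega
  have had : a ≤ d := by omega
  have hZn : 2 * d * Z.card ≤ a * n := (Nat.mul_le_mul_left _ hZM).trans h3'
  have hdn : 2 * d ≤ n := by
    have h4 : a * (2 * d) ≤ a * n := by
      have := Nat.mul_le_mul_left (2 * d) haZ'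
      linarith
    exact Nat.le_of_mul_le_mul_left h4 ha1
  have hZhalf : 2 * Z.card ≤ n := by
    have h4 : d * (2 * Z.card) ≤ d * n := by
      have := Nat.mul_le_mul_right n had
      linarith
    exact Nat.le_of_mul_le_mul_left h4 hd
  obtain ⟨r, hr⟩ : ∃ r, r = n / (2 * d) := ⟨_, rfl⟩
  have hr1 : r * (2 * d) ≤ n := by rw [hr]; exact Nat.div_mul_le_self _ _
  have hr2 : n ≤ 2 ^ r * (2 * d) := by
    have h4 : n < (2 * d) * (r + 1) := by
      rw [hr]; exact Nat.lt_mul_div_succ n (by omega)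
    have h5 : r + 1 ≤ 2 ^ r := Nat.lt_two_pow_self
    have := Nat.mul_le_mul_left (2 * d) h5
    linarith
  obtain ⟨D, hDS, hDM, hDr, hDc⟩ := exists_approx_cut G hF r S M (by omega)
  have hDa : M - D.card ≤ a := by
    by_contra! hlt
    have e1 : 2 ^ r * (a + 1) ≤ M := (Nat.mul_le_mul_left _ hlt).trans hDr
    have e2 := Nat.mul_le_mul_left (2 * d) e1
    have e3 := Nat.mul_le_mul_left a hr2
    have e4 : 0 < 2 ^ r * (2 * d) := by positivity
    linarith
  have hmD : ∀ v ∈ D, s v = L - 1 ∧ v ≠ x k := fun v hv => (hmS v).1 (hDS hv)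
  have hZU : Z ⊆ U := by
    intro v hv
    rw [hmU]
    rcases (hmZ v).1 hv with rfl | hv <;> omega
  have hDZU : D ⊆ U \ Z := by
    intro v hv
    have := hmD v hv
    rw [Finset.mem_sdiff, hmU, hmZ]
    refine ⟨by omega, ?_⟩
    rintro (hk | hk)
    · exact this.2 hk
    · omega
  have hmB : ∀ v, v ∈ (U \ Z) \ D ↔ (s v < L ∧ ¬ (v = x k ∨ s v < K)) ∧ v ∉ D := by
    intro v; rw [Finset.mem_sdiff, Finset.mem_sdiff, hmU, hmZ]
  have hmW : ∀ v, v ∈ Uᶜ ∪ D ↔ L ≤ s v ∨ v ∈ D := by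
    intro v; rw [Finset.mem_union, Finset.mem_compl, hmU, not_lt]
  have hBcard : ((U \ Z) \ D).card = U.card - Z.card - D.card := by
    rw [Finset.card_sdiff_of_subset hDZU, Finset.card_sdiff_of_subset hZU]
  have hcards : Z.card + D.card ≤ U.card := by
    have e1 := Finset.card_le_card hDZU
    rw [Finset.card_sdiff_of_subset hZU] at e1
    have e2 := Finset.card_le_card hZU
    omega
  refine ⟨(U \ Z) \ D, Uᶜ ∪ D, Z, ?_, ?_, ?_, ?_, by omega, by omega, by omega, hZhalf, ?_,
    hZn.trans (Nat.mul_le_mul_right _ haZ)⟩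
  · rw [Finset.disjoint_left]
    intro v hv hv'
    rw [hmB] at hv; rw [hmW] at hv'
    rcases hv' with h' | h'
    · omega
    · exact hv.2 h'
  · rw [Finset.disjoint_left]
    intro v hv hv'
    rw [hmB] at hv; rw [hmZ] at hv'
    exact hv.1.2 hv'
  · rw [Finset.disjoint_left]
    intro v hv hv'
    rw [hmW] at hv
    rcases hv with hv | hv
    · have := (hmU v).1 (hZU hv'); omega
    · exact (Finset.mem_sdiff.mp (hDZU hv)).2 hv'
  · ext v
    simp only [Finset.mem_union, Finset.mem_univ, iff_true, Finset.mem_sdiff, Finset.mem_compl]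
    tauto
  · -- besides the edges at `x k` and those between `D` and the rest of its class, only two
    -- path edges can be cut: the one that enters `x i`, and the one that enters or leaves
    -- `x (j - 1)`, depending on whether `x (j - 1)` lies in `D`
    let e' : Sym2 V := if x (j - 1) ∈ D then s(x (j - 2), x (j - 1)) else s(x (j - 1), x j)
    let X : Set (Sym2 V) := (edgesAt G (x k) ∪ edgesBetween G D (S \ D)) ∪ {s(x (i - 1), x i), e'}
    have hsub : {e : Sym2 V | ∃ u v, G.Adj u v ∧ e = s(u, v) ∧
        ¬ ((u ∈ (U \ Z) \ D ∧ v ∈ (U \ Z) \ D) ∨ (u ∈ Uᶜ ∪ D ∧ v ∈ Uᶜ ∪ D) ∨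
          (u ∈ Z ∧ v ∈ Z))} ⊆ X := by
      rintro e ⟨u, v, huv, rfl, hcut⟩
      by_cases huk : u = x k
      · subst huk
        exact Or.inl (Or.inl ⟨v, huv, rfl⟩)
      by_cases hvk : v = x k
      · subst hvk
        exact Or.inl (Or.inl ⟨u, huv.symm, Sym2.eq_swap⟩)
      simp only [hmB, hmW, hmZ, huk, hvk, false_or] at hcut
      rw [not_or, not_or] at hcut
      obtain ⟨hcB, hcW, hcZ⟩ := hcut
      have key : ∀ t, x t ≠ x k → x (t + 1) ≠ x k →
          ¬ (((s (x t) < L ∧ ¬ s (x t) < K) ∧ x t ∉ D) ∧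
              ((s (x (t + 1)) < L ∧ ¬ s (x (t + 1)) < K) ∧ x (t + 1) ∉ D)) →
          ¬ ((L ≤ s (x t) ∨ x t ∈ D) ∧ (L ≤ s (x (t + 1)) ∨ x (t + 1) ∈ D)) →
          ¬ (s (x t) < K ∧ s (x (t + 1)) < K) → s(x t, x (t + 1)) ∈ X := by
        intro t n1 n2 c1 c2 c3
        obtain ⟨σ, h0, hσ, e1, e2⟩ := h.exists_offset i t
        rw [e1, e2] at c1 c2 c3 ⊢
        rw [e1] at n1
        rw [e2] at n2
        right
        by_cases hσd : σ + 1 = d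
        · left
          rw [show i + σ = i - 1 + d by omega, h.periodic, show i - 1 + d + 1 = i + d by ring,
            h.periodic]
        right
        have s1 := hsx σ h0 hσ
        have s2 := hsx (σ + 1) (by omega) (by omega)
        rw [← add_assoc] at s2
        rw [s1, s2] at c1 c2 c3
        have k1 : σ ≠ K := by
          rintro rfl; exact n1 (by congr 1; omega)
        have k2 : σ + 1 ≠ K := by
          intro hk; exact n2 (by congr 1; omega)
        have d1 : x (i + σ) ∈ D → σ = L - 1 := fun hD => by
          have := (hmD _ hD).1; omega
        have d2 : x (i + σ + 1) ∈ D → σ + 1 = L - 1 := fun hD => by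
          have := (hmD _ hD).1; omega
        change s(x (i + σ), x (i + σ + 1)) = e'
        by_cases hσ1 : σ = L - 1
        · have q1 : i + σ = j - 1 := by omega
          have hnD : x (j - 1) ∉ D := by
            intro hD
            rw [q1] at c2
            exact c2 ⟨Or.inr hD, Or.inl (by omega)⟩
          simp only [e', if_neg hnD]
          rw [q1, sub_add_cancel]
        by_cases hσ2 : σ + 1 = L - 1
        · have q1 : i + σ + 1 = j - 1 := by omega
          have hD : x (j - 1) ∈ D := by
            by_contra hD
            rw [q1] at c1
            exact c1 ⟨⟨by omega, fun hD' => hσ1 (d1 hD')⟩, by omega, hD⟩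
          simp only [e', if_pos hD]
          rw [q1, show i + σ = j - 2 by omega]
        · exfalso
          have n1 : x (i + σ) ∉ D := fun hD => hσ1 (d1 hD)
          have n2 : x (i + σ + 1) ∉ D := fun hD => hσ2 (d2 hD)
          simp only [n1, n2, not_false_eq_true, and_true, or_false] at c1 c2
          omega
      rcases h.edge u v huv with heq | ⟨t, ⟨rfl, rfl⟩ | ⟨rfl, rfl⟩⟩
      · left; right
        have hsuv : s u = s v := by simp only [s, heq]
        rw [hsuv] at hcB hcW hcZ
        have hmemD : ∀ w, w ∈ D → s w = L - 1 := fun w hw => (hmD w hw).1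
        by_cases hu : u ∈ D <;> by_cases hv : v ∈ D
        · exact absurd ⟨Or.inr hu, Or.inr hv⟩ hcW
        · exact ⟨u, hu, v, by
            rw [Finset.mem_sdiff, hmS]; exact ⟨⟨hsuv ▸ hmemD u hu, hvk⟩, hv⟩, huv, rfl⟩
        · exact ⟨v, hv, u, by
            rw [Finset.mem_sdiff, hmS]; exact ⟨⟨hsuv.trans (hmemD v hv), huk⟩, hu⟩, huv.symm,
            Sym2.eq_swap⟩
        · simp only [hu, hv, not_false_eq_true, and_true, or_false] at hcB hcW
          omega
      · exact key t huk hvk hcB hcW hcZ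
      · rw [show s(x (t + 1), x t) = s(x t, x (t + 1)) from Sym2.eq_swap]
        exact key t hvk huk (fun h => hcB h.symm) (fun h => hcW h.symm) fun h => hcZ h.symm
    have hX : X.ncard ≤ maxDeg G + r * maxDeg G + 2 :=
      (Set.ncard_union_le _ _).trans (Nat.add_le_add ((Set.ncard_union_le _ _).trans
        (Nat.add_le_add (ncard_edgesAt_le G _) hDc)) (ncard_pair_le_two _ _))
    have hw : cutWidth3 G ((U \ Z) \ D) (Uᶜ ∪ D) Z ≤ maxDeg G + r * maxDeg G + 2 :=
      (Set.ncard_le_ncard hsub (Set.toFinite _)).trans hX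
    rcases Nat.eq_zero_or_pos (maxDeg G) with hΔ | hΔ
    · -- without edges nothing is cut
      have hno : ∀ u v, ¬ G.Adj u v := by
        intro u v huv
        have e1 : Nat.card {y // G.Adj u y} ≤ maxDeg G :=
          Finset.le_sup (f := fun v => Nat.card {u // G.Adj v u}) (Finset.mem_univ u)
        have : Nonempty {y // G.Adj u y} := ⟨⟨v, huv⟩⟩
        have e2 : 0 < Nat.card {y // G.Adj u y} := Nat.card_pos
        omega
      have : cutWidth3 G ((U \ Z) \ D) (Uᶜ ∪ D) Z = 0 := by
        simp [cutWidth3, hno]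
      rw [this]; omega
    · have e1 := Nat.mul_le_mul_right d hw
      have e2 := Nat.mul_le_mul_right (maxDeg G) hr1
      have e3 := Nat.mul_le_mul_right (maxDeg G) hdn
      have e4 : d ≤ d * maxDeg G := Nat.le_mul_of_pos_right d hΔ
      linarith

end PathSystem

/-- The counting function of a path system, as a sum over the vertices `v` of the (signed) number
of indices from `ρ v` up to `i - 1` that are congruent to `ρ v`. -/
lemma exists_count [Fintype V] (d : ℕ) (hd : 0 < d) (ρ : V → ℤ) :
    ∃ c : ℤ → ℤ, ∀ i L : ℤ, 0 ≤ L → L ≤ d →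
      c (i + L) - c i = (Finset.univ.filter fun v => (ρ v - i) % d < L).card := by
  have hd' : (0 : ℤ) < d := by exact_mod_cast hd
  refine ⟨fun i => ∑ v, (i - ρ v + d - 1) / d, fun i L h0 h1 => ?_⟩
  rw [← Finset.sum_sub_distrib, Finset.card_filter]
  push_cast
  refine Finset.sum_congr rfl fun v _ => ?_
  have e := Int.mul_ediv_add_emod (ρ v - i) d
  have e0 := Int.emod_nonneg (ρ v - i) hd'.ne'
  have e1 := Int.emod_lt_of_pos (ρ v - i) hd'
  set q := (ρ v - i) / d
  set s := (ρ v - i) % d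
  have f1 : (i - ρ v + d - 1) / d = -q := by
    rw [Int.ediv_eq_iff_of_pos hd']
    constructor <;> nlinarith
  rw [f1]
  split_ifs with hlt
  · have f2 : (i + L - ρ v + d - 1) / d = -q + 1 := by
      rw [Int.ediv_eq_iff_of_pos hd']
      constructor <;> nlinarith
    rw [f2]; ring
  · have f2 : (i + L - ρ v + d - 1) / d = -q := by
      rw [Int.ediv_eq_iff_of_pos hd']
      constructor <;> nlinarith
    rw [f2]; ring

lemma cutWidth3_swap (G : SimpleGraph V) (B W Z : Finset V) :
    cutWidth3 G B W Z = cutWidth3 G W B Z := by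
  unfold cutWidth3
  congr! 8
  tauto

end MinBisection

/-! ### Doubling the relative diameter -/

/-- For every forest `G` on `n` vertices and every integer `1 ≤ m ≤ n`,
the vertex set of `G` can be partitioned into `B`, `W`, `Z` such that either
(1) `|B| = m`, `Z = ∅` and `e_G(B,W,Z) ≤ 2`, or
(2) `|B| ≤ m ≤ |B| + |Z|`, `0 < |Z| ≤ n/2`, `e_G(B,W,Z) ≤ 2 Δ(G)/diam*(G)`, and
`diam*(G[Z]) ≥ 2 diam*(G)`. -/
theorem MinBisection.double_diamStar {V : Type*} [Fintype V] (G : SimpleGraph V)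
    (hF : G.IsAcyclic) (m : ℕ) (hm1 : 1 ≤ m) (hmn : m ≤ Fintype.card V) :
    ∃ B W Z : Finset V, Disjoint B W ∧ Disjoint B Z ∧ Disjoint W Z ∧
      B ∪ W ∪ Z = Finset.univ ∧
      ((B.card = m ∧ Z = ∅ ∧ cutWidth3 G B W Z ≤ 2) ∨
       (B.card ≤ m ∧ m ≤ B.card + Z.card ∧ 0 < Z.card ∧
        (Z.card : ℝ) ≤ (Fintype.card V : ℝ) / 2 ∧
        (cutWidth3 G B W Z : ℝ) ≤ 2 * (maxDeg G : ℝ) / forestDiamStar G ∧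
        2 * forestDiamStar G ≤ forestDiamStar (G.induce (Z : Set V)))) := by
  classical
  let _ : Fintype G.ConnectedComponent := Fintype.ofFinite _
  obtain ⟨v₀⟩ : Nonempty V := Fintype.card_pos_iff.mp (by omega)
  have : Nonempty V := ⟨v₀⟩
  obtain ⟨d, x, ρ, hd, hdsum, hper, hidx, hedge, hind⟩ := exists_pathSystem G hF
  obtain ⟨c, hc⟩ := exists_count d hd ρ
  have hP : PathSystem G d x ρ c := ⟨hd, hper, hidx, hedge, hc⟩
  have hn : (0 : ℝ) < Fintype.card V := by exact_mod_cast (show 0 < Fintype.card V by omega)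
  have hdR : (0 : ℝ) < d := by exact_mod_cast hd
  have hdiam : forestDiamStar G = d / Fintype.card V := by
    unfold forestDiamStar
    rw [hdsum]; push_cast; rfl
  by_cases hex : ∃ i j, c i = c j - m
  · obtain ⟨i, j, hij⟩ := hex
    obtain ⟨B, hB, hw⟩ := hP.exists_exact_cut m hm1 hmn i j (by omega)
    exact ⟨B, Bᶜ, ∅, disjoint_compl_right, by simp, by simp, by simp, Or.inl ⟨hB, rfl, hw⟩⟩
  push Not at hex
  -- the real-valued estimates from the integer ones
  have finish : ∀ B W Z : Finset V, Disjoint B W → Disjoint B Z → Disjoint W Z →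
      B ∪ W ∪ Z = Finset.univ → B.card ≤ m → m ≤ B.card + Z.card → 0 < Z.card →
      2 * Z.card ≤ Fintype.card V →
      cutWidth3 G B W Z * d ≤ 2 * maxDeg G * Fintype.card V →
      2 * d * Z.card ≤ (Z.filter fun v => ∃ t, x t = v).card * Fintype.card V →
      ∃ B W Z : Finset V, Disjoint B W ∧ Disjoint B Z ∧ Disjoint W Z ∧
      B ∪ W ∪ Z = Finset.univ ∧
      ((B.card = m ∧ Z = ∅ ∧ cutWidth3 G B W Z ≤ 2) ∨
       (B.card ≤ m ∧ m ≤ B.card + Z.card ∧ 0 < Z.card ∧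
        (Z.card : ℝ) ≤ (Fintype.card V : ℝ) / 2 ∧
        (cutWidth3 G B W Z : ℝ) ≤ 2 * (maxDeg G : ℝ) / forestDiamStar G ∧
        2 * forestDiamStar G ≤ forestDiamStar (G.induce (Z : Set V)))) := by
    intro B W Z b1 b2 b3 b4 b5 b6 b7 b8 b9 b10
    refine ⟨B, W, Z, b1, b2, b3, b4, Or.inr ⟨b5, b6, b7, ?_, ?_, ?_⟩⟩
    · have : (2 : ℝ) * Z.card ≤ Fintype.card V := by exact_mod_cast b8
      linarith
    · rw [hdiam, div_div_eq_mul_div, le_div_iff₀ hdR]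
      exact_mod_cast b9
    · let _ : Fintype (G.induce (Z : Set V)).ConnectedComponent := Fintype.ofFinite _
      have e1 := b10.trans (Nat.mul_le_mul_right _ (hind Z))
      have e2 : forestDiamStar (G.induce (Z : Set V)) =
          ((∑ c : (G.induce (Z : Set V)).ConnectedComponent,
            compLongestPathCard (G.induce (Z : Set V)) c : ℕ) : ℝ) / Z.card := by
        unfold forestDiamStar
        push_cast
        simp
      have hZ : (0 : ℝ) < Z.card := by exact_mod_cast b7
      rw [e2, hdiam, ← mul_div_assoc, div_le_div_iff₀ hn hZ]
      exact_mod_cast e1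
  rcases exists_dense_run d (Fintype.card V) hd c (fun i => c i - m) hP.strictMono
    (fun i j hij => by have := hP.strictMono hij; simp only; omega) hP.count_period
    (fun i => by simp only [hP.count_period]; ring) hex with
    ⟨i, k, j, hik, h1, h2, h3⟩ | ⟨i, k, j, hik, h1, h2, h3⟩
  · obtain ⟨B, W, Z, b1, b2, b3, b4, b5, b6, b7, b8, b9, b10⟩ :=
      hP.exists_dense_cut hF m hmn i k j hik h1 h2 h3
    exact finish B W Z b1 b2 b3 b4 b5 b6 b7 b8 b9 b10
  · -- the complementary size `n - m`, with the roles of `B` and `W` exchanged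
    have hcast : ((Fintype.card V - m : ℕ) : ℤ) = Fintype.card V - m := by omega
    have e1 := hP.count_period j
    have e2 := hP.count_period (j - 1)
    rw [show j - 1 + (d : ℤ) = j + d - 1 by ring] at e2
    obtain ⟨B, W, Z, b1, b2, b3, b4, b5, b6, b7, b8, b9, b10⟩ :=
      hP.exists_dense_cut hF (Fintype.card V - m) (by omega) i k (j + d) hik (by omega)
        (by omega) (by
          rw [e1, hcast]
          refine le_trans (le_of_eq ?_) h3
          ring)
    have hcard : B.card + W.card + Z.card = Fintype.card V := by
      rw [← Finset.card_union_of_disjoint b1, ← Finset.card_union_of_disjoint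
        (Finset.disjoint_union_left.mpr ⟨b2, b3⟩), b4, Finset.card_univ]
    exact finish W B Z b1.symm b3 b2 (by rw [Finset.union_comm W B, b4]) (by omega) (by omega)
      b7 b8 (by rw [cutWidth3_swap]; exact b9) b10
end

section
/- For every graph G on n vertices, every tree decomposition (T,X) of G of width t−1, and every integer m with 1 ≤ m ≤ n, there is a cut (B,W) in G with |B| = m and e_G(B,W) ≤ (1/2)·t·Δ(G)·((log₂(1/r(T,X)))² + 9·log₂(1/r(T,X)) + 8), where Δ(G) is the maximum degree of G. -/
/-!
Root the decomposition tree at an end `i₀` of a heaviest path from `i₀` to `j₀`, and let `R` be the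
union of the clusters on this path, so that `r(T, X) = |R| / n`. Let `top v` be the node closest to
the root whose cluster contains `v`; then `R` consists of the vertices with `top v ≤ j₀`. Since
every vertex has degree at most `Δ(G)`, it is enough to bound the number of vertices needed to
cover all edges of the cut (`cutWidth_le`).

*Labelling* (`exists_labelling`). The vertices are ordered along the path, those of `R` first at
each path node. An edge spanning the position of some `ρ ∈ R` has its lower end in `R` and in the
cluster of `top ρ`. Hence one cluster covers all edges across the position of `ρ`.

*Separation* (`sep_one`, `sep_many`). One cluster cuts off a part of any set `S` of a size between
`y / 2` and `y`; with `k` clusters one gets to within `y / 2 ^ k` of a prescribed size `y`.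

*Doubling* (`doubling`). Arrange the vertices of `U` on a cycle in the order of the labels. If some
`x ∈ R` has its `m`-th successor in `R` too, the interval between them is an exact cut covered by
two clusters. Otherwise every element of `R` is shifted by `m` into a gap of `R`. Counting on the
cycle (`circ`) yields an arc `Z` with ends in `R` whose two ends are shifted into the same gap `S`
of `R`, such that `|Z ∩ R| / (|Z| + |S|)` is at least `|U ∩ R| / |U|`. The counting may fail for
`m`, but it then holds for `|U| - m`, because the hulls for one shift avoid the gaps hit by the
other one (`hull_disjoint`); exchanging the sides of the cut allows for using either size. As `S` is
at least as long as `Z`, the density of `R` in `Z` is at least twice its density in `U`. As `S` is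
at most `2 ^ k` times as long as `Z` for `k ≈ log₂ (|U| / |U ∩ R|)`, the interval between `Z` and
`S`, filled up inside `S` by `k` separations, comes to within `|Z|` of the target size.

*Recursion* (`exists_cut`). The missing vertices are taken from `Z`. With
`L = log₂ (|U| / |U ∩ R|)`, a round costs at most `L + 4` clusters and lowers `L` by at least one,
and the last round costs two clusters. Since
`(L + 4) + ((L - 1) ^ 2 + 9 * (L - 1) + 8) / 2 = (L ^ 2 + 9 * L + 8) / 2`,
the stated bound follows by induction.
-/

open scoped Classical

namespace MinBisection

/-! ### Counting on a cycle -/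

/-- The number of steps from `y` back along the cycle `ZMod n` to the nearest element of `R`
(`0` if `y ∈ R`). -/
noncomputable def backDist {n : ℕ} (R : Finset (ZMod n)) (y : ZMod n) : ℕ :=
  sInf {k : ℕ | y - (k : ZMod n) ∈ R}

/-- The last element of `R` at or before `y` on the cycle `ZMod n`. -/
noncomputable def pred {n : ℕ} (R : Finset (ZMod n)) (y : ZMod n) : ZMod n :=
  y - (backDist R y : ZMod n)

/-- The number of elements strictly between `ρ` and the next element of `R` on the cycle. -/
noncomputable def gapLen {n : ℕ} (R : Finset (ZMod n)) (ρ : ZMod n) : ℕ :=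
  sInf {l : ℕ | ρ + ((l + 1 : ℕ) : ZMod n) ∈ R}

section circ
variable {n : ℕ} {R : Finset (ZMod n)}

lemma pred_mem [NeZero n] (hR : R.Nonempty) (y : ZMod n) : pred R y ∈ R := by
  obtain ⟨x, hx⟩ := hR
  have : ((y - x).val) ∈ {k : ℕ | y - (k : ZMod n) ∈ R} := by simpa using hx
  exact Nat.sInf_mem ⟨_, this⟩

lemma backDist_le {y : ZMod n} {k : ℕ} (h : y - (k : ZMod n) ∈ R) : backDist R y ≤ k :=
  Nat.sInf_le h

lemma sub_notMem {y : ZMod n} {k : ℕ} (h : k < backDist R y) : y - (k : ZMod n) ∉ R :=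
  Nat.notMem_of_lt_sInf h

lemma pred_add (y : ZMod n) : pred R y + (backDist R y : ZMod n) = y := by
  simp [pred]

lemma add_notMem {ρ : ZMod n} {k : ℕ} (h1 : 1 ≤ k) (h : k ≤ gapLen R ρ) :
    ρ + (k : ZMod n) ∉ R := by
  have := Nat.notMem_of_lt_sInf (s := {l : ℕ | ρ + ((l + 1 : ℕ) : ZMod n) ∈ R}) (m := k - 1)
    (by unfold gapLen at h; omega)
  rwa [Set.mem_ofPred_eq, Nat.sub_add_cancel h1] at this

variable [NeZero n]

lemma gapLen_spec {ρ : ZMod n} (hρ : ρ ∈ R) :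
    ρ + ((gapLen R ρ + 1 : ℕ) : ZMod n) ∈ R := by
  have : (n - 1) ∈ {l : ℕ | ρ + ((l + 1 : ℕ) : ZMod n) ∈ R} := by
    have : n - 1 + 1 = n := Nat.succ_pred_eq_of_ne_zero (NeZero.ne n)
    rw [Set.mem_ofPred_eq, this]; simpa using hρ
  exact Nat.sInf_mem ⟨_, this⟩

lemma backDist_add {ρ : ZMod n} (hρ : ρ ∈ R) {k : ℕ} (h : k ≤ gapLen R ρ) :
    backDist R (ρ + (k : ZMod n)) = k := by
  apply le_antisymm
  · apply backDist_le; simpa using hρ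
  · by_contra! hlt
    have h1 := pred_mem ⟨ρ, hρ⟩ (ρ + (k : ZMod n))
    unfold pred at h1
    set b := backDist R (ρ + (k : ZMod n))
    apply add_notMem (R := R) (ρ := ρ) (k := k - b) (by omega) (by omega)
    rw [Nat.cast_sub hlt.le]
    convert h1 using 1; ring

lemma backDist_le_gapLen (hR : R.Nonempty) (y : ZMod n) : backDist R y ≤ gapLen R (pred R y) := by
  by_contra! hlt
  have h1 := gapLen_spec (pred_mem hR y)
  set g := gapLen R (pred R y)
  apply sub_notMem (R := R) (y := y) (k := backDist R y - (g + 1)) (by omega)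
  rw [Nat.cast_sub (by omega)]
  convert h1 using 1; unfold pred; ring

lemma pred_add_nat {ρ : ZMod n} (hρ : ρ ∈ R) {k : ℕ} (h : k ≤ gapLen R ρ) :
    pred R (ρ + (k : ZMod n)) = ρ := by
  unfold pred; rw [backDist_add hρ h]; ring

/-- The union of the hulls: elements `y` for which `y + m` lies weakly between two points
`x + m`, `x' + m` with `x, x' ∈ R` inside one gap of `R`. -/
noncomputable def hullSet (R : Finset (ZMod n)) (m : ℕ) : Finset (ZMod n) :=
  Finset.univ.filter fun y => ∃ x ∈ R, ∃ x' ∈ R,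
    pred R (x + m) = pred R (y + m) ∧ pred R (x' + m) = pred R (y + m) ∧
    backDist R (x + m) ≤ backDist R (y + m) ∧ backDist R (y + m) ≤ backDist R (x' + m)

/-- The union of those gaps of `R` that contain a point `x + m` with `x ∈ R`. -/
noncomputable def hitGaps (R : Finset (ZMod n)) (m : ℕ) : Finset (ZMod n) :=
  Finset.univ.filter fun y => y ∉ R ∧ ∃ x ∈ R, pred R (x + m) = pred R y

/-- The hulls for the shift `m` are disjoint from the gaps hit by `R + m'`, where `m' = -m` on the
cycle: the gap of `R` around an element of a hull lies inside this hull and is translated by `m`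
into a gap of `R`, hence it contains no point of `R - m`. -/
lemma hull_disjoint (hR : R.Nonempty) {m m' : ℕ} (hmm : m + m' = n)
    (hno : ∀ x ∈ R, x + (m : ZMod n) ∉ R) : Disjoint (hullSet R m) (hitGaps R m') := by
  rw [Finset.disjoint_left]
  intro y hy hy'
  simp only [hullSet, hitGaps, Finset.mem_filter, Finset.mem_univ, true_and] at hy hy'
  obtain ⟨x₁, hx₁, x₂, hx₂, hp₁, hp₂, h1, h2⟩ := hy
  obtain ⟨hyR, x, hx, hp⟩ := hy'
  have hm' : (m' : ZMod n) = -(m : ZMod n) := by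
    have : ((m + m' : ℕ) : ZMod n) = 0 := by rw [hmm]; simp
    push_cast at this
    linear_combination this
  set z := x + (m' : ZMod n) with hz
  have hzm : z + (m : ZMod n) = x := by rw [hz, hm']; ring
  have e1 := pred_add (R := R) (y + (m : ZMod n))
  have e2 := pred_add (R := R) (x₁ + (m : ZMod n))
  have e3 := pred_add (R := R) (x₂ + (m : ZMod n))
  have e4 := pred_add (R := R) y
  have e5 := pred_add (R := R) z
  rw [hp₁] at e2
  rw [hp₂] at e3
  rw [hp] at e5
  have k1 : 1 ≤ backDist R (x₁ + (m : ZMod n)) := by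
    by_contra h0
    have h0 : backDist R (x₁ + (m : ZMod n)) = 0 := by omega
    have := pred_mem hR (x₁ + (m : ZMod n))
    rw [pred, h0] at this
    exact hno x₁ hx₁ (by simpa using this)
  have kyR : 1 ≤ backDist R y := by
    by_contra h0
    have h0 : backDist R y = 0 := by omega
    have := pred_mem hR y
    rw [pred, h0] at this
    exact hyR (by simpa using this)
  have m1 : ∀ k, k < backDist R (y + (m : ZMod n)) → y + (m : ZMod n) - (k : ZMod n) ∉ R :=
    fun k => sub_notMem
  have m3 : ∀ k, k < backDist R (x₂ + (m : ZMod n)) → x₂ + (m : ZMod n) - (k : ZMod n) ∉ R :=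
    fun k => sub_notMem
  have m4 : ∀ k : ℕ, y - (k : ZMod n) ∈ R → backDist R y ≤ k := fun k => backDist_le
  have m5 : ∀ k : ℕ, z - (k : ZMod n) ∈ R → backDist R z ≤ k := fun k => backDist_le
  generalize backDist R (y + (m : ZMod n)) = κ at *
  generalize backDist R (x₁ + (m : ZMod n)) = κ₁ at *
  generalize backDist R (x₂ + (m : ZMod n)) = κ₂ at *
  generalize backDist R y = ky at *
  generalize backDist R z = kz at *
  have hky : ky ≤ κ - κ₁ := by
    apply m4
    rw [Nat.cast_sub h1]
    convert hx₁ using 1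
    linear_combination e2 - e1
  rcases le_or_gt kz ky with h | h
  · apply m1 (ky - kz) (by omega)
    rw [Nat.cast_sub h]
    convert hx using 1
    linear_combination hzm - e4 + e5
  · rcases le_or_gt (κ + (kz - ky)) κ₂ with h' | h'
    · apply m3 (κ₂ - (κ + (kz - ky))) (by omega)
      rw [Nat.cast_sub h', Nat.cast_add, Nat.cast_sub h.le]
      convert hx using 1
      linear_combination hzm - e4 + e5 + e1 - e3
    · have := m5 ((kz - ky) - (κ₂ - κ)) (by
        rw [Nat.cast_sub (by omega), Nat.cast_sub h.le, Nat.cast_sub h2]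
        convert hx₂ using 1
        linear_combination e4 - e5 + e3 - e1)
      omega

/-- The counting lemma on the cycle. If no two elements of `R` are at distance exactly `m`, then
for `μ = m` or `μ = n - m` there are an arc `[a, a + db]` with ends in `R` and a gap of `R`, namely
`(a + dρ, a + dρ + s]`, which contains both ends of the arc translated by `μ`; moreover the number
of elements of `R` in the arc is at least `|R| / n` times the total length of arc and gap. -/
lemma circ (hR : R.Nonempty) {m : ℕ} (hm : m ≤ n) (hno : ∀ x ∈ R, x + (m : ZMod n) ∉ R) :
    ∃ μ : ℕ, (μ = m ∨ μ = n - m) ∧ ∃ a ∈ R, ∃ db dρ s : ℕ, db ≤ dρ ∧ dρ + s < n ∧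
      a + (db : ZMod n) ∈ R ∧ a + (dρ : ZMod n) ∈ R ∧
      (∀ k, 1 ≤ k → k ≤ s → a + ((dρ + k : ℕ) : ZMod n) ∉ R) ∧
      a + ((dρ + s + 1 : ℕ) : ZMod n) ∈ R ∧ dρ + 1 ≤ μ ∧ db + μ ≤ dρ + s ∧
      R.card * (s + (db + 1)) ≤ n * (R.filter fun x => (x - a).val ≤ db).card := by
  -- the two disjointness relations add up to `2 * n`, so that one of `m`, `n - m` is good
  have key : ∃ μ : ℕ, (μ = m ∨ μ = n - m) ∧ (hullSet R μ).card + (hitGaps R μ).card ≤ n := by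
    have hno' : ∀ x ∈ R, x + ((n - m : ℕ) : ZMod n) ∉ R := by
      intro x hx hx'
      apply hno _ hx'
      rw [Nat.cast_sub hm]; simpa using hx
    have h1 := Finset.card_union_of_disjoint (hull_disjoint hR (show m + (n - m) = n by omega) hno)
    have h2 := Finset.card_union_of_disjoint (hull_disjoint hR (show (n - m) + m = n by omega) hno')
    have h3 := Finset.card_le_univ (hullSet R m ∪ hitGaps R (n - m))
    have h4 := Finset.card_le_univ (hullSet R (n - m) ∪ hitGaps R m)
    rw [ZMod.card] at h3 h4
    by_cases h : (hullSet R m).card + (hitGaps R m).card ≤ n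
    · exact ⟨m, Or.inl rfl, h⟩
    · exact ⟨n - m, Or.inr rfl, by omega⟩
  obtain ⟨μ, hμ, hcard⟩ := key
  have hμn : μ ≤ n := by omega
  have hnoμ : ∀ x ∈ R, x + (μ : ZMod n) ∉ R := by
    intro x hx hx'
    rcases hμ with rfl | rfl
    · exact hno x hx hx'
    · apply hno _ hx'
      rw [Nat.cast_sub hm]; simpa using hx
  set N : Finset (ZMod n) := R.image (fun x => pred R (x + (μ : ZMod n))) with hN
  have s1 : R.card = ∑ ρ ∈ N, (R.filter fun x => pred R (x + (μ : ZMod n)) = ρ).card :=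
    Finset.card_eq_sum_card_fiberwise fun x hx => Finset.mem_coe.2 (Finset.mem_image_of_mem _ hx)
  have s2 : (hullSet R μ).card =
      ∑ ρ ∈ N, ((hullSet R μ).filter fun x => pred R (x + (μ : ZMod n)) = ρ).card := by
    apply Finset.card_eq_sum_card_fiberwise
    intro y hy
    simp only [hullSet, Finset.coe_filter, Finset.mem_univ, true_and, Set.mem_ofPred_eq] at hy
    obtain ⟨x, hx, x', hx', h1, -⟩ := hy
    exact Finset.mem_coe.2 (Finset.mem_image.2 ⟨x, hx, h1⟩)
  have s3 : (hitGaps R μ).card =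
      ∑ ρ ∈ N, ((hitGaps R μ).filter fun x => pred R x = ρ).card := by
    apply Finset.card_eq_sum_card_fiberwise
    intro y hy
    simp only [hitGaps, Finset.coe_filter, Finset.mem_univ, true_and, Set.mem_ofPred_eq] at hy
    obtain ⟨_, x, hx, h1⟩ := hy
    exact Finset.mem_coe.2 (Finset.mem_image.2 ⟨x, hx, h1⟩)
  -- averaging over the gaps hit by `R + μ`, indexed by the element `ρ` of `R` preceding the gap
  obtain ⟨ρ, hρN, hρ⟩ : ∃ ρ ∈ N,
      R.card * (((hullSet R μ).filter fun x => pred R (x + (μ : ZMod n)) = ρ).card +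
        ((hitGaps R μ).filter fun x => pred R x = ρ).card) ≤
      n * (R.filter fun x => pred R (x + (μ : ZMod n)) = ρ).card := by
    apply Finset.exists_le_of_sum_le (hR.image _)
    rw [← Finset.mul_sum, ← Finset.mul_sum, Finset.sum_add_distrib, ← s1, ← s2, ← s3, mul_comm n]
    exact Nat.mul_le_mul_left _ hcard
  obtain ⟨x₀, hx₀, hx₀ρ⟩ := Finset.mem_image.1 hρN
  have hρR : ρ ∈ R := hx₀ρ ▸ pred_mem hR _
  set F := R.filter fun x => pred R (x + (μ : ZMod n)) = ρ with hF
  have hFne : F.Nonempty := ⟨x₀, by simp [hF, hx₀, hx₀ρ]⟩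
  -- the arc is spanned by the first and the last element of `R` that are shifted into this gap
  obtain ⟨a, haF, ha⟩ := F.exists_min_image (fun x => backDist R (x + (μ : ZMod n))) hFne
  obtain ⟨b, hbF, hb⟩ := F.exists_max_image (fun x => backDist R (x + (μ : ZMod n))) hFne
  obtain ⟨haR, haρ⟩ := Finset.mem_filter.1 haF
  obtain ⟨hbR, hbρ⟩ := Finset.mem_filter.1 hbF
  have ea := pred_add (R := R) (a + (μ : ZMod n))
  have eb := pred_add (R := R) (b + (μ : ZMod n))
  have ga := backDist_le_gapLen hR (b + (μ : ZMod n))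
  rw [haρ] at ea
  rw [hbρ] at eb ga
  have lo1 : 1 ≤ backDist R (a + (μ : ZMod n)) := by
    by_contra h0
    have h0 : backDist R (a + (μ : ZMod n)) = 0 := by omega
    have := pred_mem hR (a + (μ : ZMod n))
    rw [pred, h0] at this
    exact hnoμ a haR (by simpa using this)
  have lohi := ha b hbF
  set lo := backDist R (a + (μ : ZMod n)) with hlo
  set hi := backDist R (b + (μ : ZMod n)) with hhi
  set s := gapLen R ρ with hs
  have gap : ∀ k, 1 ≤ k → k ≤ s → ρ + (k : ZMod n) ∉ R := fun k h1 h2 => add_notMem h1 h2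
  have hihμ : hi ≤ μ := by
    by_contra! h
    apply gap (hi - μ) (by omega) (by omega)
    rw [Nat.cast_sub h.le]
    convert hbR using 1
    linear_combination eb
  have hlast : μ - lo + s < n := by
    by_contra! h
    apply gap (n - μ + lo) (by omega) (by omega)
    rw [Nat.cast_add, Nat.cast_sub hμn]
    convert haR using 1
    simp only [CharP.cast_eq_zero]
    linear_combination ea
  have hw : hi - lo + 1 ≤ ((hullSet R μ).filter fun x => pred R (x + (μ : ZMod n)) = ρ).card := by
    have : hi - lo + 1 = (Finset.Icc lo hi).card := by rw [Nat.card_Icc]; omega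
    rw [this]
    apply Finset.card_le_card_of_injOn (fun k : ℕ => ρ + (k : ZMod n) - (μ : ZMod n))
    · intro k hk
      rw [Finset.coe_Icc, Set.mem_Icc] at hk
      have h1 := pred_add_nat (R := R) hρR (k := k) (by omega)
      have h2 := backDist_add (R := R) hρR (k := k) (by omega)
      simp only [hullSet, Finset.coe_filter, Finset.mem_filter, Finset.mem_univ, true_and,
        Set.mem_ofPred_eq, sub_add_cancel, h1, h2, and_true]
      exact ⟨a, haR, b, hbR, haρ, hbρ, hk.1, hk.2⟩
    · intro k hk k' hk' h
      rw [Finset.coe_Icc, Set.mem_Icc] at hk hk'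
      have h2 := backDist_add (R := R) hρR (k := k) (by omega)
      have h3 := backDist_add (R := R) hρR (k := k') (by omega)
      simp only [sub_left_inj] at h
      rw [← h2, ← h3, h]
  have hg : s ≤ ((hitGaps R μ).filter fun x => pred R x = ρ).card := by
    have : s = (Finset.Icc 1 s).card := by simp
    rw [this]
    apply Finset.card_le_card_of_injOn (fun k : ℕ => ρ + (k : ZMod n))
    · intro k hk
      rw [Finset.coe_Icc, Set.mem_Icc] at hk
      have h1 := pred_add_nat (R := R) hρR (k := k) (by omega)
      simp only [hitGaps, Finset.coe_filter, Finset.mem_filter, Finset.mem_univ, true_and,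
        Set.mem_ofPred_eq, h1, and_true]
      exact ⟨gap k hk.1 hk.2, a, haR, haρ⟩
    · intro k hk k' hk' h
      rw [Finset.coe_Icc, Set.mem_Icc] at hk hk'
      have h2 := backDist_add (R := R) hρR (k := k) (by omega)
      have h3 := backDist_add (R := R) hρR (k := k') (by omega)
      simp only at h
      rw [← h2, ← h3, h]
  have hFcard : F.card ≤ (R.filter fun x => (x - a).val ≤ hi - lo).card := by
    apply Finset.card_le_card
    intro x hx
    obtain ⟨hxR, hxρ⟩ := Finset.mem_filter.1 hx
    have h1 := ha x hx
    have h2 := hb x hx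
    have e := pred_add (R := R) (x + (μ : ZMod n))
    rw [hxρ] at e
    set k := backDist R (x + (μ : ZMod n))
    refine Finset.mem_filter.2 ⟨hxR, ?_⟩
    have : x - a = ((k - lo : ℕ) : ZMod n) := by
      rw [Nat.cast_sub h1]; linear_combination ea - e
    rw [this, ZMod.val_natCast]
    exact (Nat.mod_le _ _).trans (by omega)
  have edρ : a + ((μ - lo : ℕ) : ZMod n) = ρ := by
    rw [Nat.cast_sub (by omega)]; linear_combination -ea
  refine ⟨μ, hμ, a, haR, hi - lo, μ - lo, s, by omega, hlast, ?_, ?_, ?_, ?_, by omega, by omega, ?_⟩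
  · rw [Nat.cast_sub lohi]; convert hbR using 1; linear_combination eb - ea
  · rw [edρ]; exact hρR
  · intro k h1 h2
    rw [Nat.cast_add, ← add_assoc, edρ]
    exact gap k h1 h2
  · rw [add_assoc, Nat.cast_add, ← add_assoc, edρ]
    exact gapLen_spec hρR
  · calc _ ≤ _ := Nat.mul_le_mul_left _ (by rw [add_comm]; exact Nat.add_le_add hw hg)
      _ ≤ _ := hρ
      _ ≤ _ := Nat.mul_le_mul_left _ hFcard
end circ

/-! ### Rooted tree decompositions: separations and the path labelling -/

/-- `C` covers the cut `(B, U \ B)` of `G[U]`: every edge of the cut has an endpoint in `C`. -/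
def Covers {V : Type*} (G : SimpleGraph V) (U B C : Finset V) : Prop :=
  ∀ u ∈ B, ∀ v ∈ U, v ∉ B → G.Adj u v → u ∈ C ∨ v ∈ C

/-- A rooted form of a tree decomposition: `ι` carries the ancestor order (`a ≤ b` means that `a`
lies on the path from the root to `b`), and `top v` is the node of `{i | v ∈ X i}` closest to the
root. For an edge, the tops of its ends are comparable, and the end with the higher top lies in
all clusters between the two tops. -/
structure RootedDecomp {V ι : Type*} [PartialOrder ι] (G : SimpleGraph V) (X : ι → Finset V)
    (top : V → ι) : Prop where
  chain : ∀ ⦃a b c : ι⦄, a ≤ c → b ≤ c → a ≤ b ∨ b ≤ a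
  mem_top : ∀ v, v ∈ X (top v)
  edge : ∀ ⦃u v⦄, G.Adj u v → (top u ≤ top v ∧ ∀ l, top u ≤ l → l ≤ top v → u ∈ X l) ∨
    (top v ≤ top u ∧ ∀ l, top v ≤ l → l ≤ top u → v ∈ X l)

section sep
variable {V ι : Type*} [PartialOrder ι] [Finite ι] {G : SimpleGraph V} {X : ι → Finset V}
  {top : V → ι}

/-- One cluster suffices to cut off a part `Y` of `S` with `y / 2 ≤ |Y| ≤ y`. -/
lemma sep_one (h : RootedDecomp G X top) {root : ι} (hroot : ∀ i, root ≤ i) (S : Finset V)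
    {y : ℕ} (hy : y ≤ S.card) :
    ∃ Y ⊆ S, ∃ j, Y.card ≤ y ∧ y ≤ 2 * Y.card ∧ Covers G S Y (X j) := by
  let below : ι → Finset V := fun j => S.filter fun v => j ≤ top v
  -- `j` is a lowest node below which there are still at least `y` vertices of `S`
  obtain ⟨j, hj⟩ : ∃ j, Maximal (fun j => y ≤ (below j).card) j := by
    apply Set.Finite.exists_maximal (Set.toFinite {j | y ≤ (below j).card})
    refine ⟨root, ?_⟩
    have : below root = S := Finset.filter_true_of_mem fun v _ => hroot _
    simpa [this] using hy
  have hlt : ∀ k, j < k → (below k).card < y := by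
    intro k hk
    by_contra! hc
    exact absurd (hj.2 hc hk.le) (not_le_of_gt hk)
  -- `good` sets are unions of vertex sets below children of `j` and of vertices with top `j`
  let good : Finset V → Prop := fun Y => Y ⊆ below j ∧ Y.card ≤ y ∧
    ∀ v ∈ Y, ∀ v' ∈ S, ∀ k, j < k → k ≤ top v → k ≤ top v' → v' ∈ Y
  obtain ⟨Y, hYm, hYmax⟩ := Finset.exists_max_image ((below j).powerset.filter good) Finset.card
    ⟨∅, by simp [good]⟩
  have hmax : ∀ Y', good Y' → Y'.card ≤ Y.card := fun Y' h' =>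
    hYmax Y' (by simp only [Finset.mem_filter, Finset.mem_powerset]; exact ⟨h'.1, h'⟩)
  obtain ⟨hYb, hYy, hYc⟩ := (Finset.mem_filter.1 hYm).2
  refine ⟨Y, fun v hv => (Finset.mem_filter.1 (hYb hv)).1, j, hYy, ?_, ?_⟩
  · by_contra! hsmall
    have hne : ∃ v ∈ below j, v ∉ Y := by
      by_contra! hall
      have := Finset.card_le_card (show below j ⊆ Y from hall)
      have := hj.1
      omega
    obtain ⟨v, hv, hvY⟩ := hne
    obtain ⟨hvS, hjv⟩ := Finset.mem_filter.1 hv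
    rcases hjv.eq_or_lt with he | hl
    · have hg : good (insert v Y) := by
        refine ⟨Finset.insert_subset hv hYb, ?_, ?_⟩
        · rw [Finset.card_insert_of_notMem hvY]; omega
        · intro w hw v' hv' k hk hkw hkv'
          rcases Finset.mem_insert.1 hw with rfl | hw
          · exact absurd (he ▸ hkw) (not_le_of_gt hk)
          · exact Finset.mem_insert_of_mem (hYc w hw v' hv' k hk hkw hkv')
      have := hmax _ hg
      rw [Finset.card_insert_of_notMem hvY] at this
      omega
    · obtain ⟨k, hk⟩ : ∃ k, Minimal (fun k => j < k ∧ k ≤ top v) k :=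
        Set.Finite.exists_minimal (Set.toFinite {k | j < k ∧ k ≤ top v}) ⟨top v, hl, le_rfl⟩
      obtain ⟨⟨hjk, hkv⟩, hkmin⟩ := hk
      have hclosed : ∀ w ∈ below k, ∀ v' ∈ S, ∀ k', j < k' → k' ≤ top w → k' ≤ top v' →
          v' ∈ below k := by
        intro w hw v' hv' k' hk' hkw hkv'
        refine Finset.mem_filter.2 ⟨hv', ?_⟩
        have hkw' := (Finset.mem_filter.1 hw).2
        rcases h.chain hkw' hkw with h1 | h1
        · exact h1.trans hkv'
        · exact (hkmin ⟨hk', h1.trans hkv⟩ h1).trans hkv'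
      have hsub : below k ⊆ below j := fun w hw =>
        Finset.mem_filter.2 ⟨(Finset.mem_filter.1 hw).1, hjk.le.trans (Finset.mem_filter.1 hw).2⟩
      have h1 := hmax (below k) ⟨hsub, (hlt k hjk).le, hclosed⟩
      have hdisj : Disjoint Y (below k) := by
        rw [Finset.disjoint_left]
        intro w hw hwk
        exact hvY (hYc w hw v hvS k hjk (Finset.mem_filter.1 hwk).2 hkv)
      have h2 := Finset.card_union_of_disjoint hdisj
      have hg : good (Y ∪ below k) := by
        refine ⟨Finset.union_subset hYb hsub, by omega, ?_⟩
        intro w hw v' hv' k' hk' hkw hkv'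
        rcases Finset.mem_union.1 hw with hw | hw
        · exact Finset.mem_union_left _ (hYc w hw v' hv' k' hk' hkw hkv')
        · exact Finset.mem_union_right _ (hclosed w hw v' hv' k' hk' hkw hkv')
      have h3 := hmax _ hg
      have h4 : v ∈ below k := Finset.mem_filter.2 ⟨hvS, hkv⟩
      have := Finset.card_pos.2 ⟨v, h4⟩
      omega
  · intro u hu v hv hvY huv
    have hju := (Finset.mem_filter.1 (hYb hu)).2
    rcases h.edge huv with ⟨h1, h2⟩ | ⟨h1, h2⟩
    · left
      rcases hju.eq_or_lt with he | hl
      · exact he ▸ h.mem_top u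
      · exact absurd (hYc u hu v hv _ hl le_rfl h1) hvY
    · right
      rcases h.chain hju h1 with h3 | h3
      · rcases h3.eq_or_lt with he | hl
        · exact he ▸ h.mem_top v
        · exact absurd (hYc u hu v hv _ hl h1 le_rfl) hvY
      · exact h2 j h3 hju

/-- Iterating `sep_one`: `k` clusters suffice to cut off a part of `S` whose size is at most `y`
and misses `y` by at most `y / 2 ^ k`. -/
lemma sep_many (h : RootedDecomp G X top) {root : ι} (hroot : ∀ i, root ≤ i) {t : ℕ}
    (ht : ∀ i, (X i).card ≤ t) (k : ℕ) : ∀ (S : Finset V) (y : ℕ), y ≤ S.card →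
    ∃ Y ⊆ S, ∃ C : Finset V, C.card ≤ k * t ∧ Y.card ≤ y ∧ 2 ^ k * (y - Y.card) ≤ y ∧
      Covers G S Y C := by
  induction k with
  | zero =>
    intro S y _
    exact ⟨∅, by simp, ∅, by simp, by simp, by simp, by intro u hu; simp at hu⟩
  | succ k ih =>
    intro S y hy
    obtain ⟨Y₁, hY₁, j, h1, h2, h3⟩ := sep_one h hroot S hy
    have hc := Finset.card_sdiff_of_subset hY₁
    obtain ⟨Y₂, hY₂, C, hC, h4, h5, h6⟩ := ih (S \ Y₁) (y - Y₁.card) (by omega)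
    have hd : Disjoint Y₁ Y₂ := Finset.disjoint_of_subset_right hY₂ Finset.disjoint_sdiff
    have hcard := Finset.card_union_of_disjoint hd
    refine ⟨Y₁ ∪ Y₂, Finset.union_subset hY₁ (hY₂.trans Finset.sdiff_subset), X j ∪ C, ?_, ?_, ?_, ?_⟩
    · refine (Finset.card_union_le _ _).trans ?_
      have := ht j
      rw [Nat.succ_mul]; omega
    · omega
    · rw [hcard, ← Nat.sub_sub, pow_succ]
      calc _ = 2 * (2 ^ k * (y - Y₁.card - Y₂.card)) := by ring
        _ ≤ 2 * (y - Y₁.card) := Nat.mul_le_mul_left _ h5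
        _ ≤ y := by omega
    · intro u hu v hv hvY huv
      simp only [Finset.mem_union, not_or] at hu hvY ⊢
      rcases hu with hu | hu
      · have := h3 u hu v hv hvY.1 huv
        tauto
      · have := h6 u hu v (Finset.mem_sdiff.2 ⟨hv, hvY.1⟩) hvY.2 huv
        tauto

/-- The vertex labelling along the path from the root to `j`. Vertices are sorted by the last node
of the path above their top, and at equal nodes the vertices of the path clusters come first. If an
edge spans the label of some `ρ` in a path cluster, then its lower end lies in the cluster at the
top of `ρ`, and itself belongs to a path cluster. -/
lemma exists_labelling [Fintype V] (h : RootedDecomp G X top) (j : ι) :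
    ∃ pos : V → ℕ, Function.Injective pos ∧ ∀ u v ρ, G.Adj u v → top ρ ≤ j →
      pos u ≤ pos ρ → pos ρ ≤ pos v → pos u < pos v → top u ≤ j ∧ u ∈ X (top ρ) := by
  have := Fintype.ofFinite ι
  let M : V → Finset ι := fun v => Finset.univ.filter fun l => l ≤ j ∧ l ≤ top v
  let key : V → ℕ := fun v => 2 * (M v).card + if top v ≤ j then 0 else 1
  let e := Fintype.equivFin V
  let pos : V → ℕ := fun v => key v * Fintype.card V + e v
  have hpos : ∀ u v, pos u ≤ pos v → key u ≤ key v := by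
    intro u v huv
    by_contra! hc
    have h1 : (key v + 1) * Fintype.card V ≤ key u * Fintype.card V := Nat.mul_le_mul_right _ hc
    have h2 := (e v).2
    simp only [pos] at huv
    rw [Nat.succ_mul] at h1
    omega
  have hM : ∀ {u v l}, l ∈ M u → l ∉ M v → (M v).card < (M u).card := by
    intro u v l hlu hlv
    apply Finset.card_lt_card
    simp only [M, Finset.mem_filter, Finset.mem_univ, true_and] at hlu hlv
    refine (Finset.ssubset_iff_of_subset ?_).2 ⟨l, by simpa [M] using hlu, by simpa [M] using hlv⟩
    intro k hk
    simp only [M, Finset.mem_filter, Finset.mem_univ, true_and] at hk ⊢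
    refine ⟨hk.1, ?_⟩
    rcases h.chain hk.1 hlu.1 with h1 | h1
    · exact h1.trans hlu.2
    · exact absurd ⟨hlu.1, h1.trans hk.2⟩ hlv
  have hMtop : ∀ {v}, top v ≤ j → top v ∈ M v := by
    intro v hv; simp [M, hv]
  have hMle : ∀ {v l}, l ∈ M v → l ≤ j ∧ l ≤ top v := by
    intro v l hl; simpa [M] using hl
  refine ⟨pos, ?_, ?_⟩
  · intro u v huv
    have h1 : key u = key v := le_antisymm (hpos _ _ huv.le) (hpos _ _ huv.ge)
    simp only [pos, h1, add_right_inj] at huv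
    exact e.injective (Fin.ext huv)
  · intro u v ρ huv hρ h1 h2 h3
    replace h1 := hpos _ _ h1
    replace h2 := hpos _ _ h2
    simp only [key, if_pos hρ] at h1 h2
    have hρv : top ρ ≤ top v := by
      by_contra hc
      have := hM (hMtop hρ) (fun hm => hc (hMle hm).2)
      split_ifs at h2 <;> omega
    rcases h.edge huv with ⟨h4, h5⟩ | ⟨h4, h5⟩
    · have hu : top u ≤ j := by
        by_contra hu
        rw [if_neg hu] at h1
        have : (M v).card ≤ (M u).card := by
          apply Finset.card_le_card
          intro l hl
          obtain ⟨h6, h7⟩ := hMle hl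
          rcases h.chain h7 h4 with h8 | h8
          · simp [M, h6, h8]
          · exact absurd (h8.trans h6) hu
        split_ifs at h2 <;> omega
      refine ⟨hu, h5 _ ?_ hρv⟩
      by_contra hc
      have := hM (hMtop hu) (fun hm => hc (hMle hm).2)
      rw [if_pos hu] at h1
      omega
    · have h6 : (M v).card ≤ (M u).card := by
        apply Finset.card_le_card
        intro l hl
        obtain ⟨h6, h7⟩ := hMle hl
        simp [M, h6, h7.trans h4]
      have hu : top u ≤ j := by
        by_contra hu
        rw [if_neg hu] at h1
        split_ifs at h2 <;> omega
      refine ⟨hu, ?_⟩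
      have h7 : top u ≤ top ρ := by
        by_contra hc
        have := hM (hMtop hu) (fun hm => hc (hMle hm).2)
        rw [if_pos hu] at h1
        omega
      rw [← le_antisymm h7 (hρv.trans h4)]
      exact h.mem_top u
end sep

/-! ### The doubling step -/

section label
variable {V : Type*}

/-- The position of each element of `U` in the order induced on `U` by the labelling `pos`. -/
lemma exists_rank {pos : V → ℕ} (hpos : Function.Injective pos) (U : Finset V) :
    ∃ rk : V → ℕ, (∀ u ∈ U, rk u < U.card) ∧ (∀ u ∈ U, ∀ v ∈ U, rk u = rk v → u = v) ∧
      ∀ u ∈ U, ∀ v ∈ U, rk u ≤ rk v → pos u ≤ pos v := by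
  have hlt : ∀ u ∈ U, ∀ v, pos u < pos v →
      (U.filter fun w => pos w < pos u).card < (U.filter fun w => pos w < pos v).card := by
    intro u hu v huv
    apply Finset.card_lt_card
    refine (Finset.ssubset_iff_of_subset ?_).2 ⟨u, by simp [hu, huv], by simp⟩
    intro w hw
    simp only [Finset.mem_filter] at hw ⊢
    exact ⟨hw.1, hw.2.trans huv⟩
  refine ⟨fun u => (U.filter fun w => pos w < pos u).card, ?_, ?_, ?_⟩
  · intro u hu
    apply Finset.card_lt_card
    exact (Finset.ssubset_iff_of_subset (Finset.filter_subset _ _)).2 ⟨u, hu, by simp⟩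
  · intro u hu v hv huv
    apply hpos
    rcases lt_trichotomy (pos u) (pos v) with h | h | h
    · exact absurd huv (hlt u hu v h).ne
    · exact h
    · exact absurd huv (hlt v hv u h).ne'
  · intro u hu v hv huv
    by_contra! h
    exact absurd huv (not_le_of_gt (hlt v hv u h))

/-- Cyclic distances from a point `a₀` of `U` in a given linear order `rk` of `U`: they form a
bijection from `U` to `{0, …, |U| - 1}`. -/
lemma exists_cyclic {U : Finset V} {rk : V → ℕ} (hlt : ∀ u ∈ U, rk u < U.card)
    (hinj : ∀ u ∈ U, ∀ v ∈ U, rk u = rk v → u = v) {a₀ : V} (ha₀ : a₀ ∈ U) :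
    ∃ d : V → ℕ, (∀ u, d u = ((rk u : ZMod U.card) - (rk a₀ : ZMod U.card)).val) ∧
      (∀ u ∈ U, d u < U.card ∧ rk u < U.card ∧ ((rk a₀ ≤ rk u ∧ d u + rk a₀ = rk u) ∨
        (rk u < rk a₀ ∧ d u + rk a₀ = rk u + U.card))) ∧
      ∀ I ⊆ Finset.range U.card, (U.filter fun u => d u ∈ I).card = I.card := by
  have hn : NeZero U.card := ⟨(Finset.card_pos.2 ⟨a₀, ha₀⟩).ne'⟩
  have ha := hlt _ ha₀
  refine ⟨_, fun u => rfl, ?_, ?_⟩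
  · intro u hu
    have := hlt u hu
    refine ⟨ZMod.val_lt _, this, ?_⟩
    rcases le_or_gt (rk a₀) (rk u) with h | h
    · left
      rw [← Nat.cast_sub h, ZMod.val_natCast, Nat.mod_eq_of_lt (by omega)]
      omega
    · right
      have e : ((rk u : ZMod U.card) - (rk a₀ : ZMod U.card)) =
          ((rk u + U.card - rk a₀ : ℕ) : ZMod U.card) := by
        rw [Nat.cast_sub (by omega)]; simp
      rw [e, ZMod.val_natCast, Nat.mod_eq_of_lt (by omega)]
      omega
  · set d : V → ℕ := fun u => ((rk u : ZMod U.card) - (rk a₀ : ZMod U.card)).val with hd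
    have dinj : Set.InjOn d U := by
      intro u hu v hv huv
      apply hinj u hu v hv
      have h1 : (rk u : ZMod U.card) = rk v := by
        have := ZMod.val_injective _ huv
        simpa using this
      have h2 := congrArg ZMod.val h1
      rwa [ZMod.val_natCast, ZMod.val_natCast, Nat.mod_eq_of_lt (hlt u hu),
        Nat.mod_eq_of_lt (hlt v hv)] at h2
    have himg : U.image d = Finset.range U.card := by
      apply Finset.eq_of_subset_of_card_le
      · intro k hk
        obtain ⟨u, _, rfl⟩ := Finset.mem_image.1 hk
        exact Finset.mem_range.2 (ZMod.val_lt _)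
      · rw [Finset.card_image_of_injOn dinj, Finset.card_range]
    intro I hI
    rw [← Finset.card_image_of_injOn (dinj.mono (Finset.coe_subset.2 (Finset.filter_subset _ _)))]
    congr 1
    ext k
    simp only [Finset.mem_image, Finset.mem_filter]
    constructor
    · rintro ⟨u, ⟨_, h⟩, rfl⟩; exact h
    · intro hk
      have := hI hk
      rw [← himg] at this
      obtain ⟨u, hu, rfl⟩ := Finset.mem_image.1 this
      exact ⟨u, ⟨hu, hk⟩, rfl⟩

/-- The interval of the linear order between `u` and `v` is also a cyclic interval, if the origin `a`
of the cyclic distances `d` does not lie in it. -/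
lemma cyclic_interval {n ru rv ra rx du dv dx : ℕ} (hv : rv < n) (hx : rx < n) (h : ru < rv)
    (cu : (ra ≤ ru ∧ du + ra = ru) ∨ (ru < ra ∧ du + ra = ru + n))
    (cv : (ra ≤ rv ∧ dv + ra = rv) ∨ (rv < ra ∧ dv + ra = rv + n))
    (cx : (ra ≤ rx ∧ dx + ra = rx) ∨ (rx < ra ∧ dx + ra = rx + n))
    (na : ¬ (ru ≤ ra ∧ ra ≤ rv)) : du < dv ∧ (du ≤ dx → dx ≤ dv → ru ≤ rx ∧ rx ≤ rv) := by
  omega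

set_option maxHeartbeats 1000000 in
/-- The doubling step. Either `G[U]` has an exact cut of size `m` covered by two clusters, or, up
to exchanging `m` and `|U| - m`, there is a partition of `U` into `B`, `Z` and a rest such that `B`
can be completed to the required size inside `Z`, few clusters cover the edges between the parts,
and `R` is at least twice as dense in `Z` as in `U`. -/
lemma doubling {G : SimpleGraph V} {R : Finset V} {pos : V → ℕ} (hpos : Function.Injective pos)
    {C : V → Finset V} {t : ℕ} (hC : ∀ v, (C v).card ≤ t)
    (hE : ∀ u v ρ, G.Adj u v → ρ ∈ R → pos u ≤ pos ρ → pos ρ ≤ pos v → pos u < pos v →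
      u ∈ R ∧ u ∈ C ρ)
    (hsep : ∀ (k : ℕ) (S : Finset V) (y : ℕ), y ≤ S.card → ∃ Y ⊆ S, ∃ C' : Finset V,
      C'.card ≤ k * t ∧ Y.card ≤ y ∧ 2 ^ k * (y - Y.card) ≤ y ∧ Covers G S Y C')
    {U : Finset V} (hU : (U ∩ R).Nonempty) {m : ℕ} (hm : m ≤ U.card) {k : ℕ}
    (hk : U.card ≤ 2 ^ k * (U ∩ R).card) :
    (∃ B ⊆ U, B.card = m ∧ ∃ D : Finset V, D.card ≤ 2 * t ∧ Covers G U B D) ∨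
    ∃ μ : ℕ, (μ = m ∨ μ = U.card - m) ∧ ∃ B ⊆ U, ∃ Z ⊆ U, Disjoint B Z ∧ B.card ≤ μ ∧
      μ ≤ B.card + Z.card ∧ Z.card < U.card ∧ (Z ∩ R).Nonempty ∧
      2 * (U ∩ R).card * Z.card ≤ U.card * (Z ∩ R).card ∧
      ∃ D : Finset V, D.card ≤ (3 + k) * t ∧ ∀ u ∈ U, ∀ v ∈ U, G.Adj u v →
        u ∈ D ∨ v ∈ D ∨ ((u ∈ B ↔ v ∈ B) ∧ (u ∈ Z ↔ v ∈ Z)) := by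
  obtain ⟨rk, rlt, rinj, rmono⟩ := exists_rank hpos U
  have hE' : ∀ u ∈ U, ∀ v ∈ U, ∀ ρ ∈ U, ρ ∈ R → G.Adj u v → rk u ≤ rk ρ → rk ρ ≤ rk v →
      rk u < rk v → u ∈ R ∧ u ∈ C ρ := by
    intro u hu v hv ρ hρ hρR huv h1 h2 h3
    refine hE u v ρ huv hρR (rmono _ hu _ hρ h1) (rmono _ hρ _ hv h2) ?_
    refine lt_of_le_of_ne (rmono _ hu _ hv h3.le) fun h => ?_
    rw [hpos h] at h3
    exact lt_irrefl _ h3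
  have hn : NeZero U.card :=
    ⟨(Finset.card_pos.2 (hU.mono Finset.inter_subset_left)).ne'⟩
  let RZ : Finset (ZMod U.card) := (U ∩ R).image fun u => (rk u : ZMod U.card)
  have cinj : ∀ u ∈ U, ∀ v ∈ U, (rk u : ZMod U.card) = rk v → u = v := by
    intro u hu v hv h
    have h2 := congrArg ZMod.val h
    rw [ZMod.val_natCast, ZMod.val_natCast, Nat.mod_eq_of_lt (rlt u hu),
      Nat.mod_eq_of_lt (rlt v hv)] at h2
    exact rinj u hu v hv h2
  have hRZ : ∀ x ∈ RZ, ∃ u ∈ U, u ∈ R ∧ (rk u : ZMod U.card) = x := by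
    intro x hx
    obtain ⟨u, hu, rfl⟩ := Finset.mem_image.1 hx
    exact ⟨u, (Finset.mem_inter.1 hu).1, (Finset.mem_inter.1 hu).2, rfl⟩
  have hRZcard : RZ.card = (U ∩ R).card := by
    apply Finset.card_image_of_injOn
    intro u hu v hv h
    exact cinj u (Finset.mem_inter.1 hu).1 v (Finset.mem_inter.1 hv).1 h
  by_cases hno : ∃ x ∈ RZ, x + (m : ZMod U.card) ∈ RZ
  -- `x₀` and its successor `y₀` at cyclic distance `m` both lie in `R`, so the cyclic interval
  -- `[x₀, y₀)` is cut off by the two clusters of `x₀` and `y₀`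
  · left
    obtain ⟨x, hx, hy⟩ := hno
    obtain ⟨x₀, hx₀, hx₀R, rfl⟩ := hRZ x hx
    obtain ⟨y₀, hy₀, hy₀R, hy₀m⟩ := hRZ _ hy
    obtain ⟨d, hd, hdr, hdc⟩ := exists_cyclic rlt rinj hx₀
    have hdy : m < U.card → d y₀ = m := by
      intro hlt
      rw [hd, hy₀m, add_sub_cancel_left, ZMod.val_natCast, Nat.mod_eq_of_lt hlt]
    refine ⟨U.filter fun u => d u ∈ Finset.range m, Finset.filter_subset _ _, ?_,
      C x₀ ∪ C y₀, ?_, ?_⟩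
    · rw [hdc _ (Finset.range_subset_range.2 hm), Finset.card_range]
    · have := Finset.card_union_le (C x₀) (C y₀)
      have := hC x₀
      have := hC y₀
      omega
    · intro u hu v hv hvB huv
      obtain ⟨hu, hum⟩ := Finset.mem_filter.1 hu
      have hvm : ¬ d v < m := fun h =>
        hvB (Finset.mem_filter.2 ⟨hv, Finset.mem_range.2 h⟩)
      rw [Finset.mem_range] at hum
      have hu' := hdr u hu
      have hv' := hdr v hv
      have hx' := hdr x₀ hx₀
      have hy' := hdr y₀ hy₀
      have hdy := hdy (by omega)
      simp only [Finset.mem_union]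
      rcases lt_or_ge (rk u) (rk v) with h | h
      · by_cases hc : rk u ≤ rk x₀ ∧ rk x₀ ≤ rk v
        · exact Or.inl (Or.inl (hE' u hu v hv x₀ hx₀ hx₀R huv hc.1 hc.2 h).2)
        · exact Or.inl (Or.inr (hE' u hu v hv y₀ hy₀ hy₀R huv (by omega) (by omega) h).2)
      · have hne : rk v < rk u := by
          refine lt_of_le_of_ne h fun he => ?_
          rw [rinj _ hv _ hu he] at huv
          exact G.loopless.irrefl _ huv
        exact Or.inr (Or.inl (hE' v hv u hu x₀ hx₀ hx₀R huv.symm (by omega) (by omega) hne).2)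
  · right
    push Not at hno
    obtain ⟨μ, hμ, a, ha, db, dρ, s, h1, h2, hb, hρ, hgap, hnext, h3, h4, h5⟩ :=
      circ (hU.image _) hm hno
    refine ⟨μ, hμ, ?_⟩
    obtain ⟨a₀, ha₀, ha₀R, rfl⟩ := hRZ a ha
    obtain ⟨b₀, hb₀, hb₀R, hb₀d⟩ := hRZ _ hb
    obtain ⟨ρ₀, hρ₀, hρ₀R, hρ₀d⟩ := hRZ _ hρ
    obtain ⟨σ₀, hσ₀, hσ₀R, hσ₀d⟩ := hRZ _ hnext
    obtain ⟨d, hd, hdr, hdc⟩ := exists_cyclic rlt rinj ha₀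
    have hdb : d b₀ = db := by
      rw [hd, hb₀d, add_sub_cancel_left, ZMod.val_natCast, Nat.mod_eq_of_lt (by omega)]
    have hdρ : d ρ₀ = dρ := by
      rw [hd, hρ₀d, add_sub_cancel_left, ZMod.val_natCast, Nat.mod_eq_of_lt (by omega)]
    have hdσ : dρ + s + 1 < U.card → d σ₀ = dρ + s + 1 := by
      intro h
      rw [hd, hσ₀d, add_sub_cancel_left, ZMod.val_natCast, Nat.mod_eq_of_lt h]
    have hgapR : ∀ u ∈ U, dρ < d u → d u ≤ dρ + s → u ∉ R := by
      intro u hu hl hr huR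
      apply hgap (d u - dρ) (by omega) (by omega)
      have e : ((d u : ℕ) : ZMod U.card) = (rk u : ZMod U.card) - rk a₀ := by
        rw [hd, ZMod.natCast_zmod_val]
      rw [Nat.add_sub_cancel' hl.le, e, add_sub_cancel]
      exact Finset.mem_image_of_mem _ (Finset.mem_inter.2 ⟨hu, huR⟩)
    -- `Z` is the arc `[a₀, b₀]`, `B₀` the interval `(b₀, ρ₀]`, and `S` the gap after `ρ₀`. The
    -- target size lies between `|B₀ ∪ Z|` and `|B₀ ∪ S|`.
    set Z := U.filter fun u => d u ∈ Finset.range (db + 1) with hZ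
    set B₀ := U.filter fun u => d u ∈ Finset.Ioc db dρ with hB₀
    set S := U.filter fun u => d u ∈ Finset.Ioc dρ (dρ + s) with hS
    have hZc : Z.card = db + 1 := by
      rw [hdc _ (Finset.range_subset_range.2 (by omega)), Finset.card_range]
    have hB₀c : B₀.card = dρ - db := by
      rw [hdc _ ?_, Nat.card_Ioc]
      intro i hi
      rw [Finset.mem_Ioc] at hi
      rw [Finset.mem_range]; omega
    have hSc : S.card = s := by
      rw [hdc _ ?_, Nat.card_Ioc]
      · omega
      · intro i hi
        rw [Finset.mem_Ioc] at hi
        rw [Finset.mem_range]; omega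
    have hZR : (RZ.filter fun x => (x - (rk a₀ : ZMod U.card)).val ≤ db).card ≤ (Z ∩ R).card := by
      have : (RZ.filter fun x => (x - (rk a₀ : ZMod U.card)).val ≤ db) ⊆
          (Z ∩ R).image fun u => (rk u : ZMod U.card) := by
        intro x hx
        obtain ⟨hx, hxd⟩ := Finset.mem_filter.1 hx
        obtain ⟨u, hu, huR, rfl⟩ := hRZ x hx
        rw [← hd] at hxd
        refine Finset.mem_image_of_mem _ (Finset.mem_inter.2 ⟨Finset.mem_filter.2 ⟨hu, ?_⟩, huR⟩)
        rw [Finset.mem_range]; omega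
      exact (Finset.card_le_card this).trans Finset.card_image_le
    have h6 : (U ∩ R).card * (s + (db + 1)) ≤ U.card * (Z ∩ R).card := by
      rw [← hRZcard]
      exact h5.trans (Nat.mul_le_mul_left _ hZR)
    have hsw : s ≤ 2 ^ k * (db + 1) := by
      have hpos' : 0 < (U ∩ R).card := Finset.card_pos.2 hU
      have h7 : (Z ∩ R).card ≤ db + 1 := hZc ▸ Finset.card_le_card Finset.inter_subset_left
      apply Nat.le_of_mul_le_mul_left _ hpos'
      calc (U ∩ R).card * s ≤ (U ∩ R).card * (s + (db + 1)) := Nat.mul_le_mul_left _ (by omega)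
        _ ≤ U.card * (Z ∩ R).card := h6
        _ ≤ (2 ^ k * (U ∩ R).card) * (db + 1) := Nat.mul_le_mul hk h7
        _ = _ := by ring
    -- filling up `B₀` inside the gap until at most `|Z|` vertices are missing
    obtain ⟨Y, hYS, C', hC', hY1, hY2, hY3⟩ := hsep k S (db + μ - dρ) (by omega)
    have hYw : db + μ - dρ - Y.card ≤ db + 1 := by
      have : 2 ^ k * (db + μ - dρ - Y.card) ≤ 2 ^ k * (db + 1) := by omega
      exact Nat.le_of_mul_le_mul_left this (by positivity)
    have hdisj : Disjoint B₀ Y := by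
      rw [Finset.disjoint_left]
      intro u hu huY
      have h7 := (Finset.mem_filter.1 hu).2
      have h8 := (Finset.mem_filter.1 (hYS huY)).2
      rw [Finset.mem_Ioc] at h7 h8
      omega
    have hBc := Finset.card_union_of_disjoint hdisj
    have hYU : Y ⊆ U := hYS.trans (Finset.filter_subset _ _)
    refine ⟨B₀ ∪ Y, Finset.union_subset (Finset.filter_subset _ _) hYU, Z,
      Finset.filter_subset _ _, ?_, by omega, by omega, by omega, ?_, ?_,
      C a₀ ∪ C b₀ ∪ C ρ₀ ∪ C', ?_, ?_⟩
    · rw [Finset.disjoint_left]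
      intro u hu huZ
      have h7 := (Finset.mem_filter.1 huZ).2
      rw [Finset.mem_range] at h7
      rcases Finset.mem_union.1 hu with hu | hu
      · have h8 := (Finset.mem_filter.1 hu).2
        rw [Finset.mem_Ioc] at h8
        omega
      · have h8 := (Finset.mem_filter.1 (hYS hu)).2
        rw [Finset.mem_Ioc] at h8
        omega
    · refine ⟨a₀, Finset.mem_inter.2 ⟨Finset.mem_filter.2 ⟨ha₀, ?_⟩, ha₀R⟩⟩
      have := hdr a₀ ha₀
      rw [Finset.mem_range]; omega
    · rw [hZc]
      refine le_trans ?_ h6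
      rw [mul_comm 2, mul_assoc]
      exact Nat.mul_le_mul_left _ (by omega)
    · have := Finset.card_union_le (C a₀ ∪ C b₀ ∪ C ρ₀) C'
      have := Finset.card_union_le (C a₀ ∪ C b₀) (C ρ₀)
      have := Finset.card_union_le (C a₀) (C b₀)
      have := hC a₀
      have := hC b₀
      have := hC ρ₀
      rw [add_mul]
      omega
    · have main : ∀ u ∈ U, ∀ v ∈ U, G.Adj u v → rk u < rk v →
          u ∈ C a₀ ∪ C b₀ ∪ C ρ₀ ∪ C' ∨ v ∈ C a₀ ∪ C b₀ ∪ C ρ₀ ∪ C' ∨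
          ((u ∈ B₀ ∪ Y ↔ v ∈ B₀ ∪ Y) ∧ (u ∈ Z ↔ v ∈ Z)) := by
        intro u hu v hv huv hlt
        rw [or_iff_not_imp_left]
        intro huD
        rw [or_iff_not_imp_left]
        intro hvD
        simp only [Finset.mem_union, not_or] at huD hvD
        have na : ¬ (rk u ≤ rk a₀ ∧ rk a₀ ≤ rk v) := fun h =>
          huD.1.1.1 (hE' u hu v hv a₀ ha₀ ha₀R huv h.1 h.2 hlt).2
        have nb : ¬ (rk u ≤ rk b₀ ∧ rk b₀ ≤ rk v) := fun h =>
          huD.1.1.2 (hE' u hu v hv b₀ hb₀ hb₀R huv h.1 h.2 hlt).2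
        have nρ : ¬ (rk u ≤ rk ρ₀ ∧ rk ρ₀ ≤ rk v) := fun h =>
          huD.1.2 (hE' u hu v hv ρ₀ hρ₀ hρ₀R huv h.1 h.2 hlt).2
        have cyc : ∀ w ∈ U, d u < d v ∧
            (d u ≤ d w → d w ≤ d v → rk u ≤ rk w ∧ rk w ≤ rk v) := fun w hw =>
          cyclic_interval (rlt v hv) (rlt w hw) hlt (hdr u hu).2.2 (hdr v hv).2.2 (hdr w hw).2.2 na
        have huv' : d u < d v := (cyc a₀ ha₀).1
        have nb' : ¬ (d u ≤ db ∧ db ≤ d v) := fun h =>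
          nb ((cyc b₀ hb₀).2 (hdb ▸ h.1) (hdb ▸ h.2))
        have nρ' : ¬ (d u ≤ dρ ∧ dρ ≤ d v) := fun h =>
          nρ ((cyc ρ₀ hρ₀).2 (hdρ ▸ h.1) (hdρ ▸ h.2))
        -- an edge leaving the gap upwards spans the next element `σ₀` of `R`, whence `u ∈ R`
        have hgapuv : dρ < d u → d u ≤ dρ + s → d v ≤ dρ + s := by
          intro h7 h8
          by_contra! h9
          have h10 := hdσ (lt_of_le_of_lt h9 (hdr v hv).1)
          have h11 := (cyc σ₀ hσ₀).2 (by rw [h10]; exact Nat.le_succ_of_le h8) (by rw [h10]; exact h9)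
          exact hgapR u hu h7 h8 (hE' u hu v hv σ₀ hσ₀ hσ₀R huv h11.1 h11.2 hlt).1
        have mB : ∀ w ∈ U, w ∈ B₀ ↔ db < d w ∧ d w ≤ dρ := by
          intro w hw; simp [hB₀, hw]
        have mZ : ∀ w ∈ U, w ∈ Z ↔ d w < db + 1 := by
          intro w hw; simp [hZ, hw]
        have mS : ∀ w ∈ U, w ∈ S ↔ dρ < d w ∧ d w ≤ dρ + s := by
          intro w hw; simp [hS, hw]
        have hYiff : u ∈ Y ↔ v ∈ Y := by
          constructor
          · intro h
            by_contra hvY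
            have huS := (mS u hu).1 (hYS h)
            have hvS := (mS v hv).2 ⟨by omega, hgapuv huS.1 huS.2⟩
            rcases hY3 u h v hvS hvY huv with h | h
            · exact huD.2 h
            · exact hvD.2 h
          · intro h
            by_contra huY
            have hvS := (mS v hv).1 (hYS h)
            have huS := (mS u hu).2 ⟨by omega, by omega⟩
            rcases hY3 v h u huS huY huv.symm with h | h
            · exact hvD.2 h
            · exact huD.2 h
        rw [Finset.mem_union, Finset.mem_union, hYiff, mB u hu, mB v hv, mZ u hu, mZ v hv]
        have hBiff : (db < d u ∧ d u ≤ dρ) ↔ (db < d v ∧ d v ≤ dρ) := by omega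
        exact ⟨or_congr_left hBiff, by omega⟩
      intro u hu v hv huv
      rcases lt_trichotomy (rk u) (rk v) with h | h | h
      · exact main u hu v hv huv h
      · rw [rinj u hu v hv h] at huv
        exact absurd huv (G.loopless.irrefl _)
      · have := main v hv u hu huv.symm h
        tauto
end label

/-! ### The recursion -/

section recursion
variable {V : Type*}

lemma Covers.compl {G : SimpleGraph V} {U B D : Finset V} (h : Covers G U B D) :
    Covers G U (U \ B) D := by
  intro u hu v hv hvB huv
  obtain ⟨huU, huB⟩ := Finset.mem_sdiff.1 hu
  have hvB' : v ∈ B := by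
    by_contra hc
    exact hvB (Finset.mem_sdiff.2 ⟨hv, hc⟩)
  exact (h v hvB' u huU huB huv.symm).symm

/-- Iterating `doubling`: with `L = log₂ (|U| / |U ∩ R|)`, each round replaces `L` by at most
`L - 1` and costs at most `L + 4` clusters, so that in total `(L ^ 2 + 9 * L + 8) / 2` clusters
suffice. -/
lemma exists_cut {G : SimpleGraph V} {R : Finset V} {pos : V → ℕ} (hpos : Function.Injective pos)
    {C : V → Finset V} {t : ℕ} (hC : ∀ v, (C v).card ≤ t)
    (hE : ∀ u v ρ, G.Adj u v → ρ ∈ R → pos u ≤ pos ρ → pos ρ ≤ pos v → pos u < pos v →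
      u ∈ R ∧ u ∈ C ρ)
    (hsep : ∀ (k : ℕ) (S : Finset V) (y : ℕ), y ≤ S.card → ∃ Y ⊆ S, ∃ C' : Finset V,
      C'.card ≤ k * t ∧ Y.card ≤ y ∧ 2 ^ k * (y - Y.card) ≤ y ∧ Covers G S Y C') (N : ℕ) :
    ∀ U : Finset V, U.card ≤ N → (U ∩ R).Nonempty → ∀ m ≤ U.card,
      ∃ B ⊆ U, B.card = m ∧ ∃ D : Finset V,
        (D.card : ℝ) ≤ 1 / 2 * t * ((Real.logb 2 (U.card / (U ∩ R).card)) ^ 2 +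
          9 * Real.logb 2 (U.card / (U ∩ R).card) + 8) ∧ Covers G U B D := by
  induction N with
  | zero =>
    intro U hU hne
    have := Finset.card_pos.2 (hne.mono Finset.inter_subset_left)
    omega
  | succ N ih =>
    intro U hU hne m hm
    have hr : (0 : ℝ) < (U ∩ R).card := by exact_mod_cast Finset.card_pos.2 hne
    have hru : ((U ∩ R).card : ℝ) ≤ U.card := by
      exact_mod_cast Finset.card_le_card Finset.inter_subset_left
    set L := Real.logb 2 (U.card / (U ∩ R).card) with hLdef
    have hq : (1 : ℝ) ≤ U.card / (U ∩ R).card := (one_le_div hr).2 hru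
    have hL : 0 ≤ L := Real.logb_nonneg (by norm_num) hq
    have ht0 : (0 : ℝ) ≤ t := Nat.cast_nonneg t
    have hk : U.card ≤ 2 ^ ⌈L⌉₊ * (U ∩ R).card := by
      have h1 : (U.card / (U ∩ R).card : ℝ) ≤ 2 ^ ⌈L⌉₊ := by
        rw [← Real.rpow_natCast, ← Real.logb_le_iff_le_rpow (by norm_num) (by linarith)]
        exact Nat.le_ceil L
      rw [div_le_iff₀ hr] at h1
      exact_mod_cast h1
    rcases doubling hpos hC hE hsep hne hm hk with ⟨B, hBU, hBm, D, hD, hcov⟩ |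
      ⟨μ, hμ, B, hBU, Z, hZU, hdisj, hBμ, hμZ, hZlt, hZne, hdens, D, hD, hcov⟩
    · refine ⟨B, hBU, hBm, D, ?_, hcov⟩
      have h1 : (D.card : ℝ) ≤ 2 * t := by exact_mod_cast hD
      nlinarith [mul_nonneg ht0 hL, mul_nonneg ht0 (sq_nonneg L)]
    · obtain ⟨BZ, hBZ, hBZc, DZ, hDZ, hcovZ⟩ := ih Z (by omega) hZne (μ - B.card) (by omega)
      have hz : (0 : ℝ) < (Z ∩ R).card := by exact_mod_cast Finset.card_pos.2 hZne
      have hzu : ((Z ∩ R).card : ℝ) ≤ Z.card := by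
        exact_mod_cast Finset.card_le_card Finset.inter_subset_left
      set LZ := Real.logb 2 (Z.card / (Z ∩ R).card) with hLZdef
      have hqZ : (1 : ℝ) ≤ Z.card / (Z ∩ R).card := (one_le_div hz).2 hzu
      have hLZ : 0 ≤ LZ := Real.logb_nonneg (by norm_num) hqZ
      have hLZL : LZ + 1 ≤ L := by
        have h1 : (Z.card / (Z ∩ R).card : ℝ) * 2 ≤ U.card / (U ∩ R).card := by
          rw [div_mul_eq_mul_div, div_le_div_iff₀ hz hr]
          have : (2 * (U ∩ R).card * Z.card : ℝ) ≤ U.card * (Z ∩ R).card := by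
            exact_mod_cast hdens
          linarith
        have h2 := Real.logb_le_logb_of_le (b := 2) (by norm_num) (by positivity) h1
        rwa [Real.logb_mul (by positivity) (by norm_num), Real.logb_self_eq_one (by norm_num)] at h2
      have hdisj' : Disjoint B BZ := hdisj.mono_right hBZ
      have hcard : (B ∪ BZ).card = μ := by
        rw [Finset.card_union_of_disjoint hdisj']; omega
      have hsub : B ∪ BZ ⊆ U := Finset.union_subset hBU (hBZ.trans hZU)
      have hcov' : Covers G U (B ∪ BZ) (D ∪ DZ) := by
        intro u hu v hv hvB huv
        simp only [Finset.mem_union, not_or] at hu hvB ⊢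
        rcases hcov u (hsub (Finset.mem_union.2 hu)) v hv huv with h | h | ⟨h1, h2⟩
        · exact Or.inl (Or.inl h)
        · exact Or.inr (Or.inl h)
        · have huZ : u ∈ BZ := hu.resolve_left fun h => hvB.1 (h1.1 h)
          rcases hcovZ u huZ v (h2.1 (hBZ huZ)) hvB.2 huv with h | h
          · exact Or.inl (Or.inr h)
          · exact Or.inr (Or.inr h)
      have hDc : ((D ∪ DZ).card : ℝ) ≤ 1 / 2 * t * (L ^ 2 + 9 * L + 8) := by
        have h1 : ((D ∪ DZ).card : ℝ) ≤ D.card + DZ.card := by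
          exact_mod_cast Finset.card_union_le D DZ
        have h2 : (D.card : ℝ) ≤ (3 + ⌈L⌉₊) * t := by exact_mod_cast hD
        have h3 : (⌈L⌉₊ : ℝ) ≤ L + 1 := (Nat.ceil_lt_add_one hL).le
        have h4 : ((3 + ⌈L⌉₊) * t : ℝ) ≤ (L + 4) * t :=
          mul_le_mul_of_nonneg_right (by linarith) ht0
        have h5 : LZ ^ 2 + 9 * LZ + 8 ≤ (L - 1) ^ 2 + 9 * (L - 1) + 8 := by nlinarith
        have h6 := mul_le_mul_of_nonneg_left h5 (by positivity : (0 : ℝ) ≤ 1 / 2 * t)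
        nlinarith
      rcases hμ with rfl | rfl
      · exact ⟨B ∪ BZ, hsub, hcard, D ∪ DZ, hDc, hcov'⟩
      · refine ⟨U \ (B ∪ BZ), Finset.sdiff_subset, ?_, D ∪ DZ, hDc, hcov'.compl⟩
        rw [Finset.card_sdiff_of_subset hsub, hcard]
        omega
end recursion

/-! ### From tree decompositions to rooted ones -/

section rooting
variable {V ι : Type*}

/-- Rooting the tree of a tree decomposition at `i₀`: `a ≤ b` means that the path from `i₀` to `b`
passes through `a`, and `top v` is the least node whose cluster contains `v`. -/
lemma exists_rooted [Finite ι] {G : SimpleGraph V} {T : SimpleGraph ι} {X : ι → Finset V}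
    (hTD : IsTreeDecomp G T X) (i₀ : ι) :
    ∃ (_ : PartialOrder ι) (top : V → ι), RootedDecomp G X top ∧ (∀ i, i₀ ≤ i) ∧
      (∀ v i, v ∈ X i → top v ≤ i) ∧
      ∀ {j : ι} (p : T.Walk i₀ j), p.IsPath → ∀ a, a ∈ p.support ↔ a ≤ j := by
  have huniq : ∀ {i j : ι} {p q : T.Walk i j}, p.IsPath → q.IsPath → p = q := fun hp hq =>
    (hTD.isTree.existsUnique_path _ _).unique hp hq
  choose P hP using fun b => (hTD.isTree.existsUnique_path i₀ b).exists
  let po : PartialOrder ι :=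
    { le := fun a b => ∃ q : T.Walk a b, P b = (P a).append q
      le_refl := fun a => ⟨.nil, by simp⟩
      le_trans := by
        rintro a b c ⟨q, hq⟩ ⟨q', hq'⟩
        exact ⟨q.append q', by rw [hq', hq, SimpleGraph.Walk.append_assoc]⟩
      le_antisymm := by
        rintro a b ⟨q, hq⟩ ⟨q', hq'⟩
        have h1 := congrArg SimpleGraph.Walk.length hq
        have h2 := congrArg SimpleGraph.Walk.length hq'
        rw [SimpleGraph.Walk.length_append] at h1 h2
        exact SimpleGraph.Walk.eq_of_length_eq_zero (p := q) (by omega) }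
  have hmem : ∀ a b, a ∈ (P b).support ↔ a ≤ b := by
    intro a b
    constructor
    · intro h
      refine ⟨(P b).dropUntil a h, ?_⟩
      rw [huniq (hP a) ((hP b).takeUntil h), SimpleGraph.Walk.take_spec]
    · rintro ⟨q, hq⟩
      rw [hq, SimpleGraph.Walk.mem_support_append_iff]
      exact Or.inl (SimpleGraph.Walk.end_mem_support _)
  have hchain : ∀ ⦃a b c : ι⦄, a ≤ c → b ≤ c → a ≤ b ∨ b ≤ a := by
    intro a b c ha hb
    rw [← hmem] at ha
    obtain ⟨q, hq⟩ := hb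
    rw [hq, SimpleGraph.Walk.mem_support_append_iff] at ha
    rcases ha with ha | ha
    · exact Or.inl ((hmem _ _).1 ha)
    · refine Or.inr ⟨q.takeUntil a ha, huniq (hP a) ?_⟩
      have h1 := hP c
      rw [hq, ← SimpleGraph.Walk.take_spec q ha, SimpleGraph.Walk.append_assoc] at h1
      exact h1.of_append_left
  have hadj : ∀ {x y : ι}, T.Adj x y → x ≤ y ∨ y ≤ x := by
    intro x y h
    by_cases hy : y ∈ (P x).support
    · exact Or.inr ((hmem _ _).1 hy)
    · exact Or.inl ⟨.cons h .nil, huniq (hP y) ((hP x).concat hy h)⟩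
  have hconv : ∀ {a l b : ι} {v : V}, a ≤ l → l ≤ b → v ∈ X a → v ∈ X b → v ∈ X l := by
    rintro a l b v ⟨q, hq⟩ ⟨q', hq'⟩ ha hb
    have h1 := hP b
    rw [hq', hq, ← SimpleGraph.Walk.append_assoc] at h1
    refine hTD.inter_subset _ h1.of_append_right l ?_ (Finset.mem_inter.2 ⟨ha, hb⟩)
    rw [SimpleGraph.Walk.mem_support_append_iff]
    exact Or.inl (SimpleGraph.Walk.end_mem_support _)
  have hex : ∀ v : V, ∃ i, Minimal (fun i => v ∈ X i) i := fun v =>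
    Set.Finite.exists_minimal (Set.toFinite {i | v ∈ X i}) (hTD.mem_cluster v)
  choose top htop using hex
  -- a minimal node of the subtree `{i | v ∈ X i}` is its least node, since the subtree is connected
  have hwalk : ∀ (v : V) {x j : ι} (p : T.Walk x j), (∀ l ∈ p.support, v ∈ X l) →
      top v ≤ x → top v ≤ j := by
    intro v x j p
    induction p with
    | nil => exact fun _ h => h
    | @cons x y j hxy p ih =>
      intro hp hx
      have hy : v ∈ X y := hp y (by simp)
      refine ih (fun l hl => hp l (by simp [hl])) ?_
      rcases hadj hxy with h | h
      · exact hx.trans h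
      · rcases hchain hx h with h' | h'
        · exact h'
        · exact (htop v).2 hy h'
  have hleast : ∀ v i, v ∈ X i → top v ≤ i := by
    intro v i hi
    obtain ⟨p, hp⟩ := (hTD.isTree.existsUnique_path (top v) i).exists
    exact hwalk v p (fun l hl => hTD.inter_subset p hp l hl
      (Finset.mem_inter.2 ⟨(htop v).1, hi⟩)) le_rfl
  refine ⟨po, top, ⟨hchain, fun v => (htop v).1, ?_⟩, ?_, hleast, ?_⟩
  · intro u v huv
    obtain ⟨l₀, hu, hv⟩ := hTD.edge_cluster huv
    rcases hchain (hleast u l₀ hu) (hleast v l₀ hv) with h | h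
    · exact Or.inl ⟨h, fun l h1 h2 =>
        hconv h1 (h2.trans (hleast v l₀ hv)) (htop u).1 hu⟩
    · exact Or.inr ⟨h, fun l h1 h2 =>
        hconv h1 (h2.trans (hleast u l₀ hu)) (htop v).1 hv⟩
  · intro i
    exact (hmem _ _).1 (SimpleGraph.Walk.start_mem_support _)
  · intro j p hp a
    rw [huniq hp (hP j), hmem]

end rooting

/-! ### Cut width and covers -/

section width
variable {V : Type*} [Fintype V]

lemma cutWidth_le {G : SimpleGraph V} {B D : Finset V} (h : Covers G Finset.univ B D) :
    cutWidth G B ≤ D.card * maxDeg G := by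
  have hdeg : ∀ c, (Finset.univ.filter fun u => G.Adj c u).card ≤ maxDeg G := by
    intro c
    have h1 := Finset.le_sup (f := fun v => Nat.card {u // G.Adj v u}) (Finset.mem_univ c)
    have h2 : Nat.card {u // G.Adj c u} = (Finset.univ.filter fun u => G.Adj c u).card := by
      rw [Nat.card_eq_fintype_card, Fintype.card_subtype]
    rwa [h2] at h1
  have hsub : {e : Sym2 V | ∃ x y, G.Adj x y ∧ x ∈ B ∧ y ∉ B ∧ e = s(x, y)} ⊆
      (D.biUnion fun c => (Finset.univ.filter fun u => G.Adj c u).image fun u => s(c, u) :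
        Finset (Sym2 V)) := by
    rintro e ⟨x, y, hxy, hx, hy, rfl⟩
    rw [Finset.mem_coe, Finset.mem_biUnion]
    rcases h x hx y (Finset.mem_univ y) hy hxy with hc | hc
    · exact ⟨x, hc, Finset.mem_image.2 ⟨y, by simpa using hxy, rfl⟩⟩
    · exact ⟨y, hc, Finset.mem_image.2 ⟨x, by simpa using hxy.symm, Sym2.eq_swap⟩⟩
  calc cutWidth G B = Set.ncard {e : Sym2 V | ∃ x y, G.Adj x y ∧ x ∈ B ∧ y ∉ B ∧ e = s(x, y)} := rfl
    _ ≤ _ := Set.ncard_le_ncard hsub (Finset.finite_toSet _)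
    _ = _ := Set.ncard_coe_finset _
    _ ≤ _ := Finset.card_biUnion_le_card_mul _ _ _ fun c _ => Finset.card_image_le.trans (hdeg c)
end width

end MinBisection

/-- For every graph `G` on `n` vertices, every tree decomposition `(T, X)`
of `G` of width `t - 1`, and every integer `1 ≤ m ≤ n`, there is a cut `(B, W)` in `G` with
`|B| = m` and `e_G(B, W) ≤ (1/2) t Δ(G) ((log₂(1/r(T,X)))² + 9 log₂(1/r(T,X)) + 8)`. -/
theorem MinBisection.cut_spec_sizes {V ι : Type*} [Fintype V] [Fintype ι]
    (G : SimpleGraph V) (T : SimpleGraph ι) (X : ι → Finset V) (t : ℕ)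
    (hTD : IsTreeDecomp G T X) (hwidth : ∀ i, (X i).card ≤ t)
    (m : ℕ) (hm1 : 1 ≤ m) (hmn : m ≤ Fintype.card V) :
    ∃ B : Finset V, B.card = m ∧
      (cutWidth G B : ℝ) ≤ (1 / 2) * t * maxDeg G *
        ((Real.logb 2 (1 / rTD T X)) ^ 2 + 9 * Real.logb 2 (1 / rTD T X) + 8) := by
  have hV : 0 < Fintype.card V := by omega
  obtain ⟨v₀⟩ := Fintype.card_pos_iff.1 hV
  obtain ⟨i₁, hi₁⟩ := hTD.mem_cluster v₀
  set W := {w : ℕ | ∃ (i j : ι) (p : T.Walk i j), p.IsPath ∧ w = walkWeight X p} with hW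
  have hbdd : BddAbove W := ⟨Fintype.card V, by
    rintro w ⟨i, j, p, -, rfl⟩
    exact Finset.card_le_univ _⟩
  have hw₁ : walkWeight X (SimpleGraph.Walk.nil : T.Walk i₁ i₁) ∈ W := ⟨i₁, i₁, .nil, by simp, rfl⟩
  have hpos₁ : 0 < walkWeight X (SimpleGraph.Walk.nil : T.Walk i₁ i₁) :=
    Finset.card_pos.2 ⟨v₀, by simpa using hi₁⟩
  -- a heaviest path, whose first node serves as the root
  obtain ⟨i₀, j₀, p, hp, hwp⟩ := Nat.sSup_mem ⟨_, hw₁⟩ hbdd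
  have hsup : 0 < sSup W := hpos₁.trans_le (le_csSup hbdd hw₁)
  obtain ⟨po, top, hroot, hleast, htop, hpath⟩ := exists_rooted hTD i₀
  obtain ⟨pos, hpos, hlab⟩ := exists_labelling hroot j₀
  let R : Finset V := Finset.univ.filter fun v => top v ≤ j₀
  have hR : p.support.toFinset.biUnion X = R := by
    ext v
    simp only [Finset.mem_biUnion, List.mem_toFinset, hpath p hp, R, Finset.mem_filter,
      Finset.mem_univ, true_and]
    exact ⟨fun ⟨i, hi, hv⟩ => (htop v i hv).trans hi, fun h => ⟨_, h, hroot.mem_top v⟩⟩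
  have hRc : R.card = sSup W := by rw [hwp, walkWeight, hR]
  have hRne : (Finset.univ ∩ R).Nonempty := by
    rw [Finset.univ_inter, ← Finset.card_pos, hRc]; exact hsup
  obtain ⟨B, -, hBm, D, hD, hcov⟩ := exists_cut (R := R) (C := fun v => X (top v)) hpos
    (fun v => hwidth _)
    (fun u v ρ huv hρ h1 h2 h3 => by
      have := hlab u v ρ huv (Finset.mem_filter.1 hρ).2 h1 h2 h3
      exact ⟨Finset.mem_filter.2 ⟨Finset.mem_univ _, this.1⟩, this.2⟩)
    (sep_many hroot hleast hwidth) (Fintype.card V) Finset.univ le_rfl hRne m hmn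
  refine ⟨B, hBm, ?_⟩
  have hr : (1 / rTD T X : ℝ) = (Finset.univ : Finset V).card / (Finset.univ ∩ R).card := by
    rw [Finset.univ_inter, hRc, Finset.card_univ, rTD, one_div_div]
  rw [hr]
  have h1 : (cutWidth G B : ℝ) ≤ D.card * maxDeg G := by exact_mod_cast cutWidth_le hcov
  have h2 := mul_le_mul_of_nonneg_right hD (Nat.cast_nonneg (α := ℝ) (maxDeg G))
  linarith
end
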